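/- Let N ≥ 1 be an integer, ω > 0, and 1 < p < p_max, and let u be a ground-state profile of (QLS). Suppose ξ : ℝ^N → ℂ is smooth, with ∫_{ℝ^N}(|ξ|² + |∇ξ|²) dx < ∞, and satisfies pointwise on ℝ^N the linearized equation −Δξ − 2u·Δ(u·Re ξ) + ωξ − (Δ(u²))ξ − (p−1)u^{p−1}·Re ξ − u^{p−1}ξ = 0. Then there exist real numbers a, c₁, …, c_N such that ξ(x) = i·a·u(x) + Σ_{l=1}^{N} c_l ∂_{x_l}u(x) for all x ∈ ℝ^N. -/

import Mathlib

open MeasureTheory Real Filter Topology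

noncomputable section

/-- Partial derivative along the `i`-th coordinate direction. -/
def pd {N : ℕ} {F : Type*} [NormedAddCommGroup F] [NormedSpace ℝ F]
    (i : Fin N) (f : EuclideanSpace ℝ (Fin N) → F) (x : EuclideanSpace ℝ (Fin N)) : F :=
  fderiv ℝ f x (EuclideanSpace.single i 1)

/-- Euclidean Laplacian. -/
def lap {N : ℕ} {F : Type*} [NormedAddCommGroup F] [NormedSpace ℝ F]
    (f : EuclideanSpace ℝ (Fin N) → F) (x : EuclideanSpace ℝ (Fin N)) : F :=
  ∑ i : Fin N, pd i (pd i f) x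

/-- Squared norm of the gradient of a real-valued function: `|∇f|²`. -/
def gradsq {N : ℕ} (f : EuclideanSpace ℝ (Fin N) → ℝ) (x : EuclideanSpace ℝ (Fin N)) : ℝ :=
  ∑ i : Fin N, (pd i f x) ^ 2

/-- A ground-state profile of the quasilinear Schrödinger equation (QLS)
`-Δu - uΔ(u²) + ωu - u^p = 0` on `ℝ^N`: smooth, positive, radially symmetric with a
strictly decreasing positive profile, solves (QLS) pointwise, and decays
exponentially together with all its derivatives. -/
structure IsGroundState (N : ℕ) (ω p : ℝ) (u : EuclideanSpace ℝ (Fin N) → ℝ) : Prop where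
  smooth : ContDiff ℝ (⊤ : ℕ∞) u
  pos : ∀ x, 0 < u x
  radial : ∃ U : ℝ → ℝ, StrictAntiOn U (Set.Ici 0) ∧ (∀ r, 0 ≤ r → 0 < U r) ∧
      ∀ x, u x = U ‖x‖
  solves : ∀ x, -lap u x - u x * lap (fun y => (u y) ^ 2) x + ω * u x - (u x) ^ p = 0
  decay : ∀ k : ℕ, ∃ C > 0, ∃ δ > 0, ∀ x,
      ‖iteratedFDeriv ℝ k u x‖ ≤ C * Real.exp (-δ * ‖x‖)

/-- The linearized operator `L₊` around `u` (real-valued functions). -/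
def Lplus {N : ℕ} (ω p : ℝ) (u η : EuclideanSpace ℝ (Fin N) → ℝ)
    (x : EuclideanSpace ℝ (Fin N)) : ℝ :=
  -lap η x - 2 * u x * lap (fun y => u y * η y) x + ω * η x
    - (lap (fun y => (u y) ^ 2) x + p * u x ^ (p - 1)) * η x

/-- The linearized operator `L₋` around `u`. -/
def Lminus {N : ℕ} (ω p : ℝ) (u ζ : EuclideanSpace ℝ (Fin N) → ℝ)
    (x : EuclideanSpace ℝ (Fin N)) : ℝ :=
  -lap ζ x + ω * ζ x - (lap (fun y => (u y) ^ 2) x + u x ^ (p - 1)) * ζ x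


section PartA

theorem odeA (n : ℕ) (μ lam : ℝ) (hml : μ ≤ lam) (q w w1 m m1 : ℝ → ℝ)
    (hw : ∀ r, 0 < r → HasDerivAt w (w1 r) r)
    (hw1 : ∀ r, 0 < r → HasDerivAt w1 (-(n/r) * w1 r + μ / r^2 * w r - q r * w r) r)
    (hw0 : ∀ r, 0 < r → w r ≠ 0)
    (hm : ∀ r, 0 < r → HasDerivAt m (m1 r) r)
    (hm1 : ∀ r, 0 < r → HasDerivAt m1 (-(n/r) * m1 r + lam / r^2 * m r - q r * m r) r)
    (hint : IntegrableOn (fun r => r^n * m r ^ 2) (Set.Ioi 0))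
    (hB : Tendsto (fun r => r^n * (m r * m1 r - m r ^ 2 * (w1 r / w r))) (𝓝[>] 0) (𝓝 0)) :
    (∃ c : ℝ, ∀ r, 0 < r → m r = c * w r) ∧ (μ < lam → ∀ r, 0 < r → m r = 0) := by
  set B : ℝ → ℝ := fun r => r^n * (m r * m1 r - m r ^ 2 * (w1 r / w r)) with hBdef
  set B' : ℝ → ℝ := fun r => r^n * ((m1 r - m r * (w1 r / w r))^2 + (lam - μ) / r^2 * m r ^ 2)
    with hB'def
  have hBd : ∀ r, 0 < r → HasDerivAt B (B' r) r := by
    intro r hr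
    have h1 := ((hm r hr).mul (hm1 r hr)).sub
      (((hm r hr).pow 2).mul ((hw1 r hr).div (hw r hr) (hw0 r hr)))
    have h2 := (hasDerivAt_pow n r).mul h1
    refine h2.congr_deriv ?_
    have := hw0 r hr
    have hr' := hr.ne'
    simp only [hB'def]
    rcases n with _ | n
    · simp
      field_simp
      ring
    · simp only [Nat.add_sub_cancel, pow_succ]
      simp
      field_simp
      ring
  have hB'0 : ∀ r, 0 < r → 0 ≤ B' r := by
    intro r hr
    have : 0 ≤ lam - μ := by linarith
    simp only [hB'def]; positivity
  have hmono : MonotoneOn B (Set.Ioi 0) := by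
    apply monotoneOn_of_deriv_nonneg (convex_Ioi 0)
    · intro r hr; exact (hBd r hr).continuousAt.continuousWithinAt
    · intro r hr
      rw [interior_Ioi] at hr
      exact (hBd r hr).differentiableAt.differentiableWithinAt
    · intro r hr
      rw [interior_Ioi] at hr
      rw [(hBd r hr).deriv]; exact hB'0 r hr
  have hBnn : ∀ r, 0 < r → 0 ≤ B r := by
    intro r hr
    refine le_of_tendsto hB ?_
    filter_upwards [Ioo_mem_nhdsGT hr] with s hs
    exact hmono hs.1 hr hs.2.le
  set S : ℝ → ℝ := fun r => r^n * m r ^ 2 with hS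
  have hScont : ∀ r, 0 < r → ContinuousAt S r := by
    intro r hr
    exact (continuousAt_id.pow n).mul ((hm r hr).continuousAt.pow 2)
  have hB0 : ∀ r, 0 < r → B r = 0 := by
    intro r0 hr0
    by_contra hne
    have hpos : 0 < B r0 := lt_of_le_of_ne (hBnn r0 hr0) (Ne.symm hne)
    have hBpos : ∀ r, r0 ≤ r → 0 < B r := fun r hr =>
      hpos.trans_le (hmono hr0 (hr0.trans_le hr) hr)
    set K := ∫ r in Set.Ioi (0:ℝ), S r with hK
    have hintI : ∀ r, r0 ≤ r → IntervalIntegrable S volume r0 r := by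
      intro r hr
      rw [intervalIntegrable_iff_integrableOn_Ioc_of_le hr]
      exact hint.mono_set (fun x hx => hr0.trans hx.1)
    have hSig : ∀ r, r0 ≤ r → ∫ x in r0..r, S x ≤ K := by
      intro r hr
      rw [intervalIntegral.integral_of_le hr]
      apply setIntegral_mono_set hint
      · filter_upwards [ae_restrict_mem measurableSet_Ioi] with x hx
        have : (0:ℝ) < x := hx
        simp only [hS, Pi.zero_apply]; positivity
      · exact (show Set.Ioc r0 r ⊆ Set.Ioi 0 from fun x hx => hr0.trans hx.1).eventuallyLE
    set Y : ℝ → ℝ := fun r => -(B r)⁻¹ - 2 * r + ∫ x in r0..r, S x with hY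
    have hYd : ∀ r, r0 < r → HasDerivAt Y (B' r / B r ^ 2 - 2 + S r) r := by
      intro r hr
      have h1 := (hBd r (hr0.trans hr)).inv (hBpos r hr.le).ne'
      have h2 : HasDerivAt (fun r => ∫ x in r0..r, S x) (S r) r := by
        apply intervalIntegral.integral_hasDerivAt_right (hintI r hr.le)
        · have : ContinuousOn S (Set.Ioi 0) := fun x hx => (hScont x hx).continuousWithinAt
          exact this.stronglyMeasurableAtFilter isOpen_Ioi _ (hr0.trans hr)
        · exact hScont r (hr0.trans hr)
      have h3 := (h1.neg.sub ((hasDerivAt_id r).const_mul 2)).add h2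
      refine h3.congr_deriv ?_
      ring
    have hYm : MonotoneOn Y (Set.Ici (r0+1)) := by
      apply monotoneOn_of_deriv_nonneg (convex_Ici _)
      · intro r hr
        exact (hYd r (by have : r0 + 1 ≤ r := hr; linarith)).continuousAt.continuousWithinAt
      · intro r hr
        rw [interior_Ici] at hr
        exact (hYd r (by have : r0 + 1 < r := hr; linarith)).differentiableAt.differentiableWithinAt
      · intro r hr
        rw [interior_Ici] at hr
        have hr' : r0 < r := by have : r0 + 1 < r := hr; linarith
        rw [(hYd r hr').deriv]
        have hrp := hr0.trans hr'
        have hb := hBpos r hr'.le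
        have hCS : B r ^ 2 ≤ S r * B' r := by
          have h0 : 0 ≤ lam - μ := by linarith
          have : S r * B' r - B r ^ 2 = (r^n)^2 * m r ^ 2 * ((lam - μ) / r^2 * m r ^ 2) := by
            simp only [hS, hB'def, hBdef]; ring
          have h1 : 0 ≤ (r^n)^2 * m r ^ 2 * ((lam - μ) / r^2 * m r ^ 2) := by positivity
          linarith
        have hSnn : 0 ≤ S r := by simp only [hS]; positivity
        have hSpos : 0 < S r := by
          rcases hSnn.eq_or_lt with h | h
          · rw [← h] at hCS; nlinarith
          · exact h
        have h4 : 1 / S r ≤ B' r / B r ^ 2 := by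
          rw [div_le_div_iff₀ hSpos (by positivity)]; linarith
        have h5 : 2 ≤ 1 / S r + S r := by
          rw [div_add' _ _ _ hSpos.ne', le_div_iff₀ hSpos]; nlinarith [sq_nonneg (S r - 1)]
        linarith
    set R := r0 + 1 + (K - Y (r0+1) + 1) ⊔ 0 with hR
    have hRge : r0 + 1 ≤ R := by rw [hR]; have := le_max_right (K - Y (r0+1) + 1) 0; linarith
    have h1 := hYm (Set.mem_Ici.2 le_rfl) hRge hRge
    have h2 : Y R ≤ - 2 * R + K := by
      have := hSig R (by linarith)
      have h3 : 0 < (B R)⁻¹ := inv_pos.2 (hBpos R (by linarith))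
      simp only [hY]; linarith
    have h4 := le_max_left (K - Y (r0+1) + 1) 0
    have h5 := le_max_right (K - Y (r0+1) + 1) 0
    linarith
  have hB'z : ∀ r, 0 < r → B' r = 0 := by
    intro r hr
    have h1 : HasDerivAt B 0 r := by
      refine (hasDerivAt_const r (0:ℝ)).congr_of_eventuallyEq ?_
      filter_upwards [lt_mem_nhds hr] with s hs using hB0 s hs
    exact (hBd r hr).unique h1
  have hz : ∀ r, 0 < r → (m1 r - m r * (w1 r / w r))^2 = 0 ∧ (lam - μ) / r^2 * m r ^ 2 = 0 := by
    intro r hr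
    have h0 : 0 ≤ lam - μ := by linarith
    have h := hB'z r hr
    simp only [hB'def] at h
    have h1 := (mul_eq_zero.1 h).resolve_left (by positivity)
    have a1 : 0 ≤ (m1 r - m r * (w1 r / w r))^2 := by positivity
    have a2 : 0 ≤ (lam - μ) / r^2 * m r ^ 2 := by positivity
    constructor <;> linarith
  constructor
  · refine ⟨m 1 / w 1, fun r hr => ?_⟩
    have hd : ∀ r ∈ Set.Ioi (0:ℝ), HasDerivAt (fun r => m r / w r) 0 r := by
      intro r hr
      refine ((hm r hr).div (hw r hr) (hw0 r hr)).congr_deriv ?_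
      have := pow_eq_zero_iff (two_ne_zero) |>.1 (hz r hr).1
      have h0 := hw0 r hr
      have e : m1 r = m r * (w1 r / w r) := by linarith
      rw [e]; field_simp; ring
    have := (convex_Ioi (0:ℝ)).is_const_of_fderivWithin_eq_zero (𝕜 := ℝ)
      (f := fun r => m r / w r) (fun x hx => (hd x hx).differentiableAt.differentiableWithinAt)
      (by
        intro x hx
        rw [fderivWithin_of_isOpen isOpen_Ioi hx]
        have := (hd x hx).hasFDerivAt.fderiv
        rw [this]; ext; simp) hr (show (1:ℝ) ∈ Set.Ioi 0 by simp)
    rw [← this]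
    have h0 := hw0 r hr
    field_simp
  · intro hlt r hr
    have h := (hz r hr).2
    have h1 : (lam - μ) / r^2 ≠ 0 := by
      have : 0 < lam - μ := by linarith
      positivity
    exact pow_eq_zero_iff (two_ne_zero) |>.1 ((mul_eq_zero.1 h).resolve_left h1)

end PartA


section PartR1

theorem lt_of_der (f f' : ℝ → ℝ) (hf : ∀ r, 0 < r → HasDerivAt f (f' r) r) {a b : ℝ} (ha : 0 < a)
    (hab : a < b) (h : ∀ s, a < s → s < b → 0 < f' s) : f a < f b := by
  obtain ⟨c, hc, hc'⟩ := exists_hasDerivAt_eq_slope f f' hab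
    (fun x hx => (hf x (ha.trans_le hx.1)).continuousAt.continuousWithinAt)
    (fun x hx => hf x (ha.trans hx.1))
  have := h c hc.1 hc.2
  rw [hc'] at this
  have h2 : 0 < b - a := by linarith
  have := (div_pos_iff_of_pos_right h2).1 this
  linarith

theorem le_of_der (f f' : ℝ → ℝ) (hf : ∀ r, 0 < r → HasDerivAt f (f' r) r) {a b : ℝ} (ha : 0 < a)
    (hab : a ≤ b) (h : ∀ s, a < s → s < b → 0 ≤ f' s) : f a ≤ f b := by
  rcases hab.eq_or_lt with rfl | hab
  · rfl
  obtain ⟨c, hc, hc'⟩ := exists_hasDerivAt_eq_slope f f' hab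
    (fun x hx => (hf x (ha.trans_le hx.1)).continuousAt.continuousWithinAt)
    (fun x hx => hf x (ha.trans hx.1))
  have := h c hc.1 hc.2
  rw [hc'] at this
  have h2 : 0 < b - a := by linarith
  have h3 := mul_nonneg this h2.le
  rw [div_mul_cancel₀ _ h2.ne'] at h3
  linarith

/-- positive derivative and zero limit at `0+`. -/
theorem pos_left (f f' : ℝ → ℝ) (hf : ∀ r, 0 < r → HasDerivAt f (f' r) r) {b l : ℝ} (hb : 0 < b)
    (h : ∀ s, 0 < s → s < b → 0 < f' s) (h0 : Tendsto f (𝓝[>] 0) (𝓝 l)) : l < f b := by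
  have h1 : f (b/2) < f b := lt_of_der f f' hf (by positivity) (by linarith)
    (fun s hs hs' => h s (by linarith) hs')
  have h2 : l ≤ f (b/2) := by
    refine le_of_tendsto h0 ?_
    filter_upwards [Ioo_mem_nhdsGT (show (0:ℝ) < b/2 by positivity)] with s hs
    exact (lt_of_der f f' hf hs.1 hs.2 (fun t ht ht' => h t (hs.1.trans ht) (by linarith))).le
  linarith

theorem neg_right (f f' : ℝ → ℝ) (hf : ∀ r, 0 < r → HasDerivAt f (f' r) r) {a l : ℝ} (ha : 0 < a)
    (h : ∀ s, a < s → 0 < f' s) (h0 : Tendsto f atTop (𝓝 l)) : f a < l := by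
  have h1 : f a < f (a+1) := lt_of_der f f' hf ha (by linarith) (fun s hs _ => h s hs)
  have h2 : f (a+1) ≤ l := by
    refine ge_of_tendsto h0 ?_
    filter_upwards [eventually_gt_atTop (a+1)] with s hs
    exact (lt_of_der f f' hf (by linarith) hs (fun t ht _ => h t (by linarith))).le
  linarith

/-- Rapid decay. -/
def RD (f : ℝ → ℝ) : Prop := ∀ k : ℕ, Tendsto (fun r => r^k * f r) atTop (𝓝 0)

theorem RD.tendsto {f : ℝ → ℝ} (h : RD f) : Tendsto f atTop (𝓝 0) := by simpa using h 0
theorem RD.add {f g : ℝ → ℝ} (hf : RD f) (hg : RD g) : RD (fun r => f r + g r) := fun k => by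
  have := (hf k).add (hg k)
  simp only [add_zero] at this
  exact this.congr (fun r => by ring)
theorem RD.mulPow {f : ℝ → ℝ} (hf : RD f) (j : ℕ) : RD (fun r => r^j * f r) := fun k =>
  (hf (k+j)).congr (fun r => by ring)
theorem RD.constMul {f : ℝ → ℝ} (hf : RD f) (c : ℝ) : RD (fun r => c * f r) := fun k => by
  have := (hf k).const_mul c
  simp only [mul_zero] at this
  exact this.congr (fun r => by ring)
theorem RD.congr {f g : ℝ → ℝ} (hf : RD f) (h : ∀ r, 0 < r → f r = g r) : RD g := fun k => by
  refine (hf k).congr' ?_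
  filter_upwards [eventually_gt_atTop 0] with r hr
  rw [h r hr]
theorem RD.bdd {f g : ℝ → ℝ} (hf : RD f) (C : ℝ) (K : ℕ) (h : ∀ r, 1 ≤ r → |g r| ≤ C * r^K * |f r|) :
    RD g := fun k => by
  have h1 := ((hf (k+K)).norm).const_mul C
  simp only [norm_zero, mul_zero] at h1
  refine squeeze_zero_norm' ?_ h1
  filter_upwards [eventually_ge_atTop 1] with r hr
  have hr0 : (0:ℝ) ≤ r := by linarith
  rw [norm_mul, norm_mul, Real.norm_eq_abs, Real.norm_eq_abs, Real.norm_eq_abs,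
    abs_of_nonneg (by positivity : 0 ≤ r^k), abs_of_nonneg (by positivity : 0 ≤ r^(k+K))]
  calc r^k * |g r| ≤ r^k * (C * r^K * |f r|) := by gcongr; exact h r hr
    _ = _ := by rw [Real.norm_eq_abs]; ring
theorem RD.mul {f g : ℝ → ℝ} (hf : RD f) (hg : RD g) : RD (fun r => f r * g r) := fun k => by
  have := (hf k).mul hg.tendsto
  simp only [mul_zero] at this
  exact this.congr (fun r => by ring)

/-- polynomial bounds of finite energy solutions. -/
theorem polyB (n : ℕ) (q m m1 : ℝ → ℝ) (Cq : ℝ) (hq : ∀ r, 1 ≤ r → |q r| ≤ Cq)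
    (hm : ∀ r, 0 < r → HasDerivAt m (m1 r) r)
    (hm1 : ∀ r, 0 < r → HasDerivAt m1 (-(n/r) * m1 r - q r * m r) r)
    (hint : IntegrableOn (fun r => r^n * m r ^ 2) (Set.Ioi 0)) :
    ∃ (C : ℝ) (K : ℕ), ∀ r, 1 ≤ r → |m r| ≤ C * r^K ∧ |m1 r| ≤ C * r^K := by
  set S : ℝ → ℝ := fun r => r^n * m r ^ 2 with hS
  have hScont : ∀ r, 0 < r → ContinuousAt S r := by
    intro r hr
    exact (continuousAt_id.pow n).mul ((hm r hr).continuousAt.pow 2)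
  set I := ∫ r in Set.Ioi (0:ℝ), S r with hI
  have hintI : ∀ r, 1 ≤ r → IntervalIntegrable S volume (1/2) r := by
    intro r hr
    rw [intervalIntegrable_iff_integrableOn_Ioc_of_le (by linarith)]
    exact hint.mono_set (fun x hx => lt_trans (by norm_num) hx.1)
  have hSig : ∀ r, 1 ≤ r → ∫ x in (1/2:ℝ)..r, S x ≤ I := by
    intro r hr
    rw [intervalIntegral.integral_of_le (by linarith)]
    apply setIntegral_mono_set hint
    · filter_upwards [ae_restrict_mem measurableSet_Ioi] with x hx
      have : (0:ℝ) < x := hx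
      simp only [hS, Pi.zero_apply]; positivity
    · exact (show Set.Ioc (1/2:ℝ) r ⊆ Set.Ioi 0 from fun x hx => lt_trans (by norm_num) hx.1).eventuallyLE
  have hSig0 : 0 ≤ ∫ x in (1/2:ℝ)..1, S x := by
    apply intervalIntegral.integral_nonneg (by norm_num)
    intro u hu
    have : (0:ℝ) ≤ u := le_trans (by norm_num) hu.1
    simp only [hS]; positivity
  have hd2 : ∀ r, 1 ≤ r → HasDerivAt (fun r => ∫ x in (1/2:ℝ)..r, S x) (S r) r := by
    intro r hr
    have hr0 : 0 < r := by linarith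
    apply intervalIntegral.integral_hasDerivAt_right (hintI r hr)
    · have : ContinuousOn S (Set.Ioi 0) := fun x hx => (hScont x hx).continuousWithinAt
      exact this.stronglyMeasurableAtFilter isOpen_Ioi _ hr0
    · exact hScont r hr0
  have hI0 : 0 ≤ I := hSig0.trans (hSig 1 le_rfl)
  have hCq0 : 0 ≤ Cq := (abs_nonneg _).trans (hq 1 le_rfl)
  have hh : ∀ r, 1 ≤ r → HasDerivAt (fun r => r^n * m1 r) (-(r^n * q r * m r)) r := by
    intro r hr
    have hr0 : 0 < r := by linarith
    refine ((hasDerivAt_pow n r).mul (hm1 r hr0)).congr_deriv ?_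
    rcases n with _ | n
    · simp
    · simp only [Nat.add_sub_cancel, pow_succ]
      field_simp
      ring
  have key : ∀ (σ : ℝ), |σ| = 1 → ∀ r, 1 ≤ r →
      σ * (r^n * m1 r) ≤ |m1 1| + I + Cq^2 * r^(n+1) := by
    intro σ hσ r hr
    have hmono : MonotoneOn (fun r => (∫ x in (1/2:ℝ)..r, S x) + Cq^2 * r^(n+1)
        - σ * (r^n * m1 r)) (Set.Ici 1) := by
      have hder : ∀ r, 1 ≤ r → HasDerivAt (fun r => (∫ x in (1/2:ℝ)..r, S x) + Cq^2 * r^(n+1)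
        - σ * (r^n * m1 r)) (S r + Cq^2 * ((n+1:ℕ) * r^n) - σ * (-(r^n * q r * m r))) r := by
        intro r hr
        exact ((hd2 r hr).add ((hasDerivAt_pow (n+1) r).const_mul (Cq^2))).sub ((hh r hr).const_mul σ)
      apply monotoneOn_of_deriv_nonneg (convex_Ici _)
      · intro r hr
        exact (hder r hr).continuousAt.continuousWithinAt
      · intro r hr
        rw [interior_Ici] at hr
        exact (hder r (le_of_lt hr)).differentiableAt.differentiableWithinAt
      · intro r hr
        rw [interior_Ici] at hr
        have hr1 : (1:ℝ) ≤ r := le_of_lt hr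
        rw [(hder r hr1).deriv]
        have hqr := hq r hr1
        have hrn : 0 ≤ r^n := by positivity
        have h1 : |σ * (q r * m r)| ≤ m r^2 + Cq^2 := by
          rw [abs_mul, abs_mul, hσ, one_mul]
          have : |q r| * |m r| ≤ Cq * |m r| := by gcongr
          have h3 : m r^2 = |m r|^2 := (sq_abs _).symm
          rw [h3]
          nlinarith [sq_nonneg (|m r| - Cq), sq_nonneg (|m r| + Cq), abs_nonneg (m r)]
        have h2 := (abs_le.1 h1).1
        have h4 : (1:ℝ) ≤ (n+1:ℕ) := by push_cast; linarith [Nat.cast_nonneg (α := ℝ) n]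
        have h5 : 0 ≤ r^n * (m r^2 + Cq^2 + σ * (q r * m r)) := by
          apply mul_nonneg hrn; linarith
        have h6 : 0 ≤ Cq^2 * r^n * ((n+1:ℕ) - 1) := by
          apply mul_nonneg; positivity; linarith
        simp only [hS]
        nlinarith
    have h1 := hmono (Set.mem_Ici.2 le_rfl) (Set.mem_Ici.2 hr) hr
    simp only [one_pow, one_mul, mul_one] at h1
    have h2 := hSig r hr
    have h3 : σ * m1 1 ≤ |m1 1| := by
      calc σ * m1 1 ≤ |σ * m1 1| := le_abs_self _
        _ = _ := by rw [abs_mul, hσ, one_mul]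
    nlinarith [sq_nonneg Cq]
  set C1 := |m1 1| + I + Cq^2 with hC1
  have hC10 : 0 ≤ C1 := by positivity
  have b1 : ∀ r, 1 ≤ r → |m1 r| ≤ C1 * r^(n+1) := by
    intro r hr
    have hr0 : 0 < r := by linarith
    have e1 := key 1 (by simp) r hr
    have e2 := key (-1) (by simp) r hr
    have hp : 1 ≤ r^(n+1) := one_le_pow₀ hr
    have hpn : 1 ≤ r^n := one_le_pow₀ hr
    have e3 : |r^n * m1 r| ≤ C1 * r^(n+1) := by
      have : |m1 1| + I ≤ (|m1 1| + I) * r^(n+1) := le_mul_of_one_le_right (by positivity) hp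
      rw [abs_le, hC1]; constructor <;> nlinarith
    rw [abs_mul, abs_of_nonneg (by positivity : 0 ≤ r^n)] at e3
    exact (le_mul_of_one_le_left (abs_nonneg _) hpn).trans e3
  have b2 : ∀ r, 1 ≤ r → |m r| ≤ |m 1| + C1 * r^(n+2) := by
    intro r hr
    have hmv := (convex_Icc (1:ℝ) r).norm_image_sub_le_of_norm_hasDerivWithin_le (f := m) (f' := m1)
      (C := C1 * r^(n+1)) (x := 1) (y := r)
      (fun x hx => (hm x (by linarith [hx.1])).hasDerivWithinAt)
      (fun x hx => by
        rw [Real.norm_eq_abs]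
        refine (b1 x hx.1).trans ?_
        have : (0:ℝ) ≤ x := by linarith [hx.1]
        gcongr; exact hx.2) (by simp [hr]) (by simp [hr])
    rw [Real.norm_eq_abs, Real.norm_eq_abs, abs_of_nonneg (by linarith : 0 ≤ r - 1)] at hmv
    have h1 : |m r| ≤ |m 1| + |m r - m 1| := by
      have := abs_add_le (m 1) (m r - m 1); simpa using this
    have h2 : C1 * r^(n+1) * (r-1) ≤ C1 * r^(n+2) := by
      have : C1 * r^(n+2) - C1 * r^(n+1) * (r-1) = C1 * r^(n+1) := by ring
      have h3 : 0 ≤ C1 * r^(n+1) := by positivity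
      linarith
    linarith
  refine ⟨|m 1| + C1, n+2, fun r hr => ⟨?_, ?_⟩⟩
  · refine (b2 r hr).trans ?_
    have hp : 1 ≤ r^(n+2) := one_le_pow₀ hr
    have : |m 1| ≤ |m 1| * r^(n+2) := le_mul_of_one_le_right (by positivity) hp
    linarith
  · refine (b1 r hr).trans ?_
    have : r^(n+1) ≤ r^(n+2) := pow_le_pow_right₀ hr (by omega)
    have h2 : C1 * r^(n+1) ≤ C1 * r^(n+2) := by gcongr
    have h3 : 0 ≤ |m 1| * r^(n+2) := by positivity
    linarith

end PartR1


section PartR2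

structure RadData (n : ℕ) (v v1 g q G : ℝ → ℝ) (v0 g0 G0 : ℝ) : Prop where
  hv : ∀ r, 0 < r → HasDerivAt v (v1 r) r
  hv1 : ∀ r, 0 < r → HasDerivAt v1 (-(n/r) * v1 r - g r) r
  hg : ∀ r, 0 < r → HasDerivAt g (q r * v1 r) r
  hG : ∀ r, 0 < r → HasDerivAt G (g r * v1 r) r
  vpos : ∀ r, 0 < r → 0 < v r
  v1neg : ∀ r, 0 < r → v1 r < 0
  sign : ∀ α β : ℝ, 0 ≤ α → α ≤ β → 0 < β → ∀ r1 r2, 0 < r1 → r1 < r2 →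
    α * (v r2 * q r2) - β * g r2 ≤ 0 → α * (v r1 * q r1) - β * g r1 < 0
  sign0 : ∀ r, 0 < r → g r ≤ 0 → 0 < v r * q r - g r
  dv : RD v
  dv1 : RD v1
  dg : RD g
  dG : RD G
  zv : Tendsto v (𝓝[>] 0) (𝓝 v0)
  zv1 : Tendsto v1 (𝓝[>] 0) (𝓝 0)
  zg : Tendsto g (𝓝[>] 0) (𝓝 g0)
  zG : Tendsto G (𝓝[>] 0) (𝓝 G0)
  g0pos : 0 < g0
  qneg : ∃ R > 0, ∀ r, R ≤ r → q r < 0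
  qbd : ∃ C, ∀ r, 1 ≤ r → |q r| ≤ C
  qc : ContinuousOn q (Set.Ioi 0)

theorem tid0 : Tendsto (fun r : ℝ => r) (𝓝[>] 0) (𝓝 0) := tendsto_id.mono_left nhdsWithin_le_nhds

theorem tpow0 (n : ℕ) (hn : n ≠ 0) : Tendsto (fun r : ℝ => r^n) (𝓝[>] 0) (𝓝 0) := by
  have := tid0.pow n
  simpa [hn] using this

namespace RadData
variable {n : ℕ} {v v1 g q G : ℝ → ℝ} {v0 g0 G0 : ℝ}

/-- Pohozaev functional is positive. -/
theorem pohozaev (h : RadData n v v1 g q G v0 g0 G0) (hn : 1 ≤ n) (r : ℝ) (hr : 0 < r) :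
    0 < r^(n+1) * (v1 r^2/2 + G r) + (n-1)/2 * (r^n * (v r * v1 r)) := by
  have hn1 : (1:ℝ) ≤ n := by exact_mod_cast hn
  set Q : ℝ → ℝ := fun r => (n+1) * G r - (n-1)/2 * (v r * g r) with hQ
  set Z : ℝ → ℝ := fun r => (n-1) * (v r * q r) - (n+3) * g r with hZ
  have hQd : ∀ r, 0 < r → HasDerivAt Q (-v1 r / 2 * Z r) r := by
    intro r hr
    refine (((h.hG r hr).const_mul _).sub
      (((h.hv r hr).mul (h.hg r hr)).const_mul _)).congr_deriv ?_
    simp only [hZ]; ring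
  have hZs : ∀ r1 r2, 0 < r1 → r1 < r2 → Z r2 ≤ 0 → Z r1 < 0 :=
    h.sign (n-1) (n+3) (by linarith) (by linarith) (by linarith)
  have hQinf : Tendsto Q atTop (𝓝 0) := by
    have := ((h.dG).constMul (n+1)).add ((h.dv.mul h.dg).constMul (-((n-1)/2)))
    refine this.tendsto.congr (fun r => ?_)
    simp only [hQ]; ring
  have hQs : ∀ r1 r2, 0 < r1 → r1 < r2 → 0 ≤ Q r2 → 0 < Q r1 := by
    intro r1 r2 h1 h12 hQ2
    have h2 := h1.trans h12
    have hZ2 : Z r2 < 0 := by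
      by_contra hcon
      push Not at hcon
      have : Q r2 < 0 := by
        refine neg_right Q _ hQd h2 (fun s hs => ?_) hQinf
        have hs0 := h2.trans hs
        have : 0 < Z s := by
          by_contra hc; push Not at hc
          exact absurd (hZs r2 s h2 hs hc) (not_lt.2 hcon)
        have hv1 := h.v1neg s hs0
        apply mul_pos _ this; linarith
      linarith
    have : -Q r1 < -Q r2 := by
      refine lt_of_der (fun r => -Q r) _ (fun r hr => (hQd r hr).neg) h1 h12 (fun s hs hs' => ?_)
      have hs0 := h1.trans hs
      have h3 := hZs s r2 hs0 hs' hZ2.le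
      have hv1 := h.v1neg s hs0
      nlinarith
    linarith
  set P : ℝ → ℝ := fun r => r^(n+1) * (v1 r^2/2 + G r) + (n-1)/2 * (r^n * (v r * v1 r)) with hP
  have hPd : ∀ r, 0 < r → HasDerivAt P (r^n * Q r) r := by
    intro r hr
    have e1 := (hasDerivAt_pow (n+1) r).mul ((((h.hv1 r hr).pow 2).div_const 2).add (h.hG r hr))
    have e2 := ((hasDerivAt_pow n r).mul ((h.hv r hr).mul (h.hv1 r hr))).const_mul (((n:ℝ)-1)/2)
    refine (e1.add e2).congr_deriv ?_
    obtain ⟨k, rfl⟩ : ∃ k, n = k+1 := ⟨n-1, by omega⟩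
    have hr' := hr.ne'
    simp only [hQ, Nat.add_sub_cancel, pow_succ]
    push_cast
    simp
    field_simp
    ring
  change 0 < P r
  rcases le_or_gt 0 (Q r) with hq | hq
  · refine pos_left P _ hPd hr (fun s hs hs' => ?_) ?_
    · have := hQs s r hs hs' hq
      positivity
    · have e1 := (tpow0 (n+1) (by omega)).mul (((h.zv1.pow 2).div_const 2).add h.zG)
      have e2 := ((tpow0 n (by omega)).mul (h.zv.mul h.zv1)).const_mul (((n:ℝ)-1)/2)
      have := e1.add e2
      simpa using this
  · have : -P r < 0 := by
      refine neg_right (fun r => -P r) _ (fun r hr => (hPd r hr).neg) hr (fun s hs => ?_) ?_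
      · have hs0 := hr.trans hs
        have : Q s < 0 := by
          by_contra hc; push Not at hc
          linarith [hQs r s hr hs hc]
        have hsn : 0 < s^n := by positivity
        nlinarith
      · have := (((((h.dv1.mul h.dv1).constMul (1/2)).add h.dG).mulPow (n+1)).add
          (((h.dv.mul h.dv1).mulPow n).constMul (((n:ℝ)-1)/2))).constMul (-1)
        refine this.tendsto.congr (fun r => ?_)
        simp only [hP]; ring
    linarith

theorem Dpos (h : RadData n v v1 g q G v0 g0 G0) (hn : 1 ≤ n) (r : ℝ) (hr : 0 < r) :
    0 < r^n * ((n-1) * (v r * v1 r) + r * (v1 r^2 + g r * v r)) := by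
  set I : ℝ → ℝ := fun r => v r * q r - g r with hI
  have hIs : ∀ r1 r2, 0 < r1 → r1 < r2 → I r2 ≤ 0 → I r1 < 0 := by
    intro r1 r2 h1 h12 h2
    have := h.sign 1 1 (by norm_num) le_rfl (by norm_num) r1 r2 h1 h12
    simp only [one_mul] at this
    exact this h2
  rcases le_or_gt 0 (I r) with hi | hi
  · have h1 : -(g r * v r - 2 * G r) < 0 := by
      refine neg_right (fun r => -(g r * v r - 2 * G r)) (fun r => -(v1 r) * I r) ?_ hr ?_ ?_
      · intro r hr
        refine (((h.hg r hr).mul (h.hv r hr)).sub ((h.hG r hr).const_mul 2)).neg.congr_deriv ?_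
        simp only [hI]; ring
      · intro s hs
        have hs0 := hr.trans hs
        have : 0 < I s := by
          by_contra hc; push Not at hc
          linarith [hIs r s hr hs hc]
        have := h.v1neg s hs0
        nlinarith
      · have := ((h.dg.mul h.dv).constMul (-1)).add (h.dG.constMul 2)
        refine this.tendsto.congr (fun r => ?_)
        ring
    have h2 := h.pohozaev hn r hr
    have h3 : 0 < r^(n+1) * (g r * v r - 2 * G r) := by
      apply mul_pos (by positivity); linarith
    rw [pow_succ] at h2 h3
    nlinarith
  · set D : ℝ → ℝ := fun r => r^n * ((n-1) * (v r * v1 r) + r * (v1 r^2 + g r * v r)) with hD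
    refine pos_left D (fun r => r^n * (2 * g r * v r + r * v1 r * I r)) ?_ hr ?_ ?_
    · intro r hr
      have e := (hasDerivAt_pow n r).mul ((((h.hv r hr).mul (h.hv1 r hr)).const_mul ((n:ℝ)-1)).add
        ((hasDerivAt_id r).mul (((h.hv1 r hr).pow 2).add ((h.hg r hr).mul (h.hv r hr)))))
      refine e.congr_deriv ?_
      obtain ⟨k, rfl⟩ : ∃ k, n = k+1 := ⟨n-1, by omega⟩
      have hr' := hr.ne'
      simp only [hI, Nat.add_sub_cancel, pow_succ]
      push_cast
      simp
      field_simp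
      ring
    · intro s hs hs'
      have hIs' := hIs s r hs hs' hi.le
      have hgs : 0 < g s := by
        by_contra hc; push Not at hc
        have := h.sign0 s hs hc
        simp only [hI] at hIs'
        linarith
      have := h.v1neg s hs
      have h3 := h.vpos s hs
      have h4 : 0 < v1 s * I s := mul_pos_of_neg_of_neg this hIs'
      have : 0 < 2 * g s * v s + s * (v1 s * I s) := by positivity
      have h5 : 0 < s^n := by positivity
      have := mul_pos h5 this
      linarith
    · have := (tpow0 n (by omega)).mul (((h.zv.mul h.zv1).const_mul ((n:ℝ)-1)).add
        (tid0.mul ((h.zv1.pow 2).add (h.zg.mul h.zv))))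
      simpa using this

theorem theta_mono (h : RadData n v v1 g q G v0 g0 G0) (hn : 1 ≤ n) {a b : ℝ} (ha : 0 < a)
    (hab : a < b) : -(a * v1 a / v a) < -(b * v1 b / v b) := by
  refine lt_of_der (fun r => -(r * v1 r / v r))
    (fun r => r^n * ((n-1) * (v r * v1 r) + r * (v1 r^2 + g r * v r)) / (r^n * v r^2))
    (fun r hr => ?_) ha hab (fun s hs hs' => ?_)
  · refine ((((hasDerivAt_id r).mul (h.hv1 r hr)).div (h.hv r hr)
      (h.vpos r hr).ne').neg).congr_deriv ?_
    have := (h.vpos r hr).ne'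
    have hr' := hr.ne'
    simp
    field_simp
    ring
  · have hs0 := ha.trans hs
    have := h.Dpos hn s hs0
    have := h.vpos s hs0
    positivity

end RadData
end PartR2


section PartR3

structure MSol (n : ℕ) (q m m1 : ℝ → ℝ) (m0 m10 : ℝ) : Prop where
  hm : ∀ r, 0 < r → HasDerivAt m (m1 r) r
  hm1 : ∀ r, 0 < r → HasDerivAt m1 (-(n/r) * m1 r - q r * m r) r
  hint : IntegrableOn (fun r => r^n * m r ^ 2) (Set.Ioi 0)
  zm : Tendsto m (𝓝[>] 0) (𝓝 m0)
  zm1 : Tendsto m1 (𝓝[>] 0) (𝓝 m10)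

namespace MSol
variable {n : ℕ} {v v1 g q G m m1 : ℝ → ℝ} {v0 g0 G0 m0 m10 : ℝ}

theorem neg (s : MSol n q m m1 m0 m10) : MSol n q (fun r => -m r) (fun r => -m1 r) (-m0) (-m10) where
  hm r hr := (s.hm r hr).neg
  hm1 r hr := (s.hm1 r hr).neg.congr_deriv (by ring)
  hint := by simpa using s.hint
  zm := s.zm.neg
  zm1 := s.zm1.neg

theorem back (s : MSol n q m m1 m0 m10) (hq : ContinuousOn q (Set.Ioi 0)) {z : ℝ} (hz : m z = 0)
    (hz1 : m1 z = 0) {r : ℝ} (hr : 0 < r) (hrz : r ≤ z) : m r = 0 := by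
  obtain ⟨C, hC⟩ := isCompact_Icc.exists_bound_of_continuousOn
    (hq.mono (fun x (hx : x ∈ Set.Icc r z) => hr.trans_le hx.1))
  have hC0 : 0 ≤ C := (norm_nonneg _).trans (hC r ⟨le_rfl, hrz⟩)
  set L := 1 + C + 2 * (n / r) with hL
  have hmono : (m r^2 + m1 r^2) * exp (L * r) ≤ (m z^2 + m1 z^2) * exp (L * z) := by
    refine le_of_der (fun r => (m r^2 + m1 r^2) * exp (L * r)) (fun r =>
      (2 * m r * m1 r + 2 * m1 r * (-(n/r) * m1 r - q r * m r) + L * (m r^2 + m1 r^2)) * exp (L*r))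
      (fun r hr => ?_) hr hrz (fun s hs hs' => ?_)
    · refine ((((s.hm r hr).pow 2).add ((s.hm1 r hr).pow 2)).mul
        (((hasDerivAt_id r).const_mul L).exp)).congr_deriv ?_
      simp; ring
    · apply mul_nonneg _ (exp_pos _).le
      have hqs := hC s ⟨hs.le, hs'.le⟩
      rw [Real.norm_eq_abs, abs_le] at hqs
      have hs0 := hr.trans hs
      have h1 : (n:ℝ)/s ≤ n / r := by gcongr
      have h2 : 0 ≤ (n:ℝ)/s := by positivity
      rw [hL]
      have a1 : 0 ≤ (1) * (m s + m1 s)^2 := by positivity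
      have a2 : 0 ≤ (n/r - n/s) * m1 s^2 := mul_nonneg (by linarith) (by positivity)
      have a3 : 0 ≤ (C + q s) * (m s - m1 s)^2 := mul_nonneg (by linarith) (by positivity)
      have a4 : 0 ≤ (C - q s) * (m s + m1 s)^2 := mul_nonneg (by linarith) (by positivity)
      have a5 : 0 ≤ (n / r) * m s^2 := by positivity
      nlinarith
  rw [hz, hz1] at hmono
  have h1 := exp_pos (L * r)
  have h2 : (m r^2 + m1 r^2) ≤ 0 := by
    by_contra hc; push Not at hc
    have := mul_pos hc h1
    simp at hmono; linarith
  have : m r^2 = 0 := le_antisymm (by linarith [sq_nonneg (m1 r)]) (sq_nonneg _)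
  exact pow_eq_zero_iff two_ne_zero |>.1 this

theorem tail (s : MSol n q m m1 m0 m10) {R : ℝ} (hR : 0 < R) (hq : ∀ r, R ≤ r → q r < 0) {z : ℝ}
    (hzR : R ≤ z) (hz : m z = 0) {r : ℝ} (hr : z < r) : m r = 0 := by
  have hz0 : 0 < z := by linarith
  have hB : ∀ r, z ≤ r → 0 ≤ r^n * (m r * m1 r) := by
    intro r hr
    have := le_of_der (fun r => r^n * (m r * m1 r)) (fun r => r^n * (m1 r^2 - q r * m r^2))
      (fun r hr => ?_) hz0 hr (fun t ht ht' => ?_)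
    · simp only [hz] at this; simpa using this
    · refine ((hasDerivAt_pow n r).mul ((s.hm r hr).mul (s.hm1 r hr))).congr_deriv ?_
      have hr' := hr.ne'
      rcases n with _ | n
      · simp; ring
      · simp only [Nat.add_sub_cancel, pow_succ]
        simp
        field_simp
        ring
    · have ht0 := hz0.trans ht
      have := hq t (by linarith)
      have : 0 ≤ - q t * m t^2 := mul_nonneg (by linarith) (sq_nonneg _)
      have h1 : 0 ≤ m1 t^2 - q t * m t^2 := by nlinarith
      positivity
  by_contra hne
  have hr0 : 0 < r := hz0.trans hr
  have hmon : ∀ t, r ≤ t → m r^2 ≤ m t^2 := by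
    intro t ht
    refine le_of_der (fun r => m r^2) (fun r => 2 * (m r * m1 r))
      (fun r hr => ((s.hm r hr).pow 2).congr_deriv (by simp; ring)) hr0 ht (fun x hx _ => ?_)
    have hx0 := hr0.trans hx
    have h1 := hB x (by linarith)
    have h2 : 0 < x^n := by positivity
    have := nonneg_of_mul_nonneg_right h1 h2
    linarith
  have hcst : IntegrableOn (fun _ : ℝ => r^n * m r^2) (Set.Ioi r) := by
    refine Integrable.mono (s.hint.mono_set (Set.Ioi_subset_Ioi hr0.le)) aestronglyMeasurable_const ?_
    filter_upwards [ae_restrict_mem measurableSet_Ioi] with t ht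
    have ht' : r < t := ht
    have := hmon t ht'.le
    rw [Real.norm_eq_abs, Real.norm_eq_abs, abs_of_nonneg (by positivity),
      abs_of_nonneg (by have := hr0.trans ht'; positivity)]
    have ht0 : 0 < t := hr0.trans ht'
    have ht1 : 0 ≤ t ^ n := by positivity
    exact mul_le_mul (pow_le_pow_left₀ hr0.le ht'.le n) this (sq_nonneg _) ht1
  rw [integrableOn_const_iff] at hcst
  rcases hcst with h | h
  · have : 0 < r^n * m r^2 := by positivity
    exact this.ne' (enorm_eq_zero.1 h)
  · simp at h

theorem wr (s : MSol n q m m1 m0 m10) (hq : ∃ C, ∀ r, 1 ≤ r → |q r| ≤ C) {A B : ℝ → ℝ}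
    (hA : RD A) (hB : RD B) : Tendsto (fun r => r^n * (m1 r * A r - m r * B r)) atTop (𝓝 0) := by
  obtain ⟨Cq, hCq⟩ := hq
  obtain ⟨C, K, hCK⟩ := polyB n q m m1 Cq hCq s.hm s.hm1 s.hint
  have h1 : RD (fun r => m1 r * A r) := hA.bdd C K (fun r hr => by
    rw [abs_mul]; gcongr; exact (hCK r hr).2)
  have h2 : RD (fun r => m r * B r) := hB.bdd C K (fun r hr => by
    rw [abs_mul]; gcongr; exact (hCK r hr).1)
  refine ((h1.add (h2.constMul (-1))) n).congr (fun r => by ring)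

theorem near (s : MSol n q m m1 m0 m10) {y : ℝ} (hy : 0 < y) (h0 : m y = 0) (h1 : 0 < m1 y) :
    ∃ δ > 0, (∀ t, y < t → t < y + δ → 0 < m t) ∧ (∀ t, y - δ < t → t < y → m t < 0) := by
  have hc := (s.hm1 y hy).continuousAt
  obtain ⟨ε, hε, hε'⟩ := Metric.eventually_nhds_iff.1 (hc.eventually (lt_mem_nhds h1))
  refine ⟨min ε y, lt_min hε hy, fun t ht ht' => ?_, fun t ht ht' => ?_⟩
  · rw [← h0]
    refine lt_of_der m m1 s.hm hy ht (fun x hx hx' => hε' ?_)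
    rw [Real.dist_eq, abs_of_pos (by linarith)]
    linarith [min_le_left ε y]
  · rw [← h0]
    refine lt_of_der m m1 s.hm (by linarith [min_le_right ε y]) ht' (fun x hx hx' => hε' ?_)
    rw [Real.dist_eq, abs_of_neg (by linarith)]
    linarith [min_le_left ε y]

/-- Wronskian with `v'`. -/
theorem wr1d (s : MSol n q m m1 m0 m10) (h : RadData n v v1 g q G v0 g0 G0) (r : ℝ) (hr : 0 < r) :
    HasDerivAt (fun r => r^n * (m1 r * v1 r - m r * (-(n/r) * v1 r - g r)))
      (-(r^n * (n / r^2) * (m r * v1 r))) r := by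
  have hc : HasDerivAt (fun r : ℝ => (n:ℝ)/r) (-(n / r^2)) r := by
    refine ((hasDerivAt_inv hr.ne').const_mul (n:ℝ)).congr_deriv ?_
    field_simp
  refine ((hasDerivAt_pow n r).mul (((s.hm1 r hr).mul (h.hv1 r hr)).sub ((s.hm r hr).mul
    ((hc.neg.mul (h.hv1 r hr)).sub (h.hg r hr))))).congr_deriv ?_
  have hr' := hr.ne'
  rcases n with _ | n
  · simp; ring
  · simp only [Nat.add_sub_cancel, pow_succ]
    simp
    field_simp
    ring

theorem wr1inf (s : MSol n q m m1 m0 m10) (h : RadData n v v1 g q G v0 g0 G0) :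
    Tendsto (fun r => r^n * (m1 r * v1 r - m r * (-(n/r) * v1 r - g r))) atTop (𝓝 0) := by
  refine s.wr h.qbd h.dv1 ((h.dv1.bdd (n:ℝ) 0 ?_).add (h.dg.constMul (-1)) |>.congr
    (f := fun r => (-(n/r) * v1 r) + (-1) * g r) (fun r _ => by ring))
  intro r hr
  have hr0 : 0 < r := by linarith
  rw [abs_mul, abs_neg, abs_of_nonneg (by positivity : 0 ≤ (n:ℝ)/r)]
  gcongr
  rw [pow_zero, mul_one]
  exact div_le_self (by positivity) hr

theorem m1pos (s : MSol n q m m1 m0 m10) (h : RadData n v v1 g q G v0 g0 G0) (hn : 1 ≤ n) {z : ℝ}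
    (hz : 0 < z) (hmz : m z = 0) (hpos : ∀ r, z < r → 0 < m r) : 0 < m1 z := by
  have h1 := neg_right _ _ (s.wr1d h) hz (fun t ht => ?_) (s.wr1inf h)
  · rw [hmz] at h1
    have := h.v1neg z hz
    have hzn : 0 < z^n := by positivity
    by_contra hc; push Not at hc
    have h2 : 0 ≤ m1 z * v1 z := mul_nonneg_of_nonpos_of_nonpos hc this.le
    have := mul_nonneg hzn.le h2
    linarith
  · have ht0 := hz.trans ht
    have := h.v1neg t ht0
    have h2 := hpos t ht
    have h3 : 0 < -(m t * v1 t) := by nlinarith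
    have : 0 < t^n * (n/t^2) := by
      have : 0 < (n:ℝ) := by exact_mod_cast hn
      positivity
    nlinarith

theorem not_pos (s : MSol n q m m1 m0 m10) (h : RadData n v v1 g q G v0 g0 G0) (hn : 1 ≤ n)
    (hpos : ∀ r, 0 < r → 0 < m r) : False := by
  have key : ∀ t, 0 < t → 0 < -(t^n * (n / t^2) * (m t * v1 t)) := by
    intro t ht0
    have := h.v1neg t ht0
    have h2 := hpos t ht0
    have h3 : 0 < -(m t * v1 t) := by nlinarith
    have : 0 < t^n * (n/t^2) := by
      have : 0 < (n:ℝ) := by exact_mod_cast hn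
      positivity
    nlinarith
  have h1 := neg_right _ _ (s.wr1d h) one_pos (fun t ht => key t (by linarith)) (s.wr1inf h)
  have h2 := pos_left _ _ (s.wr1d h) one_pos (fun t ht _ => key t ht) (l := 0) ?_
  · linarith
  · obtain ⟨k, rfl⟩ : ∃ k, n = k+1 := ⟨n-1, by omega⟩
    have e1 := (tpow0 (k+1) (by omega)).mul ((s.zm1.mul h.zv1).add (s.zm.mul h.zg))
    have e2 : Tendsto (fun r : ℝ => (k+1:ℕ) * (r^k * (m r * v1 r))) (𝓝[>] 0) (𝓝 ((k+1:ℕ) * ((0:ℝ)^k * (m0 * 0)))) :=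
      ((tid0.pow k).mul (s.zm.mul h.zv1)).const_mul _
    have e3 := e1.add e2
    simp only [mul_zero, zero_mul, add_zero, zero_add] at e3
    refine e3.congr' ?_
    filter_upwards [self_mem_nhdsWithin] with r hr
    have hr' : r ≠ 0 := (show (0:ℝ) < r from hr).ne'
    rw [pow_succ]
    field_simp
    ring

/-- Wronskian with `r v' + c v`. -/
theorem wr2d (s : MSol n q m m1 m0 m10) (h : RadData n v v1 g q G v0 g0 G0) (c : ℝ) (r : ℝ) (hr : 0 < r) :
    HasDerivAt (fun r => r^n * (m1 r * (r * v1 r + c * v r) - m r * ((1 - n + c) * v1 r - r * g r)))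
      (-(r^n * (m r * (c * (v r * q r) - (c + 2) * g r)))) r := by
  refine ((hasDerivAt_pow n r).mul (((s.hm1 r hr).mul (((hasDerivAt_id r).mul (h.hv1 r hr)).add
    ((h.hv r hr).const_mul c))).sub ((s.hm r hr).mul
    (((h.hv1 r hr).const_mul (1 - n + c)).sub ((hasDerivAt_id r).mul (h.hg r hr)))))).congr_deriv ?_
  have hr' := hr.ne'
  rcases n with _ | n
  · simp; ring
  · simp only [Nat.add_sub_cancel, pow_succ]
    simp
    field_simp
    ring

theorem wr2inf (s : MSol n q m m1 m0 m10) (h : RadData n v v1 g q G v0 g0 G0) (c : ℝ) :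
    Tendsto (fun r => r^n * (m1 r * (r * v1 r + c * v r) - m r * ((1 - n + c) * v1 r - r * g r)))
      atTop (𝓝 0) := by
  refine s.wr h.qbd ?_ ?_
  · exact ((h.dv1.mulPow 1).add (h.dv.constMul c)).congr (fun r _ => by ring)
  · exact ((h.dv1.constMul (1 - n + c)).add ((h.dg.mulPow 1).constMul (-1))).congr (fun r _ => by ring)

theorem last_zero (s : MSol n q m m1 m0 m10) (h : RadData n v v1 g q G v0 g0 G0) (hn : 1 ≤ n) {z : ℝ}
    (hz : 0 < z) (hmz : m z = 0) (hpos : ∀ r, z < r → 0 < m r) : False := by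
  have hm1z := s.m1pos h hn hz hmz hpos
  have hvz := h.vpos z hz
  have hv1z := h.v1neg z hz
  set c := -(z * v1 z / v z) with hc
  have hcpos : 0 < c := by
    rw [hc, ← neg_div]; apply div_pos _ hvz; nlinarith
  have hvc : z * v1 z + c * v z = 0 := by rw [hc]; field_simp; ring
  set W := (fun r => r^n * (m1 r * (r * v1 r + c * v r) - m r * ((1 - n + c) * v1 r - r * g r))) with hW
  have hWd := s.wr2d h c
  have hWz : W z = 0 := by simp only [hW, hmz, hvc]; ring
  set I : ℝ → ℝ := fun r => c * (v r * q r) - (c + 2) * g r with hI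
  have hIs : ∀ r1 r2, 0 < r1 → r1 < r2 → I r2 ≤ 0 → I r1 < 0 :=
    h.sign c (c+2) hcpos.le (by linarith) (by linarith)
  have hIz : I z < 0 := by
    by_contra hcon; push Not at hcon
    have : -W z < 0 := by
      refine neg_right (fun r => -W r) _ (fun r hr => (hWd r hr).neg) hz (fun t ht => ?_) ?_
      · have ht0 := hz.trans ht
        have h1 := hpos t ht
        have h2 : 0 < I t := by
          by_contra hc2; push Not at hc2
          linarith [hIs z t hz ht hc2]
        simp only [hI] at h2
        rw [neg_neg]; positivity
      · simpa using (s.wr2inf h c).neg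
    linarith
  have hIl : ∀ r, 0 < r → r < z → I r < 0 := fun r hr hrz => hIs r z hr hrz hIz.le
  obtain ⟨δ, hδ, -, hneg⟩ := s.near hz hmz hm1z
  have hmc : ∀ r, 0 < r → ContinuousAt m r := fun r hr => (s.hm r hr).continuousAt
  by_cases hex : ∃ y', 0 < y' ∧ y' < z ∧ m y' = 0
  · obtain ⟨y', hy', hy'z, hmy'⟩ := hex
    have hcomp : IsCompact (Set.Icc y' (z - δ) ∩ m ⁻¹' {0}) := by
      apply isCompact_Icc.of_isClosed_subset _ Set.inter_subset_left
      exact ContinuousOn.preimage_isClosed_of_isClosed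
        (fun x hx => (hmc x (hy'.trans_le hx.1)).continuousWithinAt) isClosed_Icc isClosed_singleton
    obtain ⟨y, hy, hyub⟩ := hcomp.exists_isGreatest ⟨y', ⟨le_rfl, by
      by_contra hcc; push Not at hcc
      linarith [hneg y' hcc hy'z]⟩, hmy'⟩
    have hy0 : 0 < y := hy'.trans_le hy.1.1
    have hyz : y < z := by linarith [hy.1.2]
    have hmy : m y = 0 := hy.2
    have hnz : ∀ t, y < t → t < z → m t ≠ 0 := by
      intro t ht ht' h0
      rcases le_or_gt t (z - δ) with h1 | h1
      · have := hyub ⟨⟨by linarith [hy.1.1], h1⟩, h0⟩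
        linarith
      · linarith [hneg t h1 ht']
    have hmneg : ∀ t, y < t → t < z → m t < 0 := by
      intro t ht ht'
      by_contra hcc; push Not at hcc
      have hpt : 0 < m t := lt_of_le_of_ne hcc (hnz t ht ht').symm
      set t2 := max ((t + z)/2) (z - δ/2) with ht2
      have h1 : t < t2 := lt_of_lt_of_le (by linarith) (le_max_left _ _)
      have h2 : z - δ < t2 := lt_of_lt_of_le (by linarith) (le_max_right _ _)
      have h3 : t2 < z := max_lt (by linarith) (by linarith)
      have h4 := hneg t2 h2 h3
      obtain ⟨x, hx, hx0⟩ := intermediate_value_Icc' h1.le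
        (fun x hx => (hmc x (by linarith [hx.1])).continuousWithinAt) (show (0:ℝ) ∈ Set.Icc (m t2) (m t) from ⟨h4.le, hpt.le⟩)
      exact hnz x (by linarith [hx.1]) (by linarith [hx.2]) hx0
    have hWy : -W y < -W z := by
      refine lt_of_der (fun r => -W r) _ (fun r hr => (hWd r hr).neg) hy0 hyz (fun t ht ht' => ?_)
      have ht0 := hy0.trans ht
      have h1 := hmneg t ht ht'
      have h2 := hIl t ht0 ht'
      have h3 := mul_pos_of_neg_of_neg h1 h2
      simp only [hI] at h3
      rw [neg_neg]; positivity
    rw [hWz] at hWy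
    have hWy' : 0 < y^n * (m1 y * (y * v1 y + c * v y)) := by
      have : W y = y^n * (m1 y * (y * v1 y + c * v y)) := by simp only [hW, hmy]; ring
      linarith
    have hyn : 0 < y^n := by positivity
    have h5 := pos_of_mul_pos_right hWy' hyn.le
    have hm1y : m1 y ≤ 0 := by
      by_contra hcc; push Not at hcc
      obtain ⟨δ', hδ', hp, -⟩ := s.near hy0 hmy hcc
      have e1 := hp (min ((y+z)/2) (y+δ'/2)) (lt_min (by linarith) (by linarith))
        (lt_of_le_of_lt (min_le_right _ _) (by linarith))
      have e2 := hmneg (min ((y+z)/2) (y+δ'/2)) (lt_min (by linarith) (by linarith))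
        (lt_of_le_of_lt (min_le_left _ _) (by linarith))
      linarith
    have h6 : y * v1 y + c * v y < 0 := by
      by_contra hcc; push Not at hcc
      have := mul_nonpos_of_nonpos_of_nonneg hm1y hcc
      linarith
    have h7 := h.theta_mono hn hy0 hyz
    rw [← hc] at h7
    have hvy := h.vpos y hy0
    have : -(y * v1 y / v y) * v y < c * v y := by gcongr
    have e : -(y * v1 y / v y) * v y = -(y * v1 y) := by field_simp
    linarith
  · push Not at hex
    have hmneg : ∀ t, 0 < t → t < z → m t < 0 := by
      intro t ht ht'
      by_contra hcc; push Not at hcc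
      have hpt : 0 < m t := lt_of_le_of_ne hcc (hex t ht ht').symm
      set t2 := max ((t + z)/2) (z - δ/2) with ht2
      have h1 : t < t2 := lt_of_lt_of_le (by linarith) (le_max_left _ _)
      have h2 : z - δ < t2 := lt_of_lt_of_le (by linarith) (le_max_right _ _)
      have h3 : t2 < z := max_lt (by linarith) (by linarith)
      have h4 := hneg t2 h2 h3
      obtain ⟨x, hx, hx0⟩ := intermediate_value_Icc' h1.le
        (fun x hx => (hmc x (by linarith [hx.1])).continuousWithinAt) (show (0:ℝ) ∈ Set.Icc (m t2) (m t) from ⟨h4.le, hpt.le⟩)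
      exact hex x (by linarith [hx.1]) (by linarith [hx.2]) hx0
    have : 0 < -W z := by
      refine pos_left (fun r => -W r) _ (fun r hr => (hWd r hr).neg) hz (fun t ht ht' => ?_) ?_
      · have h1 := hmneg t ht ht'
        have h2 := hIl t ht ht'
        have h3 := mul_pos_of_neg_of_neg h1 h2
        simp only [hI] at h3
        rw [neg_neg]; positivity
      · have := ((tpow0 n (by omega)).mul ((s.zm1.mul ((tid0.mul h.zv1).add (h.zv.const_mul c))).sub
          (s.zm.mul ((h.zv1.const_mul (1 - (n:ℝ) + c)).sub (tid0.mul h.zg))))).neg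
        simpa using this
    linarith

theorem radial_zero (s : MSol n q m m1 m0 m10) (h : RadData n v v1 g q G v0 g0 G0) (hn : 1 ≤ n) :
    ∀ r, 0 < r → m r = 0 := by
  by_contra hcon
  push Not at hcon
  obtain ⟨rs, hrs, hne⟩ := hcon
  have hmc : ∀ r, 0 < r → ContinuousAt m r := fun r hr => (s.hm r hr).continuousAt
  obtain ⟨R, hR, hqR⟩ := h.qneg
  have hbd : ∀ z, R ≤ z → m z ≠ 0 := by
    intro z hz h0
    have hz0 : 0 < z := by linarith
    have htl : ∀ r, z < r → m r = 0 := fun r hr => s.tail hR hqR hz h0 hr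
    set r := max (z+1) rs with hr
    have hr1 : z < r := lt_of_lt_of_le (by linarith) (le_max_left _ _)
    have : m1 r = 0 := by
      refine (s.hm r (hz0.trans hr1)).unique ?_
      refine (hasDerivAt_const r (0:ℝ)).congr_of_eventuallyEq ?_
      filter_upwards [lt_mem_nhds hr1] with t ht using htl t ht
    exact hne (s.back h.qc (htl r hr1) this hrs (le_max_right _ _))
  have sgn : ∀ z, 0 ≤ z → (∀ r, z < r → m r ≠ 0) → (∀ r, z < r → 0 < m r) ∨ (∀ r, z < r → m r < 0) := by
    intro z hz hnz
    by_contra hcc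
    push Not at hcc
    obtain ⟨⟨a, ha, ha'⟩, ⟨b, hb, hb'⟩⟩ := hcc
    have hpre : IsPreconnected (m '' Set.Ioi z) := by
      refine isPreconnected_Ioi.image _ (fun x hx => (hmc x (lt_of_le_of_lt hz hx)).continuousWithinAt)
    obtain ⟨x, hx, hx0⟩ := hpre.ordConnected.out ⟨a, ha, rfl⟩ ⟨b, hb, rfl⟩ (show (0:ℝ) ∈ Set.Icc _ _ from ⟨ha', hb'⟩)
    exact hnz x hx hx0
  by_cases hex : ∃ z', 0 < z' ∧ m z' = 0
  · obtain ⟨z', hz', hmz'⟩ := hex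
    have hcomp : IsCompact (Set.Icc z' R ∩ m ⁻¹' {0}) := by
      apply isCompact_Icc.of_isClosed_subset _ Set.inter_subset_left
      exact ContinuousOn.preimage_isClosed_of_isClosed
        (fun x hx => (hmc x (hz'.trans_le hx.1)).continuousWithinAt) isClosed_Icc isClosed_singleton
    obtain ⟨z, hz, hzub⟩ := hcomp.exists_isGreatest ⟨z', ⟨le_rfl, by
      by_contra hcc; push Not at hcc
      exact hbd z' hcc.le hmz'⟩, hmz'⟩
    have hz0 : 0 < z := hz'.trans_le hz.1.1
    have hmz : m z = 0 := hz.2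
    have hnz : ∀ r, z < r → m r ≠ 0 := by
      intro r hr h0
      rcases le_or_gt r R with h1 | h1
      · have := hzub ⟨⟨by linarith [hz.1.1], h1⟩, h0⟩
        linarith
      · exact hbd r h1.le h0
    rcases sgn z hz0.le hnz with hp | hp
    · exact s.last_zero h hn hz0 hmz hp
    · exact s.neg.last_zero h hn hz0 (by simp [hmz]) (fun r hr => by simpa using hp r hr)
  · push Not at hex
    rcases sgn 0 le_rfl hex with hp | hp
    · exact s.not_pos h hn hp
    · exact s.neg.not_pos h hn (fun r hr => by simpa using hp r hr)

theorem radial_zero_one (s : MSol 0 q m m1 m0 0) (h : RadData 0 v v1 g q G v0 g0 G0) :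
    ∀ r, 0 < r → m r = 0 := by
  have hd := s.wr1d h
  have hW0 : ∀ r, 0 < r → m1 r * v1 r + m r * g r = 0 := by
    intro r hr
    refine tendsto_nhds_unique (f := fun _ : ℝ => m1 r * v1 r + m r * g r) (l := atTop) tendsto_const_nhds ?_
    refine (s.wr1inf h).congr' ?_
    filter_upwards [eventually_gt_atTop r] with t ht
    have e1 := le_of_der _ _ hd hr ht.le (fun x _ _ => by simp)
    have e2 := le_of_der _ _ (fun x hx => (hd x hx).neg) hr ht.le (fun x _ _ => by simp)
    simp at e1 e2 ⊢
    linarith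
  have hdr : ∀ r, 0 < r → HasDerivAt (fun r => m r / v1 r) 0 r := by
    intro r hr
    refine ((s.hm r hr).div (h.hv1 r hr) (h.v1neg r hr).ne).congr_deriv ?_
    have := hW0 r hr
    have h2 := (h.v1neg r hr).ne
    rw [div_eq_zero_iff]; left
    simp; linarith
  have hcst : ∀ r, 0 < r → m r = m 1 / v1 1 * v1 r := by
    intro r hr
    have h2 := (h.v1neg r hr).ne
    have : m r / v1 r = m 1 / v1 1 := by
      rcases le_total r 1 with h1 | h1
      · have e1 := le_of_der _ _ hdr hr h1 (fun x _ _ => le_rfl)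
        have e2 := le_of_der _ _ (fun x hx => (hdr x hx).neg) hr h1 (fun x _ _ => by simp)
        simp at e1 e2
        linarith
      · have e1 := le_of_der _ _ hdr one_pos h1 (fun x _ _ => le_rfl)
        have e2 := le_of_der _ _ (fun x hx => (hdr x hx).neg) one_pos h1 (fun x _ _ => by simp)
        simp at e1 e2
        linarith
    rw [← this]; field_simp
  set c := m 1 / v1 1 with hc
  have hm1c : ∀ r, 0 < r → m1 r = c * (- g r) := by
    intro r hr
    have h2 := (h.v1neg r hr).ne
    have := hW0 r hr
    rw [hcst r hr] at this
    have h3 : v1 r * (m1 r - c * (-g r)) = 0 := by linarith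
    have := (mul_eq_zero.1 h3).resolve_left h2
    linarith
  have hlim : Tendsto m1 (𝓝[>] 0) (𝓝 (c * (-g0))) := by
    refine ((h.zg.neg).const_mul c).congr' ?_
    filter_upwards [self_mem_nhdsWithin] with r hr
    exact (hm1c r hr).symm
  have h0 := tendsto_nhds_unique s.zm1 hlim
  have hc0 : c = 0 := by
    have := h.g0pos
    rcases mul_eq_zero.1 h0.symm with h | h
    · exact h
    · linarith
  intro r hr
  rw [hcst r hr, hc0, zero_mul]

end MSol
end PartR3

section PartS1

abbrev EN (N : ℕ) := EuclideanSpace ℝ (Fin N)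

def JJ {N : ℕ} (F : EN N → ℝ) : ℝ :=
  ∫ θ : Metric.sphere (0 : EN N) 1, F θ ∂(volume : Measure (EN N)).toSphere

section J
variable {N : ℕ}

theorem JJ_int {F : EN N → ℝ} (hF : Continuous F) :
    Integrable (fun θ : Metric.sphere (0 : EN N) 1 => F θ) (volume : Measure (EN N)).toSphere :=
  (hF.comp continuous_subtype_val).integrable_of_hasCompactSupport (HasCompactSupport.of_compactSpace _)

theorem JJ_congr {F G : EN N → ℝ} (h : ∀ x, ‖x‖ = 1 → F x = G x) : JJ F = JJ G := by
  unfold JJ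
  refine integral_congr_ae (Eventually.of_forall fun θ => h θ ?_)
  simpa using θ.2

theorem JJ_add {F G : EN N → ℝ} (hF : Continuous F) (hG : Continuous G) :
    JJ (fun x => F x + G x) = JJ F + JJ G := integral_add (JJ_int hF) (JJ_int hG)

theorem JJ_sub {F G : EN N → ℝ} (hF : Continuous F) (hG : Continuous G) :
    JJ (fun x => F x - G x) = JJ F - JJ G := integral_sub (JJ_int hF) (JJ_int hG)

theorem JJ_cmul (c : ℝ) (F : EN N → ℝ) :
    JJ (fun x => c * F x) = c * JJ F := integral_const_mul _ _

theorem JJ_sum {ι : Type*} (s : Finset ι) {F : ι → EN N → ℝ} (hF : ∀ i, Continuous (F i)) :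
    JJ (fun x => ∑ i ∈ s, F i x) = ∑ i ∈ s, JJ (F i) :=
  integral_finsetSum _ fun i _ => JJ_int (hF i)

open scoped Pointwise in
theorem JJ_isom (R : EN N ≃ₗᵢ[ℝ] EN N) {F : EN N → ℝ} (hF : Continuous F) :
    JJ (fun x => F (R x)) = JJ F := by
  have hmem : ∀ θ : Metric.sphere (0 : EN N) 1, R θ ∈ Metric.sphere (0 : EN N) 1 := by
    intro θ; simpa using θ.2
  set ρ : Metric.sphere (0 : EN N) 1 → Metric.sphere (0 : EN N) 1 := fun θ => ⟨R θ, hmem θ⟩ with hρ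
  have hc : Continuous ρ := by
    refine Continuous.subtype_mk ?_ _
    exact R.continuous.comp continuous_subtype_val
  have hmap : Measure.map ρ (volume : Measure (EN N)).toSphere = (volume : Measure (EN N)).toSphere := by
    ext s hs
    rw [Measure.map_apply hc.measurable hs, Measure.toSphere_apply' _ hs,
      Measure.toSphere_apply' _ (hc.measurable hs)]
    congr 1
    have : R ⁻¹' (Set.Ioo (0 : ℝ) 1 • ((↑) '' s : Set (EN N))) = (Set.Ioo (0 : ℝ) 1 • ((↑) '' (ρ ⁻¹' s) : Set (EN N))) := by
      ext x
      simp only [Set.mem_preimage, Set.mem_smul, Set.mem_image]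
      constructor
      · rintro ⟨t, ht, _, ⟨θ, hθ, rfl⟩, h⟩
        have h1 : R.symm θ ∈ Metric.sphere (0 : EN N) 1 := by simpa using θ.2
        refine ⟨t, ht, R.symm θ, ⟨⟨R.symm θ, h1⟩, ?_, rfl⟩, ?_⟩
        · have : ρ ⟨R.symm θ, h1⟩ = θ := by
            apply Subtype.ext; simp [hρ]
          rwa [this]
        · apply R.injective; simp [h]
      · rintro ⟨t, ht, _, ⟨θ, hθ, rfl⟩, h⟩
        exact ⟨t, ht, R θ, ⟨ρ θ, hθ, rfl⟩, by rw [← h]; simp⟩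
    rw [← this]
    have := R.measurePreserving.map_eq
    conv_rhs => rw [← this]
    exact (R.toHomeomorph.measurableEmbedding.map_apply _ _).symm
  unfold JJ
  conv_rhs => rw [← hmap]
  exact (integral_map (f := fun θ : Metric.sphere (0 : EN N) 1 => F θ) hc.aemeasurable
    (hF.comp continuous_subtype_val).aestronglyMeasurable).symm

theorem JJ_neg {F : EN N → ℝ} (hF : Continuous F) : JJ (fun x => F (-x)) = JJ F :=
  JJ_isom (LinearIsometryEquiv.neg ℝ) hF

theorem JJ_deriv {H H' : ℝ → EN N → ℝ} (hd : ∀ t x, HasDerivAt (fun t => H t x) (H' t x) t)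
    (hc : ∀ t, Continuous (H t)) (hc' : Continuous (fun z : ℝ × EN N => H' z.1 z.2)) (t : ℝ) :
    HasDerivAt (fun t => JJ (H t)) (JJ (H' t)) t := by
  have hK : IsCompact (Metric.closedBall t 1 ×ˢ Metric.sphere (0 : EN N) 1) :=
    (isCompact_closedBall _ _).prod (isCompact_sphere _ _)
  obtain ⟨C, hC⟩ := hK.exists_bound_of_continuousOn hc'.continuousOn
  have hct : ∀ t, Continuous (H' t) := fun t => hc'.comp (by fun_prop : Continuous fun x => (t, x))
  refine (hasDerivAt_integral_of_dominated_loc_of_deriv_le (bound := fun _ => C)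
    (F := fun t (θ : Metric.sphere (0 : EN N) 1) => H t θ)
    (F' := fun t (θ : Metric.sphere (0 : EN N) 1) => H' t θ)
    (Metric.ball_mem_nhds t one_pos)
    (Eventually.of_forall fun t => (JJ_int (hc t)).1) (JJ_int (hc t))
    (JJ_int (hct t)).1 (Eventually.of_forall fun θ s hs => ?_) (integrable_const _)
    (Eventually.of_forall fun θ s hs => hd s θ)).2
  exact hC (s, θ) ⟨Metric.ball_subset_closedBall hs, θ.2⟩

def rotL (e f : EN N) (t : ℝ) : EN N →ₗ[ℝ] EN N where
  toFun x := x + ((cos t - 1) * inner ℝ e x - sin t * inner ℝ f x) • e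
      + (sin t * inner ℝ e x + (cos t - 1) * inner ℝ f x) • f
  map_add' x y := by
    simp only [inner_add_right]; module
  map_smul' c x := by
    simp only [inner_smul_right, RingHom.id_apply]; module

theorem rotL_norm {e f : EN N} (he : ‖e‖ = 1) (hf : ‖f‖ = 1) (hef : inner ℝ e f = 0) (t : ℝ) (x : EN N) :
    ‖rotL e f t x‖ = ‖x‖ := by
  have hee : inner ℝ e e = 1 := by rw [real_inner_self_eq_norm_sq, he]; norm_num
  have hff : inner ℝ f f = 1 := by rw [real_inner_self_eq_norm_sq, hf]; norm_num
  have hfe : inner ℝ f e = 0 := by rw [real_inner_comm, hef]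
  have h : ‖rotL e f t x‖^2 = ‖x‖^2 := by
    rw [← real_inner_self_eq_norm_sq, ← real_inner_self_eq_norm_sq]
    simp only [rotL, LinearMap.coe_mk, AddHom.coe_mk, inner_add_left, inner_add_right,
      real_inner_smul_left, real_inner_smul_right, hee, hff, hef, hfe,
      real_inner_comm e x, real_inner_comm f x]
    have := sin_sq_add_cos_sq t
    linear_combination (inner ℝ e x^2 + inner ℝ f x^2) * this
  have := congrArg Real.sqrt h
  simpa using this

def rotI {e f : EN N} (he : ‖e‖ = 1) (hf : ‖f‖ = 1) (hef : inner ℝ e f = 0) (t : ℝ) :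
    EN N ≃ₗᵢ[ℝ] EN N :=
  LinearIsometry.toLinearIsometryEquiv ⟨rotL e f t, rotL_norm he hf hef t⟩ rfl

theorem JJ_rot {e f : EN N} (he : ‖e‖ = 1) (hf : ‖f‖ = 1) (hef : inner ℝ e f = 0)
    {F : EN N → ℝ} (hF : ContDiff ℝ 1 F) :
    JJ (fun x => fderiv ℝ F x (inner ℝ e x • f - inner ℝ f x • e)) = 0 := by
  let R : ℝ → EN N → EN N := fun t x => x + ((cos t - 1) * inner ℝ e x - sin t * inner ℝ f x) • e
      + (sin t * inner ℝ e x + (cos t - 1) * inner ℝ f x) • f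
  let R' : ℝ → EN N → EN N := fun t x => (-sin t * inner ℝ e x - cos t * inner ℝ f x) • e
      + (cos t * inner ℝ e x + -sin t * inner ℝ f x) • f
  have hR : ∀ t x, HasDerivAt (fun t => R t x) (R' t x) t := by
    intro t x
    have h1 := ((((hasDerivAt_cos t).sub_const 1).mul_const (inner ℝ e x)).sub
      ((hasDerivAt_sin t).mul_const (inner ℝ f x))).smul_const e
    have h2 := (((hasDerivAt_sin t).mul_const (inner ℝ e x)).add
      (((hasDerivAt_cos t).sub_const 1).mul_const (inner ℝ f x))).smul_const f
    exact (h1.const_add x).add h2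
  have hRc : Continuous (fun z : ℝ × EN N => R z.1 z.2) := by
    simp only [R]; fun_prop
  have hRc' : Continuous (fun z : ℝ × EN N => R' z.1 z.2) := by
    simp only [R']; fun_prop
  have hFc := hF.continuous
  have hF' : Continuous (fderiv ℝ F) := hF.continuous_fderiv (by simp)
  have key := JJ_deriv (H := fun t x => F (R t x)) (H' := fun t x => fderiv ℝ F (R t x) (R' t x))
    (fun t x => ((hF.differentiable (by simp) (R t x)).hasFDerivAt.comp_hasDerivAt t (hR t x)))
    (fun t => hFc.comp (hRc.comp (by fun_prop : Continuous fun x => (t, x))))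
    ((hF'.comp hRc).clm_apply hRc') 0
  have hconst : (fun t => JJ fun x => F (R t x)) = fun _ => JJ F := by
    funext t
    exact JJ_isom (rotI he hf hef t) hFc
  rw [hconst] at key
  have := key.unique (hasDerivAt_const 0 (JJ F))
  rw [← this]
  congr 1
  funext x
  simp only [R, R', cos_zero, sin_zero]
  congr 1
  · simp
  · simp; abel

end J
end PartS1

section PartS2

section pdcalc
variable {N : ℕ}

theorem fd_sum (f : EN N → ℝ) (x v : EN N) : fderiv ℝ f x v = ∑ i, v i * pd i f x := by
  conv_lhs => rw [← (EuclideanSpace.basisFun (Fin N) ℝ).sum_repr v]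
  rw [map_sum]
  simp [pd]

theorem pd_mul {f g : EN N → ℝ} (i : Fin N) {x : EN N} (hf : DifferentiableAt ℝ f x)
    (hg : DifferentiableAt ℝ g x) :
    pd i (fun y => f y * g y) x = pd i f x * g x + f x * pd i g x := by
  unfold pd; rw [fderiv_fun_mul hf hg]; simp; ring

theorem pd_add {f g : EN N → ℝ} (i : Fin N) {x : EN N} (hf : DifferentiableAt ℝ f x)
    (hg : DifferentiableAt ℝ g x) :
    pd i (fun y => f y + g y) x = pd i f x + pd i g x := by
  unfold pd; rw [fderiv_fun_add hf hg]; simp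

theorem pd_sub {f g : EN N → ℝ} (i : Fin N) {x : EN N} (hf : DifferentiableAt ℝ f x)
    (hg : DifferentiableAt ℝ g x) :
    pd i (fun y => f y - g y) x = pd i f x - pd i g x := by
  unfold pd; rw [fderiv_fun_sub hf hg]; simp

theorem pd_comp {f : EN N → ℝ} {h : ℝ → ℝ} {h' : ℝ} (i : Fin N) {x : EN N} (hf : DifferentiableAt ℝ f x)
    (hh : HasDerivAt h h' (f x)) :
    pd i (fun y => h (f y)) x = h' * pd i f x := by
  unfold pd
  rw [show (fun y => h (f y)) = h ∘ f from rfl, (hh.comp_hasFDerivAt x hf.hasFDerivAt).fderiv]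
  simp

theorem pd_smooth {f : EN N → ℝ} (hf : ContDiff ℝ (⊤ : ℕ∞) f) (i : Fin N) :
    ContDiff ℝ (⊤ : ℕ∞) (pd i f) :=
  (hf.fderiv_right (m := ((⊤ : ℕ∞) : WithTop ℕ∞)) (by simp)).clm_apply contDiff_const

theorem lap_cont {f : EN N → ℝ} (hf : ContDiff ℝ (⊤ : ℕ∞) f) : Continuous (lap f) := by
  unfold lap
  exact continuous_finsetSum _ fun i _ => (pd_smooth (pd_smooth hf i) i).continuous

theorem lap_smooth {f : EN N → ℝ} (hf : ContDiff ℝ (⊤ : ℕ∞) f) : ContDiff ℝ (⊤ : ℕ∞) (lap f) := by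
  unfold lap
  exact ContDiff.sum fun i _ => (pd_smooth (pd_smooth hf i) i)

theorem sm_diff {f : EN N → ℝ} (hf : ContDiff ℝ (⊤ : ℕ∞) f) : Differentiable ℝ f :=
  hf.differentiable (by simp)

theorem pd_mul' {f g : EN N → ℝ} (hf : ContDiff ℝ (⊤ : ℕ∞) f) (hg : ContDiff ℝ (⊤ : ℕ∞) g) (i : Fin N) :
    pd i (fun y => f y * g y) = fun x => pd i f x * g x + f x * pd i g x := by
  funext x; exact pd_mul i (sm_diff hf x) (sm_diff hg x)

theorem lap_mul {f g : EN N → ℝ} (hf : ContDiff ℝ (⊤ : ℕ∞) f) (hg : ContDiff ℝ (⊤ : ℕ∞) g) (x : EN N) :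
    lap (fun y => f y * g y) x = lap f x * g x + 2 * (∑ i, pd i f x * pd i g x) + f x * lap g x := by
  unfold lap
  rw [Finset.sum_mul, Finset.mul_sum, Finset.mul_sum, ← Finset.sum_add_distrib, ← Finset.sum_add_distrib]
  refine Finset.sum_congr rfl fun i _ => ?_
  rw [pd_mul' hf hg]
  have a := sm_diff hf x; have b := sm_diff hg x
  have c := sm_diff (pd_smooth hf i) x; have d := sm_diff (pd_smooth hg i) x
  rw [pd_add i (c.fun_mul b) (a.fun_mul d), pd_mul i c b, pd_mul i a d]
  ring

def D2 (f : EN N → ℝ) (y v : EN N) : ℝ := ∑ i, v i * fderiv ℝ (pd i f) y v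

theorem coord_smooth (i : Fin N) : ContDiff ℝ (⊤ : ℕ∞) (fun x : EN N => x i) :=
  (EuclideanSpace.proj i : EN N →L[ℝ] ℝ).contDiff

theorem fd_coord (i : Fin N) (x v : EN N) : fderiv ℝ (fun x : EN N => x i) x v = v i := by
  have := (EuclideanSpace.proj i : EN N →L[ℝ] ℝ).hasFDerivAt (x := x)
  have h2 : HasFDerivAt (fun x : EN N => x i) (EuclideanSpace.proj i : EN N →L[ℝ] ℝ) x := this
  rw [h2.fderiv]; rfl

theorem sum_sq_one {x : EN N} (hx : ‖x‖ = 1) : ∑ i, x i * x i = 1 := by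
  have := EuclideanSpace.real_norm_sq_eq x
  rw [hx] at this
  simp only [pow_two] at this
  linarith

theorem fdm {f g : EN N → ℝ} {x : EN N} (hf : DifferentiableAt ℝ f x)
    (hg : DifferentiableAt ℝ g x) (v : EN N) :
    fderiv ℝ (fun y => f y * g y) x v = fderiv ℝ f x v * g x + f x * fderiv ℝ g x v := by
  rw [fderiv_fun_mul hf hg]; simp; ring

theorem fderiv_cont {f : EN N → ℝ} (hf : ContDiff ℝ (⊤ : ℕ∞) f) : Continuous (fderiv ℝ f) :=
  hf.continuous_fderiv (by simp)

theorem JJ_div {F : EN N → ℝ} (hF : ContDiff ℝ (⊤ : ℕ∞) F) (i : Fin N) :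
    JJ (fun x => pd i F x - x i * fderiv ℝ F x x - (N - 1) * (x i * F x)) = 0 := by
  have hcF := fderiv_cont hF
  have hcc : ∀ j : Fin N, Continuous fun x : EN N => x j := fun j => (coord_smooth j).continuous
  let T : Fin N → EN N → ℝ := fun j x => fderiv ℝ (fun y => y j * F y) x
    (x i • EuclideanSpace.single j 1 - x j • EuclideanSpace.single i 1)
  have hT : ∀ j, JJ (T j) = 0 := by
    intro j
    by_cases hij : i = j
    · subst hij; simp [T, JJ]
    · have := JJ_rot (e := EuclideanSpace.single i (1:ℝ)) (f := EuclideanSpace.single j (1:ℝ)) (by simp) (by simp)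
        (by simp [EuclideanSpace.inner_single_left, hij])
        (F := fun y => y j * F y) (((coord_smooth j).mul hF).of_le (by simp))
      simpa [T, EuclideanSpace.inner_single_left] using this
  have hTc : ∀ j, Continuous (T j) := by
    intro j
    refine (fderiv_cont ((coord_smooth j).mul hF)).clm_apply ?_
    exact ((hcc i).smul continuous_const).sub ((hcc j).smul continuous_const)
  have h0 : JJ (fun x => ∑ j, T j x) = 0 := by
    rw [JJ_sum _ hTc]; simp [hT]
  have : JJ (fun x => pd i F x - x i * fderiv ℝ F x x - (N - 1) * (x i * F x)) = JJ (fun x => (-1) * ∑ j, T j x) := by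
    refine JJ_congr fun x hx => ?_
    have e1 : ∀ j, T j x = x i * F x - (if j = i then x j else 0) * F x + (x i * (x j * pd j F x) - (x j * x j) * pd i F x) := by
      intro j
      simp only [T]
      rw [fdm (sm_diff (coord_smooth j) x) (sm_diff hF x), fd_coord, map_sub, map_smul, map_smul]
      simp only [pd, smul_eq_mul]
      by_cases hij : i = j
      · subst hij; simp; ring
      · have : ¬ j = i := fun h => hij h.symm
        simp [this]
        ring
    rw [Finset.sum_congr rfl fun j _ => e1 j]
    rw [Finset.sum_add_distrib, Finset.sum_sub_distrib, Finset.sum_sub_distrib, ← Finset.sum_mul, ← Finset.sum_mul, ← Finset.sum_mul, ← Finset.mul_sum (f := fun j => x j * pd j F x), ← fd_sum,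
      sum_sq_one hx]
    simp
    ring
  rw [this, JJ_cmul, h0, mul_zero]

theorem JJ_green {ψ P : EN N → ℝ} (hψ : ContDiff ℝ (⊤ : ℕ∞) ψ) (hP : ContDiff ℝ (⊤ : ℕ∞) P) :
    JJ (fun x => (lap ψ x * P x - ψ x * lap P x) - (D2 ψ x x * P x - ψ x * D2 P x x)
      - (N - 1) * (fderiv ℝ ψ x x * P x - ψ x * fderiv ℝ P x x)) = 0 := by
  let F : Fin N → EN N → ℝ := fun i x => pd i ψ x * P x - ψ x * pd i P x
  have hF : ∀ i, ContDiff ℝ (⊤ : ℕ∞) (F i) := fun i =>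
    ((pd_smooth hψ i).mul hP).sub (hψ.mul (pd_smooth hP i))
  have hsum := JJ_sum (N := N) Finset.univ (F := fun i x => pd i (F i) x - x i * fderiv ℝ (F i) x x - (N - 1) * (x i * F i x))
    (fun i => (((pd_smooth (hF i) i).continuous.sub ((coord_smooth i).continuous.mul
      ((fderiv_cont (hF i)).clm_apply continuous_id))).sub
      (continuous_const.mul ((coord_smooth i).continuous.mul (hF i).continuous))))
  rw [Finset.sum_congr rfl fun i _ => JJ_div (hF i) i, Finset.sum_const_zero] at hsum
  rw [← hsum]
  congr 1
  funext x
  have a := sm_diff hψ x; have b := sm_diff hP x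
  have e1 : ∀ i v, fderiv ℝ (F i) x v = fderiv ℝ (pd i ψ) x v * P x + pd i ψ x * fderiv ℝ P x v
      - (fderiv ℝ ψ x v * pd i P x + ψ x * fderiv ℝ (pd i P) x v) := by
    intro i v
    have c := sm_diff (pd_smooth hψ i) x; have d := sm_diff (pd_smooth hP i) x
    simp only [F]
    rw [fderiv_fun_sub (c.fun_mul b) (a.fun_mul d), sub_apply, fdm c b, fdm a d]
  have e2 : ∀ i, pd i (F i) x = pd i (pd i ψ) x * P x - ψ x * pd i (pd i P) x := by
    intro i
    have := e1 i (EuclideanSpace.single i 1)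
    unfold pd at this ⊢
    rw [this]; ring
  simp only [e1, e2, F, lap, D2]
  rw [fd_sum ψ x x, fd_sum P x x]
  simp only [Finset.sum_sub_distrib, Finset.sum_mul, Finset.mul_sum, mul_add, mul_sub, Finset.sum_add_distrib]
  rw [Finset.sum_comm (f := fun i j => x i * (x j * pd j ψ x * pd i P x))]
  have e3 : ∑ x_1, ∑ x_2, x x_1 * (pd x_1 ψ x * (x x_2 * pd x_2 P x)) = ∑ y, ∑ x_1, x x_1 * (x y * pd y ψ x * pd x_1 P x) :=
    Finset.sum_congr rfl fun i _ => Finset.sum_congr rfl fun j _ => by ring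
  rw [e3]
  simp only [mul_comm, mul_assoc, mul_left_comm]
  ring

end pdcalc
end PartS2

section PartS3

section mom
variable {N : ℕ}

def mom (φ : EN N → ℝ) (a : EN N) (k : ℕ) (r : ℝ) : ℝ := JJ (fun x => φ (r • x) * (inner ℝ a x)^k)
def mom1 (φ : EN N → ℝ) (a : EN N) (k : ℕ) (r : ℝ) : ℝ := JJ (fun x => fderiv ℝ φ (r • x) x * (inner ℝ a x)^k)
def mom2 (φ : EN N → ℝ) (a : EN N) (k : ℕ) (r : ℝ) : ℝ := JJ (fun x => D2 φ (r • x) x * (inner ℝ a x)^k)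

variable {φ : EN N → ℝ} (a : EN N) (k : ℕ)

theorem D2_cont (hφ : ContDiff ℝ (⊤ : ℕ∞) φ) {X : Type*} [TopologicalSpace X] {f g : X → EN N} (hf : Continuous f) (hg : Continuous g) :
    Continuous (fun z => D2 φ (f z) (g z)) := by
  unfold D2
  refine continuous_finsetSum _ fun i _ => ((coord_smooth i).continuous.comp hg).mul ?_
  exact ((fderiv_cont (pd_smooth hφ i)).comp hf).clm_apply hg

theorem mom_deriv (hφ : ContDiff ℝ (⊤ : ℕ∞) φ) (r : ℝ) : HasDerivAt (mom φ a k) (mom1 φ a k r) r := by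
  have h1 := hφ.continuous
  have h2 := fderiv_cont hφ
  refine JJ_deriv (H := fun r x => φ (r • x) * (inner ℝ a x)^k) (H' := fun r x => fderiv ℝ φ (r • x) x * (inner ℝ a x)^k) (fun t x => ?_) (fun t => by fun_prop) (by fun_prop) r
  have : HasDerivAt (fun t : ℝ => t • x) x t := by simpa using (hasDerivAt_id t).smul_const x
  exact ((sm_diff hφ (t • x)).hasFDerivAt.comp_hasDerivAt t this).mul_const _

theorem mom1_deriv (hφ : ContDiff ℝ (⊤ : ℕ∞) φ) (r : ℝ) : HasDerivAt (mom1 φ a k) (mom2 φ a k r) r := by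
  have h2 := fderiv_cont hφ
  refine JJ_deriv (H := fun r x => fderiv ℝ φ (r • x) x * (inner ℝ a x)^k) (H' := fun r x => D2 φ (r • x) x * (inner ℝ a x)^k) (fun t x => ?_) (fun t => by fun_prop)
    ((D2_cont hφ (f := fun z : ℝ × EN N => z.1 • z.2) (g := fun z => z.2) (by fun_prop) (by fun_prop)).mul (by fun_prop)) r
  have : HasDerivAt (fun t : ℝ => t • x) x t := by simpa using (hasDerivAt_id t).smul_const x
  refine HasDerivAt.mul_const ?_ _
  simp only [fd_sum φ, D2]
  refine HasDerivAt.fun_sum fun i _ => ?_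
  exact ((sm_diff (pd_smooth hφ i) (t • x)).hasFDerivAt.comp_hasDerivAt t this).const_mul _

theorem fderiv_scale (hφ : ContDiff ℝ (⊤ : ℕ∞) φ) (r : ℝ) (x v : EN N) :
    fderiv ℝ (fun y => φ (r • y)) x v = r * fderiv ℝ φ (r • x) v := by
  have h : HasFDerivAt (fun y : EN N => r • y) (r • ContinuousLinearMap.id ℝ (EN N)) x :=
    (hasFDerivAt_id x).const_smul r
  have := (sm_diff hφ (r • x)).hasFDerivAt.comp x h
  rw [show (fun y => φ (r • y)) = φ ∘ (fun y => r • y) from rfl, this.fderiv]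
  simp

theorem pd_scale (hφ : ContDiff ℝ (⊤ : ℕ∞) φ) (r : ℝ) (i : Fin N) :
    pd i (fun y => φ (r • y)) = fun x => r * pd i φ (r • x) := by
  funext x; exact fderiv_scale hφ r x _

theorem fderiv_cmul' {f : EN N → ℝ} {x : EN N} (hf : DifferentiableAt ℝ f x) (c : ℝ) (v : EN N) :
    fderiv ℝ (fun y => c * f y) x v = c * fderiv ℝ f x v := by
  rw [fderiv_const_mul hf]; simp

theorem scale_smooth (hφ : ContDiff ℝ (⊤ : ℕ∞) φ) (r : ℝ) : ContDiff ℝ (⊤ : ℕ∞) (fun y => φ (r • y)) :=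
  hφ.comp (contDiff_const_smul r)

theorem fderiv_pd_scale (hφ : ContDiff ℝ (⊤ : ℕ∞) φ) (r : ℝ) (i : Fin N) (x v : EN N) :
    fderiv ℝ (pd i (fun y => φ (r • y))) x v = r^2 * fderiv ℝ (pd i φ) (r • x) v := by
  rw [pd_scale hφ, fderiv_cmul' (sm_diff (scale_smooth (pd_smooth hφ i) r) x), fderiv_scale (pd_smooth hφ i)]
  ring

theorem lap_scale (hφ : ContDiff ℝ (⊤ : ℕ∞) φ) (r : ℝ) (x : EN N) :
    lap (fun y => φ (r • y)) x = r^2 * lap φ (r • x) := by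
  unfold lap
  rw [Finset.mul_sum]
  exact Finset.sum_congr rfl fun i _ => fderiv_pd_scale hφ r i x _

theorem D2_scale (hφ : ContDiff ℝ (⊤ : ℕ∞) φ) (r : ℝ) (x v : EN N) :
    D2 (fun y => φ (r • y)) x v = r^2 * D2 φ (r • x) v := by
  unfold D2
  rw [Finset.mul_sum]
  exact Finset.sum_congr rfl fun i _ => by rw [fderiv_pd_scale hφ r i x v]; ring

theorem P_smooth : ContDiff ℝ (⊤ : ℕ∞) (fun x : EN N => (inner ℝ a x)^k) :=
  (contDiff_const.inner ℝ contDiff_id).pow k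

theorem fd_P (x v : EN N) : fderiv ℝ (fun x : EN N => (inner ℝ a x)^k) x v = k * (inner ℝ a x)^(k-1) * inner ℝ a v := by
  have h : HasFDerivAt (fun x : EN N => inner ℝ a x) (innerSL ℝ a) x := (innerSL ℝ a).hasFDerivAt
  rw [(h.pow k).fderiv]
  simp

theorem pd_P (i : Fin N) : pd i (fun x : EN N => (inner ℝ a x)^k) = fun x => (k * a i) * (inner ℝ a x)^(k-1) := by
  funext x
  unfold pd
  rw [fd_P]
  simp [EuclideanSpace.inner_single_right]; ring

theorem fd_pd_P (i : Fin N) (x v : EN N) : fderiv ℝ (pd i (fun x : EN N => (inner ℝ a x)^k)) x v =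
    (k * ((k : ℝ) - 1) * a i) * (inner ℝ a x)^(k-2) * inner ℝ a v := by
  rw [pd_P, fderiv_cmul' (sm_diff (P_smooth a (k-1)) x), fd_P]
  rcases k with _ | k
  · simp
  · simp; ring_nf

theorem inner_eq_sum (x : EN N) : inner ℝ a x = ∑ i, x i * a i := by
  simp [PiLp.inner_apply]

theorem lap_P (x : EN N) : lap (fun x : EN N => (inner ℝ a x)^k) x = (k * ((k : ℝ) - 1) * ‖a‖^2) * (inner ℝ a x)^(k-2) := by
  unfold lap
  have : ∀ i, pd i (pd i (fun x : EN N => (inner ℝ a x)^k)) x = (k * ((k : ℝ) - 1) * (inner ℝ a x)^(k-2)) * (a i)^2 := by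
    intro i
    have := fd_pd_P a k i x (EuclideanSpace.single i 1)
    unfold pd at this ⊢
    rw [this]
    simp [EuclideanSpace.inner_single_right]; ring
  rw [Finset.sum_congr rfl fun i _ => this i, ← Finset.mul_sum, ← EuclideanSpace.real_norm_sq_eq]
  ring

theorem D2_P (x : EN N) : D2 (fun x : EN N => (inner ℝ a x)^k) x x = k * ((k : ℝ) - 1) * (inner ℝ a x)^k := by
  unfold D2
  have : ∀ i, x i * fderiv ℝ (pd i (fun x : EN N => (inner ℝ a x)^k)) x x = (k * ((k : ℝ) - 1) * (inner ℝ a x)^(k-2) * inner ℝ a x) * (x i * a i) := by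
    intro i
    rw [fd_pd_P]; ring
  rw [Finset.sum_congr rfl fun i _ => this i, ← Finset.mul_sum, ← inner_eq_sum]
  rcases k with _ | _ | k
  · simp
  · simp
  · simp; ring

theorem Eu_P (x : EN N) : fderiv ℝ (fun x : EN N => (inner ℝ a x)^k) x x = k * (inner ℝ a x)^k := by
  rw [fd_P]
  rcases k with _ | k
  · simp
  · simp; ring

theorem mom_id (hφ : ContDiff ℝ (⊤ : ℕ∞) φ) {r : ℝ} (hr : r ≠ 0) :
    mom (lap φ) a k r = mom2 φ a k r + (N - 1) / r * mom1 φ a k r - k * (k + N - 2) / r^2 * mom φ a k r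
      + k * (k - 1) * ‖a‖^2 / r^2 * mom φ a (k-2) r := by
  have h := JJ_green (scale_smooth hφ r) (P_smooth a k)
  have hl := lap_cont hφ
  have hc := hφ.continuous
  have hf := fderiv_cont hφ
  have hD : Continuous fun x => D2 φ (r • x) x := D2_cont hφ (by fun_prop) continuous_id
  simp only [lap_scale hφ, lap_P, D2_scale hφ, D2_P, Eu_P, fderiv_scale hφ] at h
  have e : (fun x : EN N => r ^ 2 * lap φ (r • x) * inner ℝ a x ^ k - φ (r • x) * (↑k * (↑k - 1) * ‖a‖ ^ 2 * inner ℝ a x ^ (k - 2)) -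
          (r ^ 2 * D2 φ (r • x) x * inner ℝ a x ^ k - φ (r • x) * (↑k * (↑k - 1) * inner ℝ a x ^ k)) -
        (↑N - 1) * (r * (fderiv ℝ φ (r • x)) x * inner ℝ a x ^ k - φ (r • x) * (↑k * inner ℝ a x ^ k)))
     = fun x : EN N => r^2 * (lap φ (r • x) * inner ℝ a x ^ k) - (k * (k-1) * ‖a‖^2) * (φ (r • x) * inner ℝ a x ^ (k-2))
        - r^2 * (D2 φ (r • x) x * inner ℝ a x ^ k) + (k * (k + N - 2)) * (φ (r • x) * inner ℝ a x ^ k)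
        - ((N - 1) * r) * (fderiv ℝ φ (r • x) x * inner ℝ a x ^ k) := by
    funext x; ring
  rw [e, JJ_sub (by fun_prop) (by fun_prop), JJ_add (by fun_prop) (by fun_prop), JJ_sub (by fun_prop) (by fun_prop),
    JJ_sub (by fun_prop) (by fun_prop), JJ_cmul, JJ_cmul, JJ_cmul, JJ_cmul, JJ_cmul] at h
  change r^2 * mom (lap φ) a k r - _ * mom φ a (k-2) r - r^2 * mom2 φ a k r + _ * mom φ a k r - _ * mom1 φ a k r = 0 at h
  field_simp
  linear_combination h

theorem JP_odd (hk : Odd k) : JJ (fun x : EN N => (inner ℝ a x)^k) = 0 := by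
  have h := JJ_neg (F := fun x : EN N => (inner ℝ a x)^k) (by fun_prop)
  have e : (fun x : EN N => (inner ℝ a (-x))^k) = fun x => (-1) * (inner ℝ a x)^k := by
    funext x; rw [inner_neg_right, hk.neg_pow]; ring
  rw [e, JJ_cmul] at h
  linarith

theorem mom_zero : mom φ a k 0 = φ 0 * JJ (fun x : EN N => (inner ℝ a x)^k) := by
  unfold mom; simp only [zero_smul]; exact JJ_cmul _ _

theorem mom1_zero_even (hk : Even k) : mom1 φ a k 0 = 0 := by
  unfold mom1
  have h := JJ_neg (F := fun x : EN N => fderiv ℝ φ ((0:ℝ) • x) x * (inner ℝ a x)^k) (by simp only [zero_smul]; fun_prop)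
  have e : (fun x : EN N => fderiv ℝ φ ((0:ℝ) • (-x)) (-x) * (inner ℝ a (-x))^k) = fun x => (-1) * (fderiv ℝ φ ((0:ℝ) • x) x * (inner ℝ a x)^k) := by
    funext x; rw [inner_neg_right, hk.neg_pow, map_neg]; simp
  rw [e, JJ_cmul] at h
  linarith

theorem mom_sub {φ ψ : EN N → ℝ} (hφ : Continuous φ) (hψ : Continuous ψ) (r : ℝ) :
    mom (fun x => φ x - ψ x) a k r = mom φ a k r - mom ψ a k r := by
  unfold mom
  rw [← JJ_sub (by fun_prop) (by fun_prop)]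
  congr 1; funext x; ring

theorem mom_rad {φ h : EN N → ℝ} {H : ℝ → ℝ} {r : ℝ} (hr : 0 ≤ r) (hh : ∀ x, ‖x‖ = r → h x = H r) :
    mom (fun x => h x * φ x) a k r = H r * mom φ a k r := by
  unfold mom
  rw [← JJ_cmul]
  refine JJ_congr fun x hx => ?_
  beta_reduce
  rw [hh (r • x) (by rw [norm_smul, hx, Real.norm_of_nonneg hr, mul_one])]; ring

end mom
end PartS3

section PartS4

section polar
variable {N : ℕ}

theorem JJ_nonneg {F : EN N → ℝ} (h : ∀ x, 0 ≤ F x) : 0 ≤ JJ F := integral_nonneg fun θ => h θ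

theorem polar_int (hN : 1 ≤ N) {f : EN N → ℝ} (hf : Integrable f) :
    IntegrableOn (fun r : ℝ => r^(N-1) * JJ (fun x => f (r • x))) (Set.Ioi 0) := by
  have : Nonempty (Fin N) := ⟨⟨0, hN⟩⟩
  have hmp := (volume : Measure (EN N)).measurePreserving_homeomorphUnitSphereProd
  have h1 := hmp.integrable_comp_emb (g := fun z : Metric.sphere (0 : EN N) 1 × Set.Ioi (0:ℝ) => f ((z.2 : ℝ) • (z.1 : EN N)))
    (Homeomorph.measurableEmbedding _)
  have h2 : Integrable (fun x : ({0}ᶜ : Set (EN N)) => f x) ((volume : Measure (EN N)).comap (↑)) := by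
    have := hf.integrableOn (s := ({0}ᶜ : Set (EN N)))
    rwa [integrableOn_iff_comap_subtypeVal (by measurability)] at this
  have h3 := h1.1 (by
    refine h2.congr (Eventually.of_forall fun x => ?_)
    simp only [Function.comp]
    congr 1
    have hx : ‖(x : EN N)‖ ≠ 0 := norm_ne_zero_iff.2 x.2
    simp [smul_smul, hx])
  have h4 := h3.integral_prod_right
  rw [integrableOn_iff_comap_subtypeVal measurableSet_Ioi]
  rw [Measure.volumeIoiPow, integrable_withDensity_iff_integrable_smul' (by fun_prop) (by simp)] at h4
  refine h4.congr (Eventually.of_forall ?_)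
  rintro ⟨x, hx : 0 < x⟩
  simp (disch := positivity) [ENNReal.toReal_ofReal, JJ]

theorem mom_sq_le {φ : EN N → ℝ} (hφ : Continuous φ) (a : EN N) (k : ℕ) (r : ℝ) :
    mom φ a k r ^ 2 ≤ (JJ (fun x : EN N => ((inner ℝ a x)^k)^2) + 1) * JJ (fun x => φ (r • x) ^ 2) := by
  set C := JJ (fun x : EN N => ((inner ℝ a x)^k)^2)
  set A := JJ (fun x => φ (r • x) ^ 2)
  have hC : 0 ≤ C := JJ_nonneg fun x => sq_nonneg _
  have key : ∀ t : ℝ, 0 ≤ A - (2 * t) * mom φ a k r + t^2 * C := by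
    intro t
    have h : 0 ≤ JJ (fun x : EN N => (φ (r • x) - t * (inner ℝ a x)^k)^2) := JJ_nonneg fun x => sq_nonneg _
    have e : (fun x : EN N => (φ (r • x) - t * (inner ℝ a x)^k)^2) = fun x : EN N =>
      φ (r • x)^2 - (2 * t) * (φ (r • x) * (inner ℝ a x)^k) + t^2 * (((inner ℝ a x)^k)^2) := by
      funext x; ring
    rw [e, JJ_add (by fun_prop) (by fun_prop), JJ_sub (by fun_prop) (by fun_prop), JJ_cmul, JJ_cmul] at h
    exact h
  have h := key (mom φ a k r / (C + 1))
  set m := mom φ a k r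
  have e : A - (2 * (m / (C+1))) * m + (m/(C+1))^2 * C = A - m^2/(C+1) - m^2/(C+1)^2 := by
    field_simp; ring
  rw [e] at h
  have h1 : 0 ≤ m^2/(C+1)^2 := by positivity
  have h2 : m^2/(C+1) ≤ A := by linarith
  rw [div_le_iff₀ (by positivity)] at h2
  linarith

theorem mom_int (hN : 1 ≤ N) {φ : EN N → ℝ} (hφ : ContDiff ℝ (⊤ : ℕ∞) φ) (hi : Integrable (fun x => φ x ^ 2))
    (a : EN N) (k : ℕ) : IntegrableOn (fun r : ℝ => r^(N-1) * mom φ a k r ^ 2) (Set.Ioi 0) := by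
  have h := (polar_int hN hi).const_mul (JJ (fun x : EN N => ((inner ℝ a x)^k)^2) + 1)
  have hm : Continuous (mom φ a k) := continuous_iff_continuousAt.2 fun r => (mom_deriv a k hφ r).continuousAt
  refine h.mono' (by fun_prop) ?_
  filter_upwards [ae_restrict_mem measurableSet_Ioi] with r (hr : 0 < r)
  rw [Real.norm_of_nonneg (by positivity)]
  have := mom_sq_le hφ.continuous a k r
  have h0 : 0 ≤ r^(N-1) := by positivity
  nlinarith [mul_le_mul_of_nonneg_left this h0]


abbrev SN (N : ℕ) := Metric.sphere (0 : EN N) 1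

def expM (N : ℕ) : Multiplicative (EN N) →* C(SN N, ℝ) where
  toFun a := ⟨fun θ => Real.exp (inner ℝ a.toAdd (θ : EN N)), by fun_prop⟩
  map_one' := by ext θ; simp
  map_mul' a b := by ext θ; simp [inner_add_left, Real.exp_add]

theorem exp_zero_of {f : SN N → ℝ} (hf : Continuous f)
    (h : ∀ (a : EN N) (k : ℕ), ∫ θ : SN N, f θ * (inner ℝ a (θ : EN N))^k ∂(volume : Measure (EN N)).toSphere = 0) (a : EN N) :
    ∫ θ : SN N, f θ * Real.exp (inner ℝ a (θ : EN N)) ∂(volume : Measure (EN N)).toSphere = 0 := by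
  obtain ⟨C, hC⟩ := isCompact_univ.exists_bound_of_continuousOn hf.continuousOn
  have hint : ∀ {g : SN N → ℝ}, Continuous g → Integrable g (volume : Measure (EN N)).toSphere := fun hg =>
    hg.integrable_of_hasCompactSupport (HasCompactSupport.of_compactSpace _)
  let F : ℕ → SN N → ℝ := fun k θ => f θ * ((inner ℝ a (θ : EN N))^k / (k.factorial : ℝ))
  have hFc : ∀ k, Continuous (F k) := fun k => by simp only [F]; fun_prop
  have hb : ∀ k θ, ‖F k θ‖ ≤ |C| * (‖a‖^k / (k.factorial : ℝ)) := by
    intro k θ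
    have hθ : ‖(θ : EN N)‖ = 1 := by simp
    have h1 : |inner ℝ a (θ : EN N)| ≤ ‖a‖ := by
      have := abs_real_inner_le_norm a (θ : EN N); rwa [hθ, mul_one] at this
    simp only [F, norm_mul, norm_div, norm_pow, Real.norm_eq_abs, Nat.abs_cast]
    have h2 : |f θ| ≤ |C| := (hC θ trivial).trans (le_abs_self C)
    gcongr
  have hs : Summable fun k => ∫ θ, ‖F k θ‖ ∂(volume : Measure (EN N)).toSphere := by
    refine Summable.of_nonneg_of_le (fun k => integral_nonneg fun _ => norm_nonneg _) (fun k => ?_)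
      (((Real.summable_pow_div_factorial ‖a‖).mul_left |C|).mul_right ((volume : Measure (EN N)).toSphere.real Set.univ))
    have := norm_integral_le_of_norm_le_const (μ := (volume : Measure (EN N)).toSphere) (f := fun θ => ‖F k θ‖)
      (C := |C| * (‖a‖^k / (k.factorial : ℝ))) (Eventually.of_forall fun θ => by simpa using hb k θ)
    exact (le_abs_self _).trans this
  have hh := hasSum_integral_of_summable_integral_norm (fun k => hint (hFc k)) hs
  have h0 : ∀ k, ∫ θ, F k θ ∂(volume : Measure (EN N)).toSphere = 0 := by
    intro k
    have : F k = fun θ => (f θ * (inner ℝ a (θ : EN N))^k) * (k.factorial : ℝ)⁻¹ := by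
      funext θ; simp only [F]; ring
    rw [this, integral_mul_const, h a k, zero_mul]
  simp only [h0] at hh
  have h1 := hh.unique hasSum_zero
  rw [← h1]
  congr 1
  funext θ
  simp only [F]
  rw [tsum_mul_left, Real.exp_eq_exp_ℝ, NormedSpace.exp_eq_tsum_div]

theorem sphere_complete {f : SN N → ℝ} (hf : Continuous f)
    (h : ∀ (a : EN N) (k : ℕ), ∫ θ : SN N, f θ * (inner ℝ a (θ : EN N))^k ∂(volume : Measure (EN N)).toSphere = 0) : f = 0 := by
  have he := exp_zero_of hf h
  have hint : ∀ {g : SN N → ℝ}, Continuous g → Integrable g (volume : Measure (EN N)).toSphere := fun hg =>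
    hg.integrable_of_hasCompactSupport (HasCompactSupport.of_compactSpace _)
  set A := Algebra.adjoin ℝ ((MonoidHom.mrange (expM N) : Submonoid C(SN N, ℝ)) : Set C(SN N, ℝ)) with hA
  have hAz : ∀ g ∈ A, ∫ θ, f θ * g θ ∂(volume : Measure (EN N)).toSphere = 0 := by
    intro g hg
    have : g ∈ Submodule.span ℝ ((MonoidHom.mrange (expM N) : Submonoid C(SN N, ℝ)) : Set C(SN N, ℝ)) := by
      have := Algebra.adjoin_eq_span (R := ℝ) ((MonoidHom.mrange (expM N) : Submonoid C(SN N, ℝ)) : Set C(SN N, ℝ))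
      rw [Submonoid.closure_eq] at this
      rw [← this]; exact hg
    clear hg
    induction this using Submodule.span_induction with
    | mem x hx =>
      obtain ⟨a, rfl⟩ := hx
      exact he a.toAdd
    | zero => simp
    | add x y _ _ hx hy =>
      simp only [ContinuousMap.add_apply, mul_add]
      rw [integral_add (hint (by fun_prop)) (hint (by fun_prop)), hx, hy, add_zero]
    | smul c x _ hx => 
      have : (fun θ => f θ * (c • x) θ) = fun θ => c * (f θ * x θ) := by
        funext θ; simp; ring
      rw [this, integral_const_mul, hx, mul_zero]
  have hsep : A.SeparatesPoints := by
    intro x y hxy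
    refine ⟨_, ⟨expM N (Multiplicative.ofAdd ((x : EN N) - y)), Algebra.subset_adjoin ⟨_, rfl⟩, rfl⟩, ?_⟩
    simp only [expM, MonoidHom.coe_mk, OneHom.coe_mk, ContinuousMap.coe_mk, toAdd_ofAdd]
    intro he
    have he := Real.exp_injective he
    have h1 : inner ℝ ((x : EN N) - y) ((x : EN N) - y) = 0 := by
      rw [inner_sub_right (𝕜 := ℝ), he, sub_self]
    have h2 := inner_self_eq_zero.1 h1
    exact hxy (Subtype.ext (sub_eq_zero.1 h2))
  obtain ⟨C, hC⟩ := isCompact_univ.exists_bound_of_continuousOn hf.continuousOn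
  have hsq : ∫ θ, f θ * f θ ∂(volume : Measure (EN N)).toSphere ≤ 0 := by
    refine le_of_forall_pos_le_add fun ε hε => ?_
    set K := |C| * (volume : Measure (EN N)).toSphere.real Set.univ + 1
    have hK : 0 < K := by positivity
    obtain ⟨g, hg⟩ := ContinuousMap.exists_mem_subalgebra_near_continuous_of_separatesPoints A hsep f hf (ε / K) (by positivity)
    have e : ∫ θ, f θ * f θ ∂(volume : Measure (EN N)).toSphere =
        ∫ θ, f θ * (f θ - (g : C(SN N, ℝ)) θ) ∂(volume : Measure (EN N)).toSphere := by
      simp only [mul_sub]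
      rw [integral_sub (hint (by fun_prop)) (hint (by fun_prop)), hAz _ g.2, sub_zero]
    rw [e, zero_add]
    have := norm_integral_le_of_norm_le_const (μ := (volume : Measure (EN N)).toSphere)
      (f := fun θ => f θ * (f θ - (g : C(SN N, ℝ)) θ)) (C := |C| * (ε / K)) (Eventually.of_forall fun θ => by
        rw [norm_mul]
        have h1 := hg θ
        rw [norm_sub_rev] at h1
        exact mul_le_mul ((hC θ trivial).trans (le_abs_self _)) h1.le (norm_nonneg _) (abs_nonneg _))
    refine (le_abs_self _).trans (this.trans ?_)
    have h3 : |C| * (ε / K) * (volume : Measure (EN N)).toSphere.real Set.univ = (K - 1) * (ε / K) := by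
      simp only [K]; ring
    rw [h3, sub_mul, mul_div_cancel₀ _ hK.ne']
    have : 0 < ε / K := by positivity
    linarith
  have h0 : ∫ θ, f θ * f θ ∂(volume : Measure (EN N)).toSphere = 0 :=
    le_antisymm hsq (integral_nonneg fun θ => mul_self_nonneg _)
  rw [integral_eq_zero_iff_of_nonneg (fun θ => mul_self_nonneg _) (hint (hf.mul hf))] at h0
  have h1 := (Continuous.ae_eq_iff_eq _ (hf.mul hf) (by exact continuous_const)).1 h0
  funext θ
  have := congrFun h1 θ
  simpa using this

theorem mom_complete {φ : EN N → ℝ} (hφ : Continuous φ) {r : ℝ} (h : ∀ a k, mom φ a k r = 0) {x : EN N} (hx : ‖x‖ = 1) :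
    φ (r • x) = 0 := by
  have := sphere_complete (f := fun θ : SN N => φ (r • (θ : EN N))) (by fun_prop) h
  exact congrFun this ⟨x, by simpa using hx⟩

end polar
end PartS4

section PartS5

section lin
variable {N : ℕ}

theorem mom_cont {φ : EN N → ℝ} (hφ : ContDiff ℝ (⊤ : ℕ∞) φ) (a : EN N) (k : ℕ) : Continuous (mom φ a k) :=
  continuous_iff_continuousAt.2 fun r => (mom_deriv a k hφ r).continuousAt
theorem mom1_cont {φ : EN N → ℝ} (hφ : ContDiff ℝ (⊤ : ℕ∞) φ) (a : EN N) (k : ℕ) : Continuous (mom1 φ a k) :=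
  continuous_iff_continuousAt.2 fun r => (mom1_deriv a k hφ r).continuousAt

theorem mom_ode (hN : 1 ≤ N) {φ : EN N → ℝ} {Q : ℝ → ℝ} (hφ : ContDiff ℝ (⊤ : ℕ∞) φ)
    (hQ : ∀ x : EN N, x ≠ 0 → lap φ x = - (Q ‖x‖ * φ x)) (a : EN N) (k : ℕ)
    (hk : k ≤ 1 ∨ ∀ r, 0 < r → mom φ a (k-2) r = 0) (r : ℝ) (hr : 0 < r) :
    HasDerivAt (mom1 φ a k) (-(((N-1 : ℕ) : ℝ) / r) * mom1 φ a k r + ((k:ℝ) * (k + N - 2)) / r^2 * mom φ a k r - Q r * mom φ a k r) r := by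
  have h := mom1_deriv a k hφ r
  have h2 := mom_id a k hφ hr.ne'
  have h3 : mom (lap φ) a k r = (- Q r) * mom φ a k r := by
    unfold mom
    rw [← JJ_cmul]
    refine JJ_congr fun x hx => ?_
    have hx0 : r • x ≠ 0 := smul_ne_zero hr.ne' (by intro h; simp [h] at hx)
    rw [hQ _ hx0, norm_smul, hx, Real.norm_of_nonneg hr.le, mul_one]; ring
  have h4 : (k:ℝ) * (k - 1) * ‖a‖^2 / r^2 * mom φ a (k-2) r = 0 := by
    rcases hk with hk | hk
    · interval_cases k <;> simp
    · rw [hk r hr, mul_zero]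
  refine h.congr_deriv ?_
  rw [h3, h4] at h2
  push_cast [Nat.cast_sub hN]
  linear_combination -h2

theorem bdryA {φ : EN N → ℝ} (hφ : ContDiff ℝ (⊤ : ℕ∞) φ) (a : EN N) (k n : ℕ) {w w1 : ℝ → ℝ}
    (hw : Tendsto (fun r => w1 r / w r) (𝓝[>] 0) (𝓝 0)) :
    Tendsto (fun r => r^n*(mom φ a k r*mom1 φ a k r - mom φ a k r^2*(w1 r/w r))) (𝓝[>] 0) (𝓝 0) := by
  have c0 : Tendsto (mom φ a k) (𝓝[>] 0) (𝓝 (mom φ a k 0)) := (mom_cont hφ a k).continuousAt.continuousWithinAt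
  have c1 : Tendsto (mom1 φ a k) (𝓝[>] 0) (𝓝 (mom1 φ a k 0)) := (mom1_cont hφ a k).continuousAt.continuousWithinAt
  have cp : Tendsto (fun r : ℝ => r^n) (𝓝[>] 0) (𝓝 (0^n)) := (continuous_pow n).continuousAt.continuousWithinAt
  have h0 : mom φ a k 0 * mom1 φ a k 0 = 0 := by
    rcases Nat.even_or_odd k with h | h
    · rw [mom1_zero_even a k h, mul_zero]
    · rw [mom_zero, JP_odd a k h]; simp
  have := cp.mul ((c0.mul c1).sub ((c0.pow 2).mul hw))
  simpa [h0] using this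

theorem bdryB {φ : EN N → ℝ} (hφ : ContDiff ℝ (⊤ : ℕ∞) φ) (a : EN N) (k n : ℕ) {w w1 : ℝ → ℝ}
    (hm : mom φ a k 0 = 0) (hw : Tendsto (fun r => r * w1 r / w r) (𝓝[>] 0) (𝓝 1)) :
    Tendsto (fun r => r^n*(mom φ a k r*mom1 φ a k r - mom φ a k r^2*(w1 r/w r))) (𝓝[>] 0) (𝓝 0) := by
  have c0 : Tendsto (mom φ a k) (𝓝[>] 0) (𝓝 (mom φ a k 0)) := (mom_cont hφ a k).continuousAt.continuousWithinAt
  have c1 : Tendsto (mom1 φ a k) (𝓝[>] 0) (𝓝 (mom1 φ a k 0)) := (mom1_cont hφ a k).continuousAt.continuousWithinAt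
  have cp : Tendsto (fun r : ℝ => r^n) (𝓝[>] 0) (𝓝 (0^n)) := (continuous_pow n).continuousAt.continuousWithinAt
  have cs : Tendsto (fun r => r⁻¹ * mom φ a k r) (𝓝[>] 0) (𝓝 (mom1 φ a k 0)) := by
    have := (mom_deriv a k hφ 0).tendsto_slope_zero_right
    simpa [hm] using this
  rw [hm] at c0
  have := cp.mul (c0.mul (c1.sub (cs.mul hw)))
  rw [zero_mul, mul_zero] at this
  refine this.congr' ?_
  filter_upwards [self_mem_nhdsWithin] with r (hr : 0 < r)
  field_simp

theorem JJ_one_pos (hN : 1 ≤ N) : 0 < JJ (fun _ : EN N => 1) := by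
  have : Nonempty (Fin N) := ⟨⟨0, hN⟩⟩
  unfold JJ
  simp only [integral_const, smul_eq_mul, mul_one]
  refine (measureReal_nonneg).lt_of_ne' ?_
  intro h
  rw [measureReal_eq_zero_iff, Measure.measure_univ_eq_zero] at h
  exact Measure.toSphere_ne_zero (volume : Measure (EN N)) h

theorem zero_of_moms (hN : 1 ≤ N) {φ : EN N → ℝ} (hφ : ContDiff ℝ (⊤ : ℕ∞) φ)
    (h : ∀ a k r, 0 < r → mom φ a k r = 0) (x : EN N) : φ x = 0 := by
  have h0 : ∀ a k, mom φ a k 0 = 0 := by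
    intro a k
    have c0 : Tendsto (mom φ a k) (𝓝[>] 0) (𝓝 (mom φ a k 0)) := (mom_cont hφ a k).continuousAt.continuousWithinAt
    refine tendsto_nhds_unique c0 (tendsto_const_nhds.congr' ?_)
    filter_upwards [self_mem_nhdsWithin] with r (hr : 0 < r)
    exact (h a k r hr).symm
  by_cases hx : x = 0
  · have := mom_complete hφ.continuous h0 (x := EuclideanSpace.single (⟨0, hN⟩ : Fin N) (1:ℝ)) (by simp)
    simpa [hx] using this
  · have hn : 0 < ‖x‖ := norm_pos_iff.2 hx
    have := mom_complete hφ.continuous (fun a k => h a k ‖x‖ hn) (x := ‖x‖⁻¹ • x) (by rw [norm_smul]; simp [hn.ne'])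
    rwa [smul_smul, mul_inv_cancel₀ hn.ne', one_smul] at this

theorem linMinus (hN : 1 ≤ N) {φ W : EN N → ℝ} {Q w w1 : ℝ → ℝ} {w0 : ℝ}
    (hφ : ContDiff ℝ (⊤ : ℕ∞) φ) (hW : ContDiff ℝ (⊤ : ℕ∞) W)
    (iφ : Integrable (fun x => φ x^2)) (iW : Integrable (fun x => W x^2))
    (eφ : ∀ x : EN N, x ≠ 0 → lap φ x = - (Q ‖x‖ * φ x)) (eW : ∀ x : EN N, x ≠ 0 → lap W x = - (Q ‖x‖ * W x))
    (hWw : ∀ x, x ≠ 0 → W x = w ‖x‖)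
    (hw : ∀ r, 0<r → HasDerivAt w (w1 r) r)
    (hw1 : ∀ r, 0<r → HasDerivAt w1 (-(((N-1 : ℕ) : ℝ)/r)*w1 r - Q r*w r) r)
    (hwn : ∀ r, 0<r → w r ≠ 0) (zw : Tendsto w (𝓝[>] 0) (𝓝 w0)) (hw0 : w0 ≠ 0) (zw1 : Tendsto w1 (𝓝[>] 0) (𝓝 0)) :
    ∃ c : ℝ, ∀ x, φ x = c * W x := by
  have zq : Tendsto (fun r => w1 r / w r) (𝓝[>] 0) (𝓝 0) := by
    have := zw1.div zw hw0; rw [zero_div] at this; exact this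
  have hw1' : ∀ r, 0<r → HasDerivAt w1 (-(((N-1 : ℕ) : ℝ)/r)*w1 r + 0/r^2 * w r - Q r*w r) r := by
    intro r hr; refine (hw1 r hr).congr_deriv ?_; simp
  have hlam : ∀ k : ℕ, (0:ℝ) ≤ (k:ℝ) * (k + N - 2) := by
    intro k
    rcases k with _ | k
    · simp
    · have : (1:ℝ) ≤ N := by exact_mod_cast hN
      push_cast; apply mul_nonneg <;> nlinarith [(Nat.cast_nonneg k : (0:ℝ) ≤ k)]
  have base := odeA (N-1) 0 _ (hlam 0) Q w w1 (mom φ 0 0) (mom1 φ 0 0) hw hw1' hwn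
    (fun r _ => mom_deriv 0 0 hφ r) (mom_ode hN hφ eφ 0 0 (Or.inl (by norm_num)))
    (mom_int hN hφ iφ 0 0) (bdryA hφ 0 0 _ zq)
  obtain ⟨⟨c0, hc0⟩, -⟩ := base
  have hs := JJ_one_pos hN
  set s := JJ (fun _ : EN N => 1)
  set c := c0 / s
  let χ : EN N → ℝ := fun x => φ x - c * W x
  have hχ : ContDiff ℝ (⊤ : ℕ∞) χ := hφ.sub (contDiff_const.mul hW)
  have iχ : Integrable (fun x => χ x ^ 2) := by
    rw [← memLp_two_iff_integrable_sq (hχ.continuous.aestronglyMeasurable)]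
    rw [← memLp_two_iff_integrable_sq (hφ.continuous.aestronglyMeasurable)] at iφ
    rw [← memLp_two_iff_integrable_sq (hW.continuous.aestronglyMeasurable)] at iW
    exact iφ.sub (iW.const_mul c)
  have lap_cmul : ∀ x, lap χ x = lap φ x - c * lap W x := by
    intro x
    unfold lap
    rw [Finset.mul_sum, ← Finset.sum_sub_distrib]
    refine Finset.sum_congr rfl fun i _ => ?_
    have e : pd i χ = fun x => pd i φ x - c * pd i W x := by
      funext x
      rw [pd_sub i (sm_diff hφ x) ((sm_diff hW x).const_mul c)]
      congr 1
      exact fderiv_cmul' (sm_diff hW x) c _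
    rw [e, pd_sub i (sm_diff (pd_smooth hφ i) x) ((sm_diff (pd_smooth hW i) x).const_mul c)]
    congr 1
    exact fderiv_cmul' (sm_diff (pd_smooth hW i) x) c _
  have eχ : ∀ x : EN N, x ≠ 0 → lap χ x = - (Q ‖x‖ * χ x) := by
    intro x hx
    rw [lap_cmul, eφ x hx, eW x hx]; simp only [χ]; ring
  have m0 : ∀ a r, 0 < r → mom χ a 0 r = 0 := by
    intro a r hr
    have e1 : mom χ a 0 r = mom φ a 0 r - mom (fun x => c * W x) a 0 r := mom_sub a 0 hφ.continuous (by have := hW.continuous; fun_prop) r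
    have e2 : mom φ a 0 r = c0 * w r := by rw [← hc0 r hr]; unfold mom; simp
    have e3 : mom (fun x => c * W x) a 0 r = (c * w r) * s := by
      unfold mom
      rw [← JJ_cmul]
      refine JJ_congr fun x hx => ?_
      have hx0 : r • x ≠ 0 := smul_ne_zero hr.ne' (by intro h; simp [h] at hx)
      beta_reduce
      rw [hWw _ hx0, norm_smul, hx, Real.norm_of_nonneg hr.le, mul_one]; simp
    rw [e1, e2, e3]; simp only [c]; field_simp; ring
  have hall : ∀ k a r, 0 < r → mom χ a k r = 0 := by
    intro k
    induction k using Nat.strong_induction_on with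
    | _ k ih =>
    intro a
    rcases Nat.eq_zero_or_pos k with hk | hk
    · subst hk; exact m0 a
    have hprev : k ≤ 1 ∨ ∀ r, 0 < r → mom χ a (k-2) r = 0 := by
      rcases Nat.lt_or_ge 1 k with h | h
      · right; exact ih (k-2) (by omega) a
      · left; exact h
    obtain ⟨⟨d, hd⟩, hz⟩ := odeA (N-1) 0 _ (hlam k) Q w w1 (mom χ a k) (mom1 χ a k) hw hw1' hwn
      (fun r _ => mom_deriv a k hχ r) (mom_ode hN hχ eχ a k hprev)
      (mom_int hN hχ iχ a k) (bdryA hχ a k _ zq)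
    by_cases hpos : (0:ℝ) < (k:ℝ) * (k + N - 2)
    · exact hz hpos
    · have hk1 : k = 1 := by
        by_contra hne
        have h2 : 2 ≤ k := by omega
        have h2' : (2:ℝ) ≤ k := by exact_mod_cast h2
        have : (1:ℝ) ≤ N := by exact_mod_cast hN
        exact hpos (mul_pos (by linarith) (by linarith))
      have z0 : mom χ a k 0 = 0 := by rw [mom_zero, JP_odd a k (by rw [hk1]; exact odd_one), mul_zero]
      have cc : Tendsto (mom χ a k) (𝓝[>] 0) (𝓝 (mom χ a k 0)) := (mom_cont hχ a k).continuousAt.continuousWithinAt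
      have c2 : Tendsto (mom χ a k) (𝓝[>] 0) (𝓝 (d * w0)) := by
        refine (zw.const_mul d).congr' ?_
        filter_upwards [self_mem_nhdsWithin] with r (hr : 0 < r)
        exact (hd r hr).symm
      have := tendsto_nhds_unique cc c2
      rw [z0] at this
      have hd0 : d = 0 := by
        rcases mul_eq_zero.1 this.symm with h | h
        · exact h
        · exact absurd h hw0
      intro r hr; rw [hd r hr, hd0, zero_mul]
  refine ⟨c, fun x => ?_⟩
  have := zero_of_moms hN hχ (fun a k => hall k a) x
  simp only [χ] at this
  linarith

theorem JJ_xx (i j : Fin N) : JJ (fun x : EN N => x i * x j) * N = (if i = j then 1 else 0) * JJ (fun _ : EN N => 1) := by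
  have h := JJ_div (coord_smooth j) i
  have e : (fun x : EN N => pd i (fun x : EN N => x j) x - x i * fderiv ℝ (fun x : EN N => x j) x x - (N - 1) * (x i * x j))
      = fun x : EN N => (if i = j then 1 else 0) * 1 - N * (x i * x j) := by
    funext x
    rw [fd_coord]
    unfold pd
    rw [fd_coord]
    simp [eq_comm (a := i)]
    ring
  have hc : Continuous fun x : EN N => x i * x j := (coord_smooth i).continuous.mul (coord_smooth j).continuous
  rw [e, JJ_sub (by fun_prop) (by fun_prop), JJ_cmul, JJ_cmul] at h
  linarith

theorem linPlus (hN : 1 ≤ N) {φ : EN N → ℝ} {W : Fin N → EN N → ℝ} {Q w w1 : ℝ → ℝ}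
    (hφ : ContDiff ℝ (⊤ : ℕ∞) φ) (hW : ∀ l, ContDiff ℝ (⊤ : ℕ∞) (W l))
    (iφ : Integrable (fun x => φ x^2)) (iW : ∀ l, Integrable (fun x => W l x^2))
    (eφ : ∀ x : EN N, x ≠ 0 → lap φ x = - (Q ‖x‖ * φ x)) (eW : ∀ l, ∀ x : EN N, x ≠ 0 → lap (W l) x = - (Q ‖x‖ * W l x))
    (hWw : ∀ l, ∀ x : EN N, x ≠ 0 → W l x = w ‖x‖ * (x l / ‖x‖))
    (hw : ∀ r, 0<r → HasDerivAt w (w1 r) r)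
    (hw1 : ∀ r, 0<r → HasDerivAt w1 (-(((N-1 : ℕ) : ℝ)/r)*w1 r + ((N-1 : ℕ) : ℝ)/r^2 * w r - Q r*w r) r)
    (hwn : ∀ r, 0<r → w r ≠ 0) (zq : Tendsto (fun r => r * w1 r / w r) (𝓝[>] 0) (𝓝 1))
    (hm0 : ∀ r, 0 < r → mom φ 0 0 r = 0) :
    ∃ c : Fin N → ℝ, ∀ x, φ x = ∑ l, c l * W l x := by
  have hN' : (1:ℝ) ≤ N := by exact_mod_cast hN
  have hNc : ((N-1 : ℕ) : ℝ) = N - 1 := by push_cast [Nat.cast_sub hN]; ring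
  have hs := JJ_one_pos hN
  set s := JJ (fun _ : EN N => 1) with hsdef
  let e : Fin N → EN N := fun l => EuclideanSpace.single l (1:ℝ)
  have base : ∀ l, ∃ c0, ∀ r, 0 < r → mom φ (e l) 1 r = c0 * w r := by
    intro l
    refine (odeA (N-1) ((N-1 : ℕ) : ℝ) ((1:ℕ) * ((1:ℕ) + N - 2)) (by rw [hNc]; push_cast; linarith) Q w w1 (mom φ (e l) 1) (mom1 φ (e l) 1) hw hw1 hwn
      (fun r _ => mom_deriv _ 1 hφ r) (mom_ode hN hφ eφ _ 1 (Or.inl (by norm_num)))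
      (mom_int hN hφ iφ _ 1) (bdryB hφ _ 1 _ ?_ zq)).1
    rw [mom_zero, JP_odd _ 1 odd_one, mul_zero]
  choose c0 hc0 using base
  set c : Fin N → ℝ := fun l => c0 l * N / s with hcdef
  let χ : EN N → ℝ := fun x => φ x - ∑ l, c l * W l x
  have hSm : ContDiff ℝ (⊤ : ℕ∞) (fun x => ∑ l, c l * W l x) := ContDiff.sum fun l _ => contDiff_const.mul (hW l)
  have hχ : ContDiff ℝ (⊤ : ℕ∞) χ := hφ.sub hSm
  have iχ : Integrable (fun x => χ x ^ 2) := by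
    rw [← memLp_two_iff_integrable_sq (hχ.continuous.aestronglyMeasurable)]
    rw [← memLp_two_iff_integrable_sq (hφ.continuous.aestronglyMeasurable)] at iφ
    refine iφ.sub (memLp_finsetSum _ fun l _ => ?_)
    have := iW l
    rw [← memLp_two_iff_integrable_sq ((hW l).continuous.aestronglyMeasurable)] at this
    exact this.const_mul (c l)
  have lap_cmul : ∀ x, lap χ x = lap φ x - ∑ l, c l * lap (W l) x := by
    intro x
    have pdsum : ∀ (f : Fin N → EN N → ℝ) (hf : ∀ l, ContDiff ℝ (⊤ : ℕ∞) (f l)) (i : Fin N) (x : EN N),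
        pd i (fun x => ∑ l, c l * f l x) x = ∑ l, c l * pd i (f l) x := by
      intro f hf i x
      unfold pd
      rw [fderiv_fun_sum (fun l _ => (sm_diff (hf l) x).const_mul (c l)), sum_apply]
      exact Finset.sum_congr rfl fun l _ => fderiv_cmul' (sm_diff (hf l) x) (c l) _
    unfold lap
    simp only [Finset.mul_sum]
    rw [Finset.sum_comm, ← Finset.sum_sub_distrib]
    refine Finset.sum_congr rfl fun i _ => ?_
    have e : pd i χ = fun x => pd i φ x - ∑ l, c l * pd i (W l) x := by
      funext x
      rw [pd_sub i (sm_diff hφ x) (sm_diff hSm x), pdsum _ hW]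
    rw [e, pd_sub i (sm_diff (pd_smooth hφ i) x) (sm_diff (ContDiff.sum fun l _ => contDiff_const.mul (pd_smooth (hW l) i)) x),
      pdsum _ (fun l => pd_smooth (hW l) i)]
  have eχ : ∀ x : EN N, x ≠ 0 → lap χ x = - (Q ‖x‖ * χ x) := by
    intro x hx
    rw [lap_cmul, eφ x hx]; simp only [eW _ x hx, χ, mul_sub, Finset.mul_sum]
    rw [neg_sub, ← sub_eq_zero]
    simp only [mul_neg, Finset.sum_neg_distrib]
    have : ∑ l, c l * (Q ‖x‖ * W l x) = ∑ l, Q ‖x‖ * (c l * W l x) := Finset.sum_congr rfl fun l _ => by ring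
    rw [this]; ring
  have momW : ∀ l a k r, 0 < r → mom (W l) a k r = w r * JJ (fun x : EN N => x l * (inner ℝ a x)^k) := by
    intro l a k r hr
    unfold mom
    rw [← JJ_cmul]
    refine JJ_congr fun x hx => ?_
    have hx0 : r • x ≠ 0 := smul_ne_zero hr.ne' (by intro h; simp [h] at hx)
    rw [hWw l _ hx0, norm_smul, hx, Real.norm_of_nonneg hr.le, mul_one]
    simp; field_simp
  have momχ : ∀ a k r, mom χ a k r = mom φ a k r - ∑ l, c l * mom (W l) a k r := by
    intro a k r
    have e1 : mom χ a k r = mom φ a k r - mom (fun x => ∑ l, c l * W l x) a k r := mom_sub a k hφ.continuous hSm.continuous r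
    rw [e1]
    congr 1
    unfold mom
    rw [← Finset.sum_congr rfl fun l _ => JJ_cmul (c l) (fun x => W l (r • x) * inner ℝ a x ^ k), ← JJ_sum _ (fun l => by
      have := (hW l).continuous; fun_prop)]
    congr 1; funext x; rw [Finset.sum_mul]; exact Finset.sum_congr rfl fun l _ => by ring
  have m0 : ∀ a r, 0 < r → mom χ a 0 r = 0 := by
    intro a r hr
    rw [momχ]
    have e1 : mom φ a 0 r = 0 := by rw [← hm0 r hr]; unfold mom; simp
    rw [e1, Finset.sum_eq_zero, sub_zero]
    intro l _
    rw [momW l a 0 r hr]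
    have := JP_odd (e l) 1 odd_one
    simp only [e, EuclideanSpace.inner_single_left] at this
    simp at this
    simp [this]
  have m1 : ∀ a r, 0 < r → mom χ a 1 r = 0 := by
    intro a r hr
    have h1 : ∀ j, mom χ (e j) 1 r = 0 := by
      intro j
      rw [momχ, hc0 j r hr]
      have e1 : ∀ l, c l * mom (W l) (e j) 1 r = if l = j then c0 l * w r else 0 := by
        intro l
        rw [momW l _ 1 r hr]
        have := JJ_xx l j
        rw [← hsdef] at this
        have e2 : JJ (fun x : EN N => x l * (inner ℝ (e j) x)^1) = JJ (fun x : EN N => x l * x j) := by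
          simp [e, EuclideanSpace.inner_single_left]
        rw [e2]
        have e3 : JJ (fun x : EN N => x l * x j) = (if l = j then 1 else 0) * s / N := by
          rw [← this]; field_simp
        rw [e3]; simp only [hcdef]
        split_ifs
        · field_simp
        · simp
      rw [Finset.sum_congr rfl fun l _ => e1 l]; simp
    have h2 : mom χ a 1 r = ∑ j, a j * mom χ (e j) 1 r := by
      unfold mom
      rw [← Finset.sum_congr rfl fun j _ => JJ_cmul (a j) (fun x => χ (r • x) * inner ℝ (e j) x ^ 1), ← JJ_sum _ (fun l => by
        have := hχ.continuous; fun_prop)]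
      congr 1; funext x
      simp only [e, EuclideanSpace.inner_single_left, inner_eq_sum a x, pow_one, Finset.mul_sum]
      exact Finset.sum_congr rfl fun l _ => by simp; ring
    rw [h2]; simp [h1]
  have hχ0 : χ 0 = 0 := by
    have cc : Tendsto (mom χ 0 0) (𝓝[>] 0) (𝓝 (mom χ 0 0 0)) := (mom_cont hχ 0 0).continuousAt.continuousWithinAt
    have c2 : Tendsto (mom χ 0 0) (𝓝[>] 0) (𝓝 0) := by
      refine tendsto_const_nhds.congr' ?_
      filter_upwards [self_mem_nhdsWithin] with r (hr : 0 < r)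
      exact (m0 0 r hr).symm
    have := tendsto_nhds_unique cc c2
    rw [mom_zero] at this
    simp only [pow_zero] at this
    exact (mul_eq_zero.1 this).resolve_right hs.ne'
  have hall : ∀ k a r, 0 < r → mom χ a k r = 0 := by
    intro k
    induction k using Nat.strong_induction_on with
    | _ k ih =>
    intro a
    rcases k with _ | _ | k
    · exact m0 a
    · exact m1 a
    have hlt : ((N-1 : ℕ) : ℝ) < ((k+1+1 : ℕ) : ℝ) * (((k+1+1 : ℕ) : ℝ) + N - 2) := by
      rw [hNc]; push_cast
      have : (0:ℝ) ≤ k := Nat.cast_nonneg k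
      nlinarith
    refine (odeA (N-1) ((N-1 : ℕ) : ℝ) _ hlt.le Q w w1 (mom χ a (k+1+1)) (mom1 χ a (k+1+1)) hw hw1 hwn
      (fun r _ => mom_deriv a _ hχ r) (mom_ode hN hχ eχ a _ (Or.inr (ih (k+1+1-2) (by omega) a)))
      (mom_int hN hχ iχ a _) (bdryB hχ a _ _ ?_ zq)).2 hlt
    rw [mom_zero, hχ0, zero_mul]
  refine ⟨c, fun x => ?_⟩
  have := zero_of_moms hN hχ (fun a k => hall k a) x
  simp only [χ] at this
  linarith

end lin
end PartS5

section PartT1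

def sqf (u : ℝ) : ℝ := √(1 + 2 * u^2)
def Fv (u : ℝ) : ℝ := (u * sqf u + arsinh (√2 * u) / √2) / 2
def gf (ω p u : ℝ) : ℝ := (u^p - ω * u) / sqf u
def qf (ω p u : ℝ) : ℝ := (p * u^(p-1) + 2 * (p-1) * u^(p+1) - ω) / sqf u^4
def Gf (ω p u : ℝ) : ℝ := u^(p+1) / (p+1) - ω * u^2 / 2

theorem sqf_sq (u : ℝ) : sqf u ^ 2 = 1 + 2 * u^2 := Real.sq_sqrt (by positivity)
theorem sqf_pos (u : ℝ) : 0 < sqf u := Real.sqrt_pos.2 (by positivity)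
theorem sqf_ge (u : ℝ) : 1 ≤ sqf u := by
  have := sqf_sq u; have := sqf_pos u; nlinarith [sq_nonneg u]

theorem sqf_der (u : ℝ) : HasDerivAt sqf (2 * u / sqf u) u := by
  have h : HasDerivAt (fun u : ℝ => 1 + 2 * u^2) (4 * u) u := by
    have := ((hasDerivAt_pow 2 u).const_mul 2).const_add 1
    refine this.congr_deriv ?_; norm_num; ring
  have := h.sqrt (by positivity)
  refine this.congr_deriv ?_
  unfold sqf; ring

theorem sqf_smooth : ContDiff ℝ (⊤ : ℕ∞) sqf := by
  unfold sqf
  exact ContDiff.sqrt (by fun_prop) (fun x => by positivity)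

theorem Fv_smooth : ContDiff ℝ (⊤ : ℕ∞) Fv := by
  unfold Fv
  have h1 := sqf_smooth
  have h2 : ContDiff ℝ (⊤ : ℕ∞) (fun u : ℝ => arsinh (√2 * u)) := Real.contDiff_arsinh.comp (by fun_prop)
  fun_prop

theorem ars_der (u : ℝ) : HasDerivAt (fun u => arsinh (√2 * u) / √2) (1 / sqf u) u := by
  have h := ((hasDerivAt_id u).const_mul (√2)).arsinh.div_const (√2)
  refine h.congr_deriv ?_
  have : (√2 * u)^2 = 2 * u^2 := by rw [mul_pow, Real.sq_sqrt (by norm_num)]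
  simp only [id, this]
  have := (sqf_pos u).ne'
  change (√(1 + 2 * u^2))⁻¹ • (√2 * 1) / √2 = _
  change (sqf u)⁻¹ • (√2 * 1) / √2 = _
  simp only [smul_eq_mul]; field_simp

theorem usq_der (u : ℝ) : HasDerivAt (fun u => u * sqf u) ((1 + 4 * u^2) / sqf u) u := by
  refine ((hasDerivAt_id u).mul (sqf_der u)).congr_deriv ?_
  have h := (sqf_pos u).ne'
  have := sqf_sq u
  simp only [id]
  field_simp
  linear_combination this

theorem Fv_der (u : ℝ) : HasDerivAt Fv (sqf u) u := by
  refine (((usq_der u).add (ars_der u)).div_const 2).congr_deriv ?_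
  have h := (sqf_pos u).ne'
  have := sqf_sq u
  field_simp
  linear_combination (-2) * this

theorem Fv_zero : Fv 0 = 0 := by simp [Fv]

theorem ars_pos {u : ℝ} (hu : 0 < u) : 0 < arsinh (√2 * u) / √2 := by
  have : 0 < arsinh (√2 * u) := Real.arsinh_pos_iff.2 (by positivity)
  positivity

theorem Fv_pos {u : ℝ} (hu : 0 < u) : 0 < Fv u := by
  have := ars_pos hu; have := sqf_pos u
  unfold Fv; positivity

theorem Fv_le {u : ℝ} (hu : 0 < u) : Fv u ≤ u * sqf u := by
  have h1 : arsinh (√2 * u) ≤ √2 * u := by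
    conv_rhs => rw [← Real.sinh_arsinh (√2 * u)]
    exact Real.self_le_sinh_iff.2 (Real.arsinh_nonneg_iff.2 (by positivity))
  have h2 : arsinh (√2 * u) / √2 ≤ u := by
    rw [div_le_iff₀ (by positivity)]; linarith
  have := sqf_ge u
  unfold Fv
  nlinarith

theorem Mpos {u : ℝ} (hu : 0 ≤ u) : 0 ≤ Fv u * (1 + 4 * u^2) - u * sqf u ^ 3 := by
  have hd : ∀ x, HasDerivAt (fun u => Fv u * (1 + 4 * u^2) - u * sqf u ^ 3) (4 * x * (arsinh (√2 * x) / √2)) x := by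
    intro x
    have h4 : HasDerivAt (fun u : ℝ => 1 + 4 * u^2) (8 * x) x := by
      refine (((hasDerivAt_pow 2 x).const_mul 4).const_add 1).congr_deriv ?_; norm_num; ring
    have h := ((Fv_der x).mul h4).sub ((hasDerivAt_id x).mul ((sqf_der x).pow 3))
    refine h.congr_deriv ?_
    have hs := (sqf_pos x).ne'
    have := sqf_sq x
    have e : arsinh (√2 * x) / √2 = 2 * Fv x - x * sqf x := by unfold Fv; ring
    rw [e]
    simp only [id]
    norm_num
    field_simp
    linear_combination (-1) * sqf x * this
  have hm : MonotoneOn (fun u => Fv u * (1 + 4 * u^2) - u * sqf u ^ 3) (Set.Ici 0) := by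
    refine monotoneOn_of_deriv_nonneg (convex_Ici 0) (fun x _ => (hd x).continuousAt.continuousWithinAt)
      (fun x _ => (hd x).differentiableAt.differentiableWithinAt) (fun x hx => ?_)
    rw [interior_Ici] at hx
    rw [(hd x).deriv]
    have := ars_pos hx
    have : (0:ℝ) < x := hx
    positivity
  have := hm (Set.self_mem_Ici) hu hu
  simpa [Fv_zero] using this

def rho (u : ℝ) : ℝ := Fv u / (u * sqf u)

theorem rho_anti : AntitoneOn rho (Set.Ioi 0) := by
  have hd : ∀ x, 0 < x → HasDerivAt rho ((sqf x * (x * sqf x) - Fv x * ((1 + 4 * x^2) / sqf x)) / (x * sqf x)^2) x := by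
    intro x hx
    exact (Fv_der x).div (usq_der x) (mul_pos hx (sqf_pos x)).ne'
  refine antitoneOn_of_deriv_nonpos (convex_Ioi 0) (fun x hx => (hd x hx).continuousAt.continuousWithinAt)
      (fun x hx => (hd x (by simpa using hx)).differentiableAt.differentiableWithinAt) (fun x hx => ?_)
  have hx : 0 < x := by simpa using hx
  rw [(hd x hx).deriv]
  have hs := sqf_pos x
  have := Mpos hx.le
  refine div_nonpos_of_nonpos_of_nonneg ?_ (by positivity)
  have e : sqf x * (x * sqf x) - Fv x * ((1 + 4 * x^2) / sqf x) = -((Fv x * (1 + 4 * x^2) - x * sqf x ^ 3) / sqf x) := by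
    field_simp; ring
  rw [e]
  have : 0 ≤ (Fv x * (1 + 4 * x^2) - x * sqf x ^ 3) / sqf x := by positivity
  linarith

theorem rho_pos {u : ℝ} (hu : 0 < u) : 0 < rho u := div_pos (Fv_pos hu) (mul_pos hu (sqf_pos u))
theorem rho_le {u : ℝ} (hu : 0 < u) : rho u ≤ 1 := (div_le_one (mul_pos hu (sqf_pos u))).2 (Fv_le hu)

theorem I_eq (ω p α β : ℝ) {u : ℝ} (hu : 0 < u) :
    α * (Fv u * qf ω p u) - β * gf ω p u =
      (u / sqf u) * (u^(p-1) * (α * rho u * (p-1)) - (β - α * rho u / sqf u^2) * (u^(p-1) - ω)) := by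
  have hs := (sqf_pos u).ne'
  have e1 : u^p = u^(p-1) * u := by rw [← Real.rpow_add_one hu.ne']; ring_nf
  have e2 : u^(p+1) = u^(p-1) * u^2 := by
    rw [Real.rpow_add_one hu.ne', e1]; ring
  have e3 : Fv u = rho u * (u * sqf u) := by unfold rho; field_simp
  unfold qf gf
  rw [e1, e2, e3]
  have := sqf_sq u
  field_simp
  linear_combination (α * rho u * u^(p-1) * (1 - p)) * this

theorem sign_prop {ω p : ℝ} (hω : 0 < ω) (hp : 1 < p) {α β : ℝ} (hα : 0 ≤ α) (hαβ : α ≤ β) (hβ : 0 < β)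
    {u1 u2 : ℝ} (h2 : 0 < u2) (h12 : u2 < u1) (h : α * (Fv u2 * qf ω p u2) - β * gf ω p u2 ≤ 0) :
    α * (Fv u1 * qf ω p u1) - β * gf ω p u1 < 0 := by
  have h1 : 0 < u1 := h2.trans h12
  rw [I_eq ω p α β h2] at h
  rw [I_eq ω p α β h1]
  have ha : 0 < u2 / sqf u2 := div_pos h2 (sqf_pos _)
  have hb : 0 < u1 / sqf u1 := div_pos h1 (sqf_pos _)
  have h' := nonpos_of_mul_nonpos_right h ha
  refine mul_neg_of_pos_of_neg hb ?_
  have hX : u2^(p-1) < u1^(p-1) := Real.rpow_lt_rpow h2.le h12 (by linarith)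
  have hX2 : 0 < u2^(p-1) := Real.rpow_pos_of_pos h2 _
  have hr : rho u1 ≤ rho u2 := rho_anti h2 h1 h12.le
  have hr1 := rho_pos h1; have hr2 := rho_pos h2
  have hr3 := rho_le h2
  have hs2 : 1 < sqf u2^2 := by rw [sqf_sq]; nlinarith
  have hs12 : sqf u2^2 < sqf u1^2 := by rw [sqf_sq, sqf_sq]; nlinarith
  have hd2 : 0 < β - α * rho u2 / sqf u2^2 := by
    rw [sub_pos, div_lt_iff₀ (by linarith)]
    nlinarith
  have hd : β - α * rho u2 / sqf u2^2 ≤ β - α * rho u1 / sqf u1^2 := by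
    have : α * rho u1 / sqf u1^2 ≤ α * rho u2 / sqf u2^2 := by gcongr
    linarith
  have hc : α * rho u1 * (p-1) ≤ α * rho u2 * (p-1) := by
    have : 0 ≤ p - 1 := by linarith
    gcongr
  have hc1 : 0 ≤ α * rho u1 * (p-1) := by
    have : 0 ≤ p - 1 := by linarith
    positivity
  generalize β - α * rho u2 / sqf u2^2 = d2 at *
  generalize β - α * rho u1 / sqf u1^2 = d1 at *
  generalize α * rho u1 * (p-1) = c1 at *
  generalize α * rho u2 * (p-1) = c2 at *
  generalize u2^(p-1) = X2 at *
  generalize u1^(p-1) = X1 at *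
  have k1 : d2 * ω ≤ (d2 - c2) * X2 := by linarith
  have k2 : 0 < d2 - c2 := by
    by_contra hcon
    push Not at hcon
    have : 0 < d2 * ω := by positivity
    nlinarith
  have k3 : d2 * ω < (d2 - c2) * X1 := by nlinarith
  have k4 : c1 * X1 ≤ c2 * X1 := by nlinarith
  have k5 : 0 < X1 - ω := by
    have : 0 ≤ c2 * X1 := mul_nonneg (hc1.trans hc) (by linarith)
    have : 0 < d2 * (X1 - ω) := by nlinarith
    exact pos_of_mul_pos_right this hd2.le
  nlinarith [mul_le_mul_of_nonneg_right hd k5.le]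

theorem sign0_prop {ω p : ℝ} (hp : 1 < p) {u : ℝ} (hu : 0 < u) (hg : gf ω p u ≤ 0) :
    0 < Fv u * qf ω p u - gf ω p u := by
  have h := I_eq ω p 1 1 hu
  simp only [one_mul] at h
  rw [h]
  have e1 : u^p = u^(p-1) * u := by rw [← Real.rpow_add_one hu.ne']; ring_nf
  have hs := sqf_pos u
  have hX : u^(p-1) - ω ≤ 0 := by
    have h2 : gf ω p u = (u / sqf u) * (u^(p-1) - ω) := by unfold gf; rw [e1]; ring
    rw [h2] at hg
    exact nonpos_of_mul_nonpos_right hg (by positivity)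
  have hX2 : 0 < u^(p-1) := Real.rpow_pos_of_pos hu _
  have hr := rho_pos hu; have hr3 := rho_le hu
  have hs2 : 1 < sqf u^2 := by rw [sqf_sq]; nlinarith
  have hd2 : 0 < 1 - rho u / sqf u^2 := by
    rw [sub_pos, div_lt_iff₀ (by linarith)]
    nlinarith
  have : 0 < p - 1 := by linarith
  have h3 : 0 < u^(p-1) * (rho u * (p-1)) := by positivity
  refine mul_pos (by positivity) ?_
  nlinarith [mul_nonneg hd2.le (neg_nonneg.2 hX)]

theorem gf_der (ω p : ℝ) {u : ℝ} (hu : 0 < u) : HasDerivAt (gf ω p) (qf ω p u * sqf u) u := by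
  have h1 : HasDerivAt (fun u : ℝ => u^p - ω * u) (p * u^(p-1) - ω) u := by
    refine ((Real.hasDerivAt_rpow_const (Or.inl hu.ne')).sub ((hasDerivAt_id u).const_mul ω)).congr_deriv ?_
    simp
  have h := h1.div (sqf_der u) (sqf_pos u).ne'
  refine h.congr_deriv ?_
  have hs := (sqf_pos u).ne'
  have e1 : u^p = u^(p-1) * u := by rw [← Real.rpow_add_one hu.ne']; ring_nf
  have e2 : u^(p+1) = u^(p-1) * u^2 := by
    rw [Real.rpow_add_one hu.ne', e1]; ring
  unfold qf
  rw [e1, e2]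
  have := sqf_sq u
  field_simp
  linear_combination (p * u^(p-1) - ω) * this

theorem Gf_der (ω : ℝ) {p : ℝ} (hp : 1 < p) {u : ℝ} (hu : 0 < u) : HasDerivAt (Gf ω p) (gf ω p u * sqf u) u := by
  have h := ((Real.hasDerivAt_rpow_const (p := p+1) (Or.inl hu.ne')).div_const (p+1)).sub
    (((hasDerivAt_pow 2 u).const_mul ω).div_const 2)
  refine h.congr_deriv ?_
  have hs := (sqf_pos u).ne'
  have : p + 1 ≠ 0 := by linarith
  unfold gf
  simp
  field_simp

end PartT1

section PartT2

variable {N : ℕ}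

theorem JJ_pcont {H : ℝ → EN N → ℝ} (hc : Continuous (fun z : ℝ × EN N => H z.1 z.2)) :
    Continuous (fun t => JJ (H t)) := by
  have := continuous_parametric_integral_of_continuous (μ := (volume : Measure (EN N)).toSphere)
    (f := fun (t : ℝ) (θ : Metric.sphere (0 : EN N) 1) => H t θ) (by
      exact hc.comp (continuous_fst.prodMk (continuous_subtype_val.comp continuous_snd))) isCompact_univ
  simpa [JJ] using this

theorem mom2_cont {φ : EN N → ℝ} (hφ : ContDiff ℝ (⊤ : ℕ∞) φ) (a : EN N) (k : ℕ) : Continuous (mom2 φ a k) := by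
  refine JJ_pcont (H := fun r x => D2 φ (r • x) x * (inner ℝ a x)^k) ?_
  exact (D2_cont hφ (f := fun z : ℝ × EN N => z.1 • z.2) (g := fun z => z.2) (by fun_prop) (by fun_prop)).mul (by fun_prop)

def rad (f : EN N → ℝ) (r : ℝ) : ℝ := mom f 0 0 r / JJ (fun _ : EN N => 1)
def rad1 (f : EN N → ℝ) (r : ℝ) : ℝ := mom1 f 0 0 r / JJ (fun _ : EN N => 1)
def rad2 (f : EN N → ℝ) (r : ℝ) : ℝ := mom2 f 0 0 r / JJ (fun _ : EN N => 1)

theorem rad_der {f : EN N → ℝ} (hf : ContDiff ℝ (⊤ : ℕ∞) f) (r : ℝ) : HasDerivAt (rad f) (rad1 f r) r :=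
  (mom_deriv 0 0 hf r).div_const _
theorem rad1_der {f : EN N → ℝ} (hf : ContDiff ℝ (⊤ : ℕ∞) f) (r : ℝ) : HasDerivAt (rad1 f) (rad2 f r) r :=
  (mom1_deriv 0 0 hf r).div_const _
theorem rad2_cont {f : EN N → ℝ} (hf : ContDiff ℝ (⊤ : ℕ∞) f) : Continuous (rad2 f) :=
  (mom2_cont hf 0 0).div_const _
theorem rad_cont {f : EN N → ℝ} (hf : ContDiff ℝ (⊤ : ℕ∞) f) : Continuous (rad f) :=
  continuous_iff_continuousAt.2 fun r => (rad_der hf r).continuousAt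
theorem rad1_cont {f : EN N → ℝ} (hf : ContDiff ℝ (⊤ : ℕ∞) f) : Continuous (rad1 f) :=
  continuous_iff_continuousAt.2 fun r => (rad1_der hf r).continuousAt
theorem rad1_zero (f : EN N → ℝ) : rad1 f 0 = 0 := by
  unfold rad1; rw [mom1_zero_even 0 0 (by simp)]; simp

theorem rad_const (hN : 1 ≤ N) {f : EN N → ℝ} {r c : ℝ} (hr : 0 ≤ r) (h : ∀ x, ‖x‖ = r → f x = c) :
    rad f r = c := by
  have hs := JJ_one_pos hN
  unfold rad mom
  rw [JJ_congr (G := fun _ => c * 1) (fun x hx => by simp [h (r • x) (by rw [norm_smul, hx]; simp [abs_of_nonneg hr])]), JJ_cmul]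
  field_simp

theorem rad_eq (hN : 1 ≤ N) {f : EN N → ℝ} {f0 : ℝ → ℝ} (h : ∀ x, f x = f0 ‖x‖) (x : EN N) :
    f x = rad f ‖x‖ :=
  (rad_const hN (norm_nonneg x) (fun y hy => by rw [h, hy, ← h])).symm

theorem rad_ode (hN : 1 ≤ N) {f : EN N → ℝ} (hf : ContDiff ℝ (⊤ : ℕ∞) f) {r c : ℝ} (hr : 0 < r)
    (h : ∀ x, ‖x‖ = r → lap f x = c) : rad2 f r = -(((N-1 : ℕ) : ℝ)/r) * rad1 f r + c := by
  have h1 := mom_id 0 0 hf hr.ne'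
  have h2 := rad_const hN hr.le h
  have hs := JJ_one_pos hN
  unfold rad at h2
  rw [h1] at h2
  have : ((N-1 : ℕ) : ℝ) = N - 1 := by push_cast [hN]; ring
  rw [this]
  unfold rad2 rad1
  simp at h2
  rw [← h2]; field_simp; ring

theorem norm_fd {x : EN N} (hx : x ≠ 0) : HasFDerivAt (fun y : EN N => ‖y‖) ((1 / ‖x‖) • innerSL ℝ x) x := by
  have h := (hasStrictFDerivAt_norm_sq x).hasFDerivAt.sqrt (by simpa using hx)
  have e : (fun y : EN N => √(‖y‖^2)) = fun y => ‖y‖ := by funext y; exact Real.sqrt_sq (norm_nonneg y)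
  rw [e] at h
  refine h.congr_fderiv ?_
  rw [Real.sqrt_sq (norm_nonneg x)]
  ext v
  simp
  ring

theorem rad_pd (hN : 1 ≤ N) {f : EN N → ℝ} (hf : ContDiff ℝ (⊤ : ℕ∞) f) (h : ∀ x, f x = rad f ‖x‖) {x : EN N} (hx : x ≠ 0)
    (l : Fin N) : pd l f x = rad1 f ‖x‖ * (x l / ‖x‖) := by
  have h1 := (rad_der hf ‖x‖).comp_hasFDerivAt x (norm_fd hx)
  have h2 := h1.congr_of_eventuallyEq (f₁ := f) (Eventually.of_forall h)
  unfold pd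
  rw [h2.fderiv]
  simp [EuclideanSpace.inner_single_right]
  field_simp
  exact Or.inl trivial

theorem rad_gradsq (hN : 1 ≤ N) {f : EN N → ℝ} (hf : ContDiff ℝ (⊤ : ℕ∞) f) (h : ∀ x, f x = rad f ‖x‖) {x : EN N} (hx : x ≠ 0) :
    gradsq f x = rad1 f ‖x‖ ^ 2 := by
  unfold gradsq
  simp only [rad_pd hN hf h hx, mul_pow, div_pow]
  rw [← Finset.mul_sum, ← Finset.sum_div]
  have := EuclideanSpace.real_norm_sq_eq x
  rw [← this]
  have : ‖x‖ ≠ 0 := by simpa using hx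
  field_simp

end PartT2

section PartT3

variable {N : ℕ}

theorem lap_comp {u : EN N → ℝ} {h h1 h2 : ℝ → ℝ} (hu : ContDiff ℝ (⊤ : ℕ∞) u)
    (d1 : ∀ t, HasDerivAt h (h1 t) t) (d2 : ∀ t, HasDerivAt h1 (h2 t) t) (x : EN N) :
    lap (fun y => h (u y)) x = h1 (u x) * lap u x + h2 (u x) * gradsq u x := by
  unfold lap gradsq
  rw [Finset.mul_sum, Finset.mul_sum, ← Finset.sum_add_distrib]
  refine Finset.sum_congr rfl fun i _ => ?_
  have e : pd i (fun y => h (u y)) = fun y => h1 (u y) * pd i u y := by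
    funext y; exact pd_comp i (sm_diff hu y) (d1 _)
  rw [e, pd_mul i (f := fun y => h1 (u y)) (((d2 (u x)).differentiableAt).comp x (sm_diff hu x)) (sm_diff (pd_smooth hu i) x),
    pd_comp i (sm_diff hu x) (d2 _)]
  ring

theorem sqf_der2 (u : ℝ) : HasDerivAt (fun u => 2 * u / sqf u) (2 / sqf u ^ 3) u := by
  have h := ((hasDerivAt_id u).const_mul 2).div (sqf_der u) (sqf_pos u).ne'
  refine h.congr_deriv ?_
  have hs := (sqf_pos u).ne'
  have := sqf_sq u
  simp only [id]
  field_simp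
  linear_combination this

theorem lap_usq {u : EN N → ℝ} (hu : ContDiff ℝ (⊤ : ℕ∞) u) (x : EN N) :
    lap (fun y => u y ^ 2) x = 2 * u x * lap u x + 2 * gradsq u x := by
  refine lap_comp (h := fun t => t^2) (h1 := fun t => 2 * t) (h2 := fun _ => 2) hu (fun t => ?_) (fun t => ?_) x
  · simpa using hasDerivAt_pow 2 t
  · simpa using (hasDerivAt_id t).const_mul 2

section
variable {ω p : ℝ} {u : EN N → ℝ}

theorem u_eq (hu : IsGroundState N ω p u) (x : EN N) :
    (1 + 2 * u x ^ 2) * lap u x + 2 * u x * gradsq u x = ω * u x - u x ^ (p-1) * u x := by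
  have h := hu.solves x
  rw [lap_usq hu.smooth] at h
  have e1 : u x ^ p = u x ^ (p-1) * u x := by rw [← Real.rpow_add_one (hu.pos x).ne']; ring_nf
  rw [e1] at h
  linarith

theorem lap_v (hu : IsGroundState N ω p u) (x : EN N) : lap (fun y => Fv (u y)) x = - gf ω p (u x) := by
  rw [lap_comp hu.smooth Fv_der sqf_der]
  have h := u_eq hu x
  have e1 : u x ^ p = u x ^ (p-1) * u x := by rw [← Real.rpow_add_one (hu.pos x).ne']; ring_nf
  unfold gf
  rw [e1]
  have hs := (sqf_pos (u x)).ne'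
  have := sqf_sq (u x)
  field_simp
  linear_combination h + lap u x * this

theorem lap_phi (hu : IsGroundState N ω p u) {η : EN N → ℝ} (hη : ContDiff ℝ (⊤ : ℕ∞) η) (x : EN N)
    (h : -lap η x - 2 * u x * lap (fun y => u y * η y) x + ω * η x - lap (fun y => u y ^ 2) x * η x
      - p * u x ^ (p-1) * η x = 0) :
    lap (fun y => sqf (u y) * η y) x = -(qf ω p (u x) * (sqf (u x) * η x)) := by
  have hsm : ContDiff ℝ (⊤ : ℕ∞) (fun y => sqf (u y)) := sqf_smooth.comp hu.smooth
  rw [lap_mul hsm hη, lap_comp hu.smooth sqf_der sqf_der2]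
  rw [lap_mul hu.smooth hη, lap_usq hu.smooth] at h
  have e : ∀ i, pd i (fun y => sqf (u y)) x * pd i η x = (2 * u x / sqf (u x)) * (pd i u x * pd i η x) := by
    intro i; rw [pd_comp i (sm_diff hu.smooth x) (sqf_der _)]; ring
  simp only [e, ← Finset.mul_sum]
  have h1 := u_eq hu x
  have e1 : u x ^ p = u x ^ (p-1) * u x := by rw [← Real.rpow_add_one (hu.pos x).ne']; ring_nf
  have e2 : u x ^(p+1) = u x ^(p-1) * u x^2 := by
    rw [Real.rpow_add_one (hu.pos x).ne', e1]; ring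
  unfold qf
  rw [e2]
  have hs := (sqf_pos (u x)).ne'
  have hq := sqf_sq (u x)
  generalize (∑ i, pd i u x * pd i η x) = E at *
  generalize lap u x = A at *
  generalize lap η x = D at *
  generalize gradsq u x = B at *
  generalize u x ^ (p-1) = X at *
  generalize sqf (u x) = s at *
  generalize u x = t at *
  generalize η x = y at *
  have hq4 : s^4 = (1+2*t^2)^2 := by rw [← hq]; ring
  field_simp
  ring_nf
  ring_nf at hq4
  rw [hq4, hq]
  linear_combination (-(1+2*t^2)) * h + (-2 * t * y) * h1

theorem pd_comm {f : EN N → ℝ} (hf : ContDiff ℝ (⊤ : ℕ∞) f) (i j : Fin N) : pd i (pd j f) = pd j (pd i f) := by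
  funext x
  have hd : DifferentiableAt ℝ (fderiv ℝ f) x :=
    ((hf.fderiv_right (m := ((⊤ : ℕ∞) : WithTop ℕ∞)) (by simp)).differentiable (by simp)) x
  have e : ∀ i j : Fin N, pd i (pd j f) x = fderiv ℝ (fderiv ℝ f) x (EuclideanSpace.single i 1) (EuclideanSpace.single j 1) := by
    intro i j
    unfold pd
    rw [fderiv_clm_apply hd (by fun_prop)]
    simp
  rw [e, e]
  exact (hf.contDiffAt.isSymmSndFDerivAt (by simp; exact (WithTop.coe_le_coe.2 (le_top : (2:ℕ∞) ≤ ⊤)))) _ _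

theorem lap_pd {f : EN N → ℝ} (hf : ContDiff ℝ (⊤ : ℕ∞) f) (l : Fin N) (x : EN N) : lap (pd l f) x = pd l (lap f) x := by
  have e : pd l (lap f) x = ∑ i, pd l (pd i (pd i f)) x := by
    unfold lap
    show fderiv ℝ _ x _ = _
    rw [fderiv_fun_sum (fun i _ => sm_diff (pd_smooth (pd_smooth hf i) i) x)]
    simp [pd]
  rw [e]
  unfold lap
  refine Finset.sum_congr rfl fun i _ => ?_
  rw [pd_comm hf i l, pd_comm (pd_smooth hf i) i l]

theorem v_smooth (hu : IsGroundState N ω p u) : ContDiff ℝ (⊤ : ℕ∞) (fun y => Fv (u y)) := Fv_smooth.comp hu.smooth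

theorem lap_pdv (hu : IsGroundState N ω p u) (l : Fin N) (x : EN N) :
    lap (pd l (fun y => Fv (u y))) x = -(qf ω p (u x) * pd l (fun y => Fv (u y)) x) := by
  rw [lap_pd (v_smooth hu)]
  have e : lap (fun y => Fv (u y)) = fun y => (fun t => - gf ω p t) (u y) := funext fun y => lap_v hu y
  rw [e, pd_comp l (sm_diff hu.smooth x) (h := fun t => - gf ω p t) (gf_der ω p (hu.pos x)).neg,
    pd_comp l (sm_diff hu.smooth x) (Fv_der _)]
  ring

theorem pd_clm {ξ : EN N → ℂ} (hξ : Differentiable ℝ ξ) (L : ℂ →L[ℝ] ℝ) (i : Fin N) :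
    pd i (fun y => L (ξ y)) = fun x => L (pd i ξ x) := by
  funext x
  unfold pd
  have h : HasFDerivAt (fun y => L (ξ y)) (L.comp (fderiv ℝ ξ x)) x := L.hasFDerivAt.comp x (hξ x).hasFDerivAt
  rw [h.fderiv]
  rfl

theorem lap_clm {ξ : EN N → ℂ} (hξ : ContDiff ℝ (⊤ : ℕ∞) ξ) (L : ℂ →L[ℝ] ℝ) (x : EN N) :
    lap (fun y => L (ξ y)) x = L (lap ξ x) := by
  unfold lap
  rw [map_sum]
  refine Finset.sum_congr rfl fun i _ => ?_
  have h2 : ContDiff ℝ (⊤ : ℕ∞) (pd i ξ) := (hξ.fderiv_right (m := ((⊤ : ℕ∞) : WithTop ℕ∞)) (by simp)).clm_apply contDiff_const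
  rw [pd_clm (hξ.differentiable (by simp)), pd_clm (h2.differentiable (by simp))]
end
end PartT3

section PartT4

theorem RD_exp {f : ℝ → ℝ} {C δ : ℝ} (hδ : 0 < δ) (h : ∀ r, 1 ≤ r → |f r| ≤ C * exp (-δ * r)) : RD f := by
  have h0 : RD (fun r => exp (-δ * r)) := by
    intro k
    have := tendsto_rpow_mul_exp_neg_mul_atTop_nhds_zero k δ hδ
    simpa using this
  refine h0.bdd C 0 (fun r hr => ?_)
  simpa [abs_of_pos (exp_pos _)] using h r hr

theorem der_nonpos {f : ℝ → ℝ} {f' r : ℝ} (hr : 0 < r) (h : HasDerivAt f f' r) (hf : StrictAntiOn f (Set.Ici 0)) : f' ≤ 0 := by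
  refine le_of_tendsto (hasDerivAt_iff_tendsto_slope.1 h) ?_
  filter_upwards [self_mem_nhdsWithin, mem_nhdsWithin_of_mem_nhds (Ioi_mem_nhds hr)] with y hy hy0
  rw [slope_def_field]
  have hy0 : 0 < y := hy0
  rcases lt_or_gt_of_ne (show y ≠ r from hy) with h1 | h1
  · have := hf hy0.le hr.le h1
    exact div_nonpos_of_nonneg_of_nonpos (by linarith) (by linarith)
  · have := hf hr.le hy0.le h1
    exact div_nonpos_of_nonpos_of_nonneg (by linarith) (by linarith)

theorem sqf_mono {a b : ℝ} (ha : 0 ≤ a) (hab : a ≤ b) : sqf a ≤ sqf b := by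
  unfold sqf; gcongr

theorem gf_fac (ω p : ℝ) {u : ℝ} (hu : 0 < u) : gf ω p u = (u / sqf u) * (u^(p-1) - ω) := by
  have e1 : u^p = u^(p-1) * u := by rw [← Real.rpow_add_one hu.ne']; ring_nf
  unfold gf; rw [e1]; ring

theorem gf_neg {ω p : ℝ} (hp : 1 < p) {u1 u2 : ℝ} (h2 : 0 < u2) (h12 : u2 < u1) (h : gf ω p u1 ≤ 0) : gf ω p u2 < 0 := by
  have h1 : 0 < u1 := h2.trans h12
  rw [gf_fac ω p h1] at h
  rw [gf_fac ω p h2]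
  have := sqf_pos u1; have := sqf_pos u2
  have h := nonpos_of_mul_nonpos_right h (by positivity)
  have hX : u2^(p-1) < u1^(p-1) := Real.rpow_lt_rpow h2.le h12 (by linarith)
  exact mul_neg_of_pos_of_neg (by positivity) (by linarith)

theorem gf_bd {ω p : ℝ} (hω : 0 < ω) (hp : 1 < p) {u u0 : ℝ} (hu : 0 < u) (h : u ≤ u0) :
    |gf ω p u| ≤ (u0^(p-1) + ω) * u := by
  rw [gf_fac ω p hu, abs_mul]
  have h1 : |u / sqf u| ≤ u := by
    have := sqf_ge u
    rw [abs_of_pos (by positivity)]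
    exact div_le_self hu.le this
  have hX : u^(p-1) ≤ u0^(p-1) := Real.rpow_le_rpow hu.le h (by linarith)
  have hX0 : 0 < u^(p-1) := Real.rpow_pos_of_pos hu _
  have h2 : |u^(p-1) - ω| ≤ u0^(p-1) + ω := by rw [abs_le]; constructor <;> linarith
  calc _ ≤ u * (u0^(p-1) + ω) := by gcongr
    _ = _ := by ring

theorem Gf_bd {ω p : ℝ} (hω : 0 < ω) (hp : 1 < p) {u u0 : ℝ} (hu : 0 < u) (h : u ≤ u0) :
    |Gf ω p u| ≤ (u0^p + ω * u0) * u := by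
  unfold Gf
  have hX : u^p ≤ u0^p := Real.rpow_le_rpow hu.le h (by linarith)
  have hX0 : 0 < u^p := Real.rpow_pos_of_pos hu _
  rw [Real.rpow_add_one hu.ne']
  have h1 : u^p * u / (p+1) ≤ u0^p * u := by
    refine (div_le_self (by positivity) (by linarith)).trans ?_
    gcongr
  have h1' : 0 ≤ u^p * u / (p+1) := by
    have : 0 < p + 1 := by linarith
    positivity
  have h2 : ω * u^2/2 ≤ ω * u0 * u := by
    have : ω * (u * u) ≤ ω * (u0 * u) := by gcongr
    have : 0 ≤ ω * (u0 * u) := by have := hu.trans_le h; positivity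
    nlinarith
  have h2' : 0 ≤ ω * u^2/2 := by positivity
  have h3 : 0 ≤ ω * u0 * u := h2'.trans h2
  have h4 : 0 ≤ u0^p * u := h1'.trans h1
  rw [abs_le]; constructor <;> nlinarith

theorem qf_bd {ω p : ℝ} (hω : 0 < ω) (hp : 1 < p) {u u0 : ℝ} (hu : 0 < u) (h : u ≤ u0) :
    |qf ω p u| ≤ p * u0^(p-1) + 2 * (p-1) * u0^(p+1) + ω := by
  unfold qf
  have hs := sqf_ge u
  have hs4 : 1 ≤ sqf u ^ 4 := one_le_pow₀ hs
  rw [abs_div, abs_of_pos (show 0 < sqf u ^ 4 by positivity)]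
  refine (div_le_self (abs_nonneg _) hs4).trans ?_
  have h1 : u^(p-1) ≤ u0^(p-1) := Real.rpow_le_rpow hu.le h (by linarith)
  have h2 : u^(p+1) ≤ u0^(p+1) := Real.rpow_le_rpow hu.le h (by linarith)
  have h3 : 0 < u^(p-1) := Real.rpow_pos_of_pos hu _
  have h4 : 0 < u^(p+1) := Real.rpow_pos_of_pos hu _
  have hp' : 0 < p - 1 := by linarith
  have h5 : p * u^(p-1) ≤ p * u0^(p-1) := by gcongr
  have h6 : 2 * (p-1) * u^(p+1) ≤ 2 * (p-1) * u0^(p+1) := by gcongr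
  have h7 : 0 < p * u^(p-1) := by positivity
  have h8 : 0 < 2 * (p-1) * u^(p+1) := by positivity
  rw [abs_le]; constructor <;> linarith

theorem qf_cont (ω p : ℝ) {u : ℝ} (hu : 0 < u) : ContinuousAt (qf ω p) u := by
  unfold qf
  have h1 : ContinuousAt (fun u : ℝ => u^(p-1)) u := Real.continuousAt_rpow_const _ _ (Or.inl hu.ne')
  have h2 : ContinuousAt (fun u : ℝ => u^(p+1)) u := Real.continuousAt_rpow_const _ _ (Or.inl hu.ne')
  have h3 := sqf_smooth.continuous.continuousAt (x := u)
  exact (((h1.const_mul p).add (h2.const_mul _)).sub continuousAt_const).div (h3.pow 4) (pow_pos (sqf_pos u) 4).ne'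

theorem qf_neg {ω p : ℝ} (hω : 0 < ω) (hp : 1 < p) {U : ℝ → ℝ} (hU : Tendsto U atTop (𝓝 0)) :
    ∃ R > 0, ∀ r, R ≤ r → qf ω p (U r) < 0 := by
  have h1 : Tendsto (fun r => U r^(p-1)) atTop (𝓝 0) := by
    have := (Real.continuousAt_rpow_const 0 (p-1) (Or.inr (by linarith))).tendsto.comp hU
    rwa [Real.zero_rpow (by linarith)] at this
  have h2 : Tendsto (fun r => U r^(p+1)) atTop (𝓝 0) := by
    have := (Real.continuousAt_rpow_const 0 (p+1) (Or.inr (by linarith))).tendsto.comp hU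
    rwa [Real.zero_rpow (by linarith)] at this
  have h3 : Tendsto (fun r => p * U r^(p-1) + 2 * (p-1) * U r^(p+1) - ω) atTop (𝓝 (-ω)) := by
    have := ((h1.const_mul p).add (h2.const_mul (2*(p-1)))).sub_const ω
    simpa using this
  have h4 := h3.eventually (gt_mem_nhds (show -ω < 0 by linarith))
  obtain ⟨R, hR⟩ := eventually_atTop.1 h4
  refine ⟨max R 1, by positivity, fun r hr => ?_⟩
  have := hR r ((le_max_left _ _).trans hr)
  exact div_neg_of_neg_of_pos this (pow_pos (sqf_pos _) 4)

section
variable {N : ℕ} {ω p : ℝ} {u : EN N → ℝ}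

theorem exists_vec (hN : 1 ≤ N) {r : ℝ} (hr : 0 ≤ r) : ∃ x : EN N, ∃ l, ‖x‖ = r ∧ x l = r := by
  refine ⟨EuclideanSpace.single ⟨0, hN⟩ r, ⟨0, hN⟩, ?_, ?_⟩
  · simp [abs_of_nonneg hr]
  · simp

theorem U_eq (hN : 1 ≤ N) (hu : IsGroundState N ω p u) (x : EN N) : u x = rad u ‖x‖ := by
  obtain ⟨U, _, _, h⟩ := hu.radial
  exact rad_eq hN h x

theorem U_pos (hN : 1 ≤ N) (hu : IsGroundState N ω p u) {r : ℝ} (hr : 0 ≤ r) : 0 < rad u r := by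
  obtain ⟨x, l, hx, _⟩ := exists_vec hN hr
  rw [← hx, ← U_eq hN hu]; exact hu.pos x

theorem U_anti (hN : 1 ≤ N) (hu : IsGroundState N ω p u) : StrictAntiOn (rad u) (Set.Ici 0) := by
  obtain ⟨U, ha, _, h⟩ := hu.radial
  refine ha.congr (fun r hr => ?_)
  obtain ⟨x, l, hx, _⟩ := exists_vec hN hr
  rw [← hx, ← h, ← U_eq hN hu]

theorem U_le (hN : 1 ≤ N) (hu : IsGroundState N ω p u) {r : ℝ} (hr : 0 ≤ r) : rad u r ≤ rad u 0 :=
  (U_anti hN hu).antitoneOn Set.self_mem_Ici hr hr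

theorem V_eq (hN : 1 ≤ N) (hu : IsGroundState N ω p u) (x : EN N) : Fv (u x) = rad (fun y => Fv (u y)) ‖x‖ := by
  obtain ⟨U, _, _, h⟩ := hu.radial
  exact rad_eq (f := fun y => Fv (u y)) (f0 := fun r => Fv (U r)) hN (fun x => by rw [h]) x

theorem V_U (hN : 1 ≤ N) (hu : IsGroundState N ω p u) {r : ℝ} (hr : 0 ≤ r) : rad (fun y => Fv (u y)) r = Fv (rad u r) := by
  obtain ⟨x, l, hx, _⟩ := exists_vec hN hr
  rw [← hx, ← V_eq hN hu, ← U_eq hN hu]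

theorem V1_U (hN : 1 ≤ N) (hu : IsGroundState N ω p u) {r : ℝ} (hr : 0 < r) :
    rad1 (fun y => Fv (u y)) r = sqf (rad u r) * rad1 u r := by
  have h1 := rad_der (v_smooth hu) r
  have h2 := (Fv_der (rad u r)).comp r (rad_der hu.smooth r)
  refine h1.unique (h2.congr_of_eventuallyEq ?_)
  filter_upwards [Ioi_mem_nhds hr] with s hs
  exact V_U hN hu (le_of_lt hs)

theorem V2_eq (hN : 1 ≤ N) (hu : IsGroundState N ω p u) {r : ℝ} (hr : 0 < r) :
    rad2 (fun y => Fv (u y)) r = -(((N-1 : ℕ) : ℝ)/r) * rad1 (fun y => Fv (u y)) r - gf ω p (rad u r) := by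
  rw [rad_ode hN (v_smooth hu) hr (c := - gf ω p (rad u r))]
  · ring
  · intro x hx
    rw [lap_v hu, U_eq hN hu, hx]

theorem V1_nonpos (hN : 1 ≤ N) (hu : IsGroundState N ω p u) {r : ℝ} (hr : 0 < r) :
    rad1 (fun y => Fv (u y)) r ≤ 0 := by
  rw [V1_U hN hu hr]
  exact mul_nonpos_of_nonneg_of_nonpos (sqf_pos _).le (der_nonpos hr (rad_der hu.smooth r) (U_anti hN hu))

theorem rV1_der (hN : 1 ≤ N) (hu : IsGroundState N ω p u) (r : ℝ) (hr : 0 < r) :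
    HasDerivAt (fun r => r^(N-1) * rad1 (fun y => Fv (u y)) r) (r^(N-1) * (-gf ω p (rad u r))) r := by
  refine ((hasDerivAt_pow (N-1) r).mul (rad1_der (v_smooth hu) r)).congr_deriv ?_
  rw [V2_eq hN hu hr]
  rcases N-1 with _ | n
  · simp
  · simp only [Nat.add_sub_cancel]
    field_simp
    ring

theorem V1_neg (hN : 1 ≤ N) (hp : 1 < p) (hu : IsGroundState N ω p u) {r : ℝ} (hr : 0 < r) :
    rad1 (fun y => Fv (u y)) r < 0 := by
  refine lt_of_le_of_ne (V1_nonpos hN hu hr) (fun h0 => ?_)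
  have hmax : IsLocalMax (rad1 (fun y => Fv (u y))) r := by
    filter_upwards [Ioi_mem_nhds hr] with s hs
    rw [h0]; exact V1_nonpos hN hu hs
  have h1 := hmax.hasDerivAt_eq_zero (rad1_der (v_smooth hu) r)
  rw [V2_eq hN hu hr, h0] at h1
  have hg : gf ω p (rad u r) ≤ 0 := by linarith
  have := lt_of_der _ _ (rV1_der hN hu) hr (show r < r+1 by linarith) (fun s hs _ => by
    have hs0 : 0 < s := hr.trans hs
    have := gf_neg hp (U_pos hN hu hs0.le) (U_anti hN hu hr.le hs0.le hs) hg
    have : 0 < -gf ω p (rad u s) := by linarith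
    positivity)
  rw [h0] at this
  have h2 := V1_nonpos hN hu (show 0 < r+1 by linarith)
  have h3 : 0 < (r+1)^(N-1) := by positivity
  nlinarith

theorem g0_pos (hN : 1 ≤ N) (hp : 1 < p) (hu : IsGroundState N ω p u) : 0 < gf ω p (rad u 0) := by
  by_contra hg
  push Not at hg
  have hc := (continuous_pow (M := ℝ) (N-1)).mul (rad1_cont (v_smooth hu))
  have ht : Tendsto (fun r => r^(N-1) * rad1 (fun y => Fv (u y)) r) (𝓝[>] 0) (𝓝 0) := by
    have := (hc.tendsto 0).mono_left (nhdsWithin_le_nhds (s := Set.Ioi 0))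
    have e : (0:ℝ)^(N-1) * rad1 (fun y => Fv (u y)) 0 = 0 := by rw [rad1_zero, mul_zero]
    change Tendsto _ _ (𝓝 ((0:ℝ)^(N-1) * rad1 (fun y => Fv (u y)) 0)) at this
    rw [e] at this
    exact this
  have := pos_left _ _ (rV1_der hN hu) one_pos (fun s hs _ => by
    have := gf_neg hp (U_pos hN hu hs.le) (U_anti hN hu Set.self_mem_Ici hs.le hs) hg
    have : 0 < -gf ω p (rad u s) := by linarith
    positivity) ht
  have h2 := V1_nonpos hN hu one_pos
  simp at this
  linarith

theorem u_bd (hu : IsGroundState N ω p u) : ∃ C > 0, ∃ δ > 0, ∀ x, u x ≤ C * exp (-δ * ‖x‖) := by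
  obtain ⟨C, hC, δ, hδ, h⟩ := hu.decay 0
  refine ⟨C, hC, δ, hδ, fun x => ?_⟩
  have := h x
  rw [norm_iteratedFDeriv_zero] at this
  exact (le_abs_self _).trans this

theorem pdu_bd (hu : IsGroundState N ω p u) : ∃ C > 0, ∃ δ > 0, ∀ x l, |pd l u x| ≤ C * exp (-δ * ‖x‖) := by
  obtain ⟨C, hC, δ, hδ, h⟩ := hu.decay 1
  refine ⟨C, hC, δ, hδ, fun x l => ?_⟩
  have := h x
  rw [norm_iteratedFDeriv_one] at this
  refine le_trans ?_ this
  have h2 := (fderiv ℝ u x).le_opNorm (EuclideanSpace.single l 1)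
  simpa [pd] using h2

theorem U_RD (hN : 1 ≤ N) (hu : IsGroundState N ω p u) : RD (rad u) := by
  obtain ⟨C, hC, δ, hδ, h⟩ := u_bd hu
  refine RD_exp (C := C) hδ (fun r hr => ?_)
  have hr0 : 0 ≤ r := by linarith
  obtain ⟨x, l, hx, _⟩ := exists_vec hN hr0
  rw [abs_of_pos (U_pos hN hu hr0), ← hx, ← U_eq hN hu]
  exact h x

theorem U1_RD (hN : 1 ≤ N) (hu : IsGroundState N ω p u) : RD (rad1 u) := by
  obtain ⟨C, hC, δ, hδ, h⟩ := pdu_bd hu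
  refine RD_exp (C := C) hδ (fun r hr => ?_)
  have hr0 : 0 < r := by linarith
  obtain ⟨x, l, hx, hl⟩ := exists_vec hN hr0.le
  have hx0 : x ≠ 0 := by rw [← norm_pos_iff, hx]; exact hr0
  have := h x l
  rw [rad_pd hN hu.smooth (U_eq hN hu) hx0, hl, hx, div_self hr0.ne', mul_one] at this
  exact this

theorem bd_RD {f : ℝ → ℝ} {F : ℝ → ℝ} (C : ℝ) (hf : RD f) (h : ∀ r, 0 < r → |F r| ≤ C * |f r|) : RD F :=
  hf.bdd C 0 (fun r hr => by simpa using h r (by linarith))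

theorem radData (hN : 1 ≤ N) (hω : 0 < ω) (hp : 1 < p) (hu : IsGroundState N ω p u) :
    RadData (N-1) (fun r => Fv (rad u r)) (rad1 (fun y => Fv (u y))) (fun r => gf ω p (rad u r))
      (fun r => qf ω p (rad u r)) (fun r => Gf ω p (rad u r)) (Fv (rad u 0)) (gf ω p (rad u 0)) (Gf ω p (rad u 0)) where
  hv r hr := ((Fv_der (rad u r)).comp r (rad_der hu.smooth r)).congr_deriv (V1_U hN hu hr).symm
  hv1 r hr := (rad1_der (v_smooth hu) r).congr_deriv (V2_eq hN hu hr)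
  hg r hr := ((gf_der ω p (U_pos hN hu hr.le)).comp r (rad_der hu.smooth r)).congr_deriv (by rw [V1_U hN hu hr]; ring)
  hG r hr := ((Gf_der ω hp (U_pos hN hu hr.le)).comp r (rad_der hu.smooth r)).congr_deriv (by rw [V1_U hN hu hr]; ring)
  vpos r hr := Fv_pos (U_pos hN hu hr.le)
  v1neg r hr := V1_neg hN hp hu hr
  sign α β hα hαβ hβ r1 r2 h1 h12 h := sign_prop hω hp hα hαβ hβ (U_pos hN hu (h1.trans h12).le)
    (U_anti hN hu h1.le (h1.trans h12).le h12) h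
  sign0 r hr h := sign0_prop hp (U_pos hN hu hr.le) h
  dv := by
    refine bd_RD (sqf (rad u 0)) (U_RD hN hu) (fun r hr => ?_)
    have h0 := U_pos hN hu hr.le
    rw [abs_of_pos (Fv_pos h0), abs_of_pos h0]
    have := sqf_mono h0.le (U_le hN hu hr.le)
    have := Fv_le h0
    nlinarith
  dv1 := by
    refine bd_RD (sqf (rad u 0)) (U1_RD hN hu) (fun r hr => ?_)
    have h0 := U_pos hN hu hr.le
    rw [V1_U hN hu hr, abs_mul, abs_of_pos (sqf_pos _)]
    have := sqf_mono h0.le (U_le hN hu hr.le)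
    gcongr
  dg := by
    refine bd_RD ((rad u 0)^(p-1) + ω) (U_RD hN hu) (fun r hr => ?_)
    rw [abs_of_pos (U_pos hN hu hr.le)]
    exact gf_bd hω hp (U_pos hN hu hr.le) (U_le hN hu hr.le)
  dG := by
    refine bd_RD ((rad u 0)^p + ω * rad u 0) (U_RD hN hu) (fun r hr => ?_)
    rw [abs_of_pos (U_pos hN hu hr.le)]
    exact Gf_bd hω hp (U_pos hN hu hr.le) (U_le hN hu hr.le)
  zv := (((Fv_der _).continuousAt.comp (rad_cont hu.smooth).continuousAt).tendsto).mono_left nhdsWithin_le_nhds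
  zv1 := by
    have := ((rad1_cont (v_smooth hu)).tendsto 0).mono_left (nhdsWithin_le_nhds (s := Set.Ioi 0))
    rwa [rad1_zero] at this
  zg := (((gf_der ω p (U_pos hN hu le_rfl)).continuousAt.comp (rad_cont hu.smooth).continuousAt).tendsto).mono_left nhdsWithin_le_nhds
  zG := (((Gf_der ω hp (U_pos hN hu le_rfl)).continuousAt.comp (rad_cont hu.smooth).continuousAt).tendsto).mono_left nhdsWithin_le_nhds
  g0pos := g0_pos hN hp hu
  qneg := qf_neg hω hp (U_RD hN hu).tendsto
  qbd := ⟨_, fun r hr => qf_bd hω hp (U_pos hN hu (by linarith)) (U_le hN hu (by linarith))⟩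
  qc r hr := ((qf_cont ω p (U_pos hN hu (le_of_lt hr))).comp (rad_cont hu.smooth).continuousAt).continuousWithinAt
end
end PartT4

section PartT5
section
variable {N : ℕ} {ω p : ℝ} {u : EN N → ℝ}

theorem exp_int (hN : 1 ≤ N) {b : ℝ} (hb : 0 < b) : Integrable (fun x : EN N => exp (-b * ‖x‖)) := by
  have : Nontrivial (EN N) := by
    have : Nonempty (Fin N) := ⟨⟨0, hN⟩⟩
    infer_instance
  refine (integrable_fun_norm_addHaar (volume : Measure (EN N)) (f := fun r => exp (-b * r))).2 ?_
  have h := integrableOn_rpow_mul_exp_neg_mul_rpow (p := 1) (s := ((N-1 : ℕ) : ℝ)) (b := b)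
    (by have : (0:ℝ) ≤ ((N-1 : ℕ) : ℝ) := Nat.cast_nonneg _
        linarith) one_pos hb
  refine h.congr_fun (fun r hr => ?_) measurableSet_Ioi
  simp

theorem sq_int (hN : 1 ≤ N) {f : EN N → ℝ} (hf : Continuous f) {C δ : ℝ} (hδ : 0 < δ)
    (h : ∀ x, |f x| ≤ C * exp (-δ * ‖x‖)) : Integrable (fun x => f x ^ 2) := by
  refine ((exp_int hN (show 0 < 2 * δ by positivity)).const_mul (C^2)).mono' (by fun_prop) (Eventually.of_forall fun x => ?_)
  rw [Real.norm_of_nonneg (by positivity), ← sq_abs]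
  calc |f x|^2 ≤ (C * exp (-δ * ‖x‖))^2 := by gcongr; exact h x
    _ = _ := by rw [mul_pow, ← Real.exp_nat_mul]; congr 2; push_cast; ring

theorem u_le (hN : 1 ≤ N) (hu : IsGroundState N ω p u) (x : EN N) : u x ≤ rad u 0 := by
  rw [U_eq hN hu]; exact U_le hN hu (norm_nonneg x)

def Qm (ω p : ℝ) (U U1 : ℝ → ℝ) (r : ℝ) : ℝ :=
  2 * U r * ((ω * U r - U r ^ (p-1) * U r - 2 * U r * U1 r ^ 2) / (1 + 2 * U r ^ 2)) + 2 * U1 r ^ 2 + U r ^ (p-1) - ω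

theorem Qm_eq (hN : 1 ≤ N) (hu : IsGroundState N ω p u) {x : EN N} (hx : x ≠ 0) :
    Qm ω p (rad u) (rad1 u) ‖x‖ = lap (fun y => u y ^ 2) x + u x ^ (p-1) - ω := by
  unfold Qm
  rw [← U_eq hN hu, ← rad_gradsq hN hu.smooth (U_eq hN hu) hx, lap_usq hu.smooth]
  have h := u_eq hu x
  have : (ω * u x - u x ^ (p-1) * u x - 2 * u x * gradsq u x) / (1 + 2 * u x ^ 2) = lap u x := by
    rw [div_eq_iff (by positivity)]; linarith
  rw [this]

theorem minus_part (hN : 1 ≤ N) (hu : IsGroundState N ω p u) {ζ : EN N → ℝ} (hζ : ContDiff ℝ (⊤ : ℕ∞) ζ)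
    (iζ : Integrable (fun x => ζ x ^ 2))
    (h : ∀ x, -lap ζ x + ω * ζ x - lap (fun y => u y ^ 2) x * ζ x - u x ^ (p-1) * ζ x = 0) :
    ∃ c : ℝ, ∀ x, ζ x = c * u x := by
  have iu : Integrable (fun x => u x ^ 2) := by
    obtain ⟨C, hC, δ, hδ, h⟩ := u_bd hu
    exact sq_int hN hu.smooth.continuous hδ (fun x => by rw [abs_of_pos (hu.pos x)]; exact h x)
  have eu : ∀ x : EN N, x ≠ 0 → lap u x = - (Qm ω p (rad u) (rad1 u) ‖x‖ * u x) := by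
    intro x hx
    rw [Qm_eq hN hu hx]
    have h := hu.solves x
    have e1 : u x ^ p = u x ^ (p-1) * u x := by rw [← Real.rpow_add_one (hu.pos x).ne']; ring_nf
    rw [e1] at h
    linarith
  refine linMinus hN (Q := Qm ω p (rad u) (rad1 u)) (w := rad u) (w1 := rad1 u) (w0 := rad u 0) hζ hu.smooth iζ iu
    (fun x hx => ?_) eu (fun x _ => U_eq hN hu x) (fun r _ => rad_der hu.smooth r) (fun r hr => ?_)
    (fun r hr => (U_pos hN hu hr.le).ne') ?_ (U_pos hN hu le_rfl).ne' ?_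
  · rw [Qm_eq hN hu hx]
    have := h x
    linarith
  · refine (rad1_der hu.smooth r).congr_deriv ?_
    rw [rad_ode hN hu.smooth hr (c := -(Qm ω p (rad u) (rad1 u) r * rad u r))]
    · ring
    · intro x hx
      rw [eu x (by rw [← norm_pos_iff, hx]; exact hr), U_eq hN hu, hx]
  · exact ((rad_cont hu.smooth).tendsto 0).mono_left nhdsWithin_le_nhds
  · have := ((rad1_cont hu.smooth).tendsto 0).mono_left (nhdsWithin_le_nhds (s := Set.Ioi 0))
    rwa [rad1_zero] at this

theorem plus_zq (hN : 1 ≤ N) (hp : 1 < p) (hu : IsGroundState N ω p u) :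
    Tendsto (fun r => r * rad2 (fun y => Fv (u y)) r / rad1 (fun y => Fv (u y)) r) (𝓝[>] 0) (𝓝 1) := by
  set v : EN N → ℝ := fun y => Fv (u y) with hv
  have hvs : ContDiff ℝ (⊤ : ℕ∞) v := v_smooth hu
  have h1 : Tendsto (fun r => rad1 v r / r) (𝓝[>] 0) (𝓝 (rad2 v 0)) := by
    have := hasDerivAt_iff_tendsto_slope.1 (rad1_der hvs 0)
    have := this.mono_left (nhdsWithin_mono 0 (s := Set.Ioi 0) (fun x (hx : 0 < x) => by simpa using hx.ne'))
    refine this.congr (fun r => ?_)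
    rw [slope_def_field, rad1_zero]; simp
  have h2 : Tendsto (rad2 v) (𝓝[>] 0) (𝓝 (rad2 v 0)) := ((rad2_cont hvs).tendsto 0).mono_left nhdsWithin_le_nhds
  have hg : Tendsto (fun r => gf ω p (rad u r)) (𝓝[>] 0) (𝓝 (gf ω p (rad u 0))) :=
    (((gf_der ω p (U_pos hN hu le_rfl)).continuousAt.comp (rad_cont hu.smooth).continuousAt).tendsto).mono_left nhdsWithin_le_nhds
  have h3 : Tendsto (rad2 v) (𝓝[>] 0) (𝓝 (-((N-1 : ℕ) : ℝ) * rad2 v 0 - gf ω p (rad u 0))) := by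
    refine ((h1.const_mul (-((N-1 : ℕ) : ℝ))).sub hg).congr' ?_
    filter_upwards [self_mem_nhdsWithin] with r hr
    rw [hv, V2_eq hN hu hr]; ring
  have h4 := tendsto_nhds_unique h2 h3
  have hk : rad2 v 0 ≠ 0 := by
    intro h0
    rw [h0] at h4
    have := g0_pos hN hp hu
    linarith
  have h5 := h2.div h1 hk
  rw [div_self hk] at h5
  refine h5.congr' ?_
  filter_upwards [self_mem_nhdsWithin] with r hr
  have hr : 0 < r := hr
  simp only [Pi.div_apply]
  field_simp

theorem V2_der (hN : 1 ≤ N) (hu : IsGroundState N ω p u) (r : ℝ) (hr : 0 < r) :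
    HasDerivAt (rad2 (fun y => Fv (u y))) (-(((N-1 : ℕ) : ℝ)/r)*rad2 (fun y => Fv (u y)) r
      + ((N-1 : ℕ) : ℝ)/r^2 * rad1 (fun y => Fv (u y)) r - qf ω p (rad u r) * rad1 (fun y => Fv (u y)) r) r := by
  have h1 : HasDerivAt (fun r : ℝ => -(((N-1 : ℕ) : ℝ)/r)) (((N-1 : ℕ) : ℝ)/r^2) r := by
    refine (((hasDerivAt_inv hr.ne').const_mul (((N-1 : ℕ) : ℝ))).neg).congr_deriv ?_
    field_simp
  have h2 := (gf_der ω p (U_pos hN hu hr.le)).comp r (rad_der hu.smooth r)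
  have h3 := (h1.mul (rad1_der (v_smooth hu) r)).sub h2
  refine (h3.congr_of_eventuallyEq ?_).congr_deriv ?_
  · filter_upwards [Ioi_mem_nhds hr] with s hs
    exact V2_eq hN hu hs
  · rw [V1_U hN hu hr]; ring

theorem plus_rad (hN : 1 ≤ N) (hω : 0 < ω) (hp : 1 < p) (hu : IsGroundState N ω p u) {φ : EN N → ℝ}
    (hφ : ContDiff ℝ (⊤ : ℕ∞) φ) (iφ : Integrable (fun x => φ x ^ 2))
    (h : ∀ x, x ≠ 0 → lap φ x = -(qf ω p (rad u ‖x‖) * φ x)) (r : ℝ) (hr : 0 < r) : mom φ 0 0 r = 0 := by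
  have s : MSol (N-1) (fun r => qf ω p (rad u r)) (mom φ 0 0) (mom1 φ 0 0) (mom φ 0 0 0) 0 :=
    { hm := fun r _ => mom_deriv 0 0 hφ r
      hm1 := fun r hr => by
        refine (mom_ode hN (Q := fun r => qf ω p (rad u r)) hφ h 0 0 (by simp) r hr).congr_deriv ?_
        simp
      hint := mom_int hN hφ iφ 0 0
      zm := ((mom_cont hφ 0 0).tendsto 0).mono_left nhdsWithin_le_nhds
      zm1 := by
        have := ((mom1_cont hφ 0 0).tendsto 0).mono_left (nhdsWithin_le_nhds (s := Set.Ioi 0))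
        rwa [mom1_zero_even 0 0 (by simp)] at this }
  have d := radData hN hω hp hu
  rcases Nat.eq_zero_or_pos (N-1) with h0 | h0
  · rw [h0] at s d
    exact s.radial_zero_one d r hr
  · exact s.radial_zero d h0 r hr

theorem plus_part (hN : 1 ≤ N) (hω : 0 < ω) (hp : 1 < p) (hu : IsGroundState N ω p u) {η : EN N → ℝ} (hη : ContDiff ℝ (⊤ : ℕ∞) η)
    (iη : Integrable (fun x => η x ^ 2))
    (h : ∀ x, -lap η x - 2 * u x * lap (fun y => u y * η y) x + ω * η x - lap (fun y => u y ^ 2) x * η x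
      - p * u x ^ (p-1) * η x = 0) :
    ∃ c : Fin N → ℝ, ∀ x, η x = ∑ l, c l * pd l u x := by
  have hs : ContDiff ℝ (⊤ : ℕ∞) (fun y => sqf (u y)) := sqf_smooth.comp hu.smooth
  have hφ : ContDiff ℝ (⊤ : ℕ∞) (fun y => sqf (u y) * η y) := hs.mul hη
  have epd : ∀ l x, pd l (fun y => Fv (u y)) x = sqf (u x) * pd l u x := fun l x =>
    pd_comp l (sm_diff hu.smooth x) (Fv_der _)
  have iφ : Integrable (fun x => (sqf (u x) * η x) ^ 2) := by
    refine (iη.const_mul (sqf (rad u 0)^2)).mono' (hφ.continuous.pow 2).aestronglyMeasurable (Eventually.of_forall fun x => ?_)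
    rw [Real.norm_of_nonneg (by positivity), mul_pow]
    have := sqf_mono (hu.pos x).le (u_le hN hu x)
    have := sqf_pos (u x)
    gcongr
  have iW : ∀ l, Integrable (fun x => pd l (fun y => Fv (u y)) x ^ 2) := by
    intro l
    obtain ⟨C, hC, δ, hδ, hb⟩ := pdu_bd hu
    refine sq_int hN (pd_smooth (v_smooth hu) l).continuous (C := sqf (rad u 0) * C) hδ (fun x => ?_)
    rw [epd, abs_mul, abs_of_pos (sqf_pos _), mul_assoc]
    have := sqf_mono (hu.pos x).le (u_le hN hu x)
    have := sqf_pos (u x)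
    have := hb x l
    have := sqf_pos (rad u 0)
    gcongr
  have eφ : ∀ x : EN N, x ≠ 0 → lap (fun y => sqf (u y) * η y) x = -(qf ω p (rad u ‖x‖) * (sqf (u x) * η x)) := by
    intro x _
    rw [← U_eq hN hu]; exact lap_phi hu hη x (h x)
  obtain ⟨c, hc⟩ := linPlus hN (W := fun l => pd l (fun y => Fv (u y))) (Q := fun r => qf ω p (rad u r))
    (w := rad1 (fun y => Fv (u y))) (w1 := rad2 (fun y => Fv (u y))) hφ (fun l => pd_smooth (v_smooth hu) l) iφ iW eφ
    (fun l x _ => by rw [← U_eq hN hu]; exact lap_pdv hu l x)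
    (fun l x hx => rad_pd hN (v_smooth hu) (V_eq hN hu) hx l)
    (fun r _ => rad1_der (v_smooth hu) r) (V2_der hN hu) (fun r hr => (V1_neg hN hp hu hr).ne)
    (plus_zq hN hp hu) (plus_rad hN hω hp hu hφ iφ eφ)
  refine ⟨c, fun x => ?_⟩
  have h1 := hc x
  simp only [epd] at h1
  have h2 : ∑ l, c l * (sqf (u x) * pd l u x) = sqf (u x) * ∑ l, c l * pd l u x := by
    rw [Finset.mul_sum]; exact Finset.sum_congr rfl fun l _ => by ring
  rw [h2] at h1
  exact mul_left_cancel₀ (sqf_pos (u x)).ne' h1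
end

end PartT5

/-- Nondegeneracy of ground states: every finite-energy smooth solution of the
linearized equation `E''_ω(u)ξ = 0` is a combination of `i·u` and the translation
modes `∂_{x_l} u`. -/
theorem stmt0 (N : ℕ) (hN : 1 ≤ N) (ω p : ℝ) (hω : 0 < ω) (hp : 1 < p)
    (hpmax : 3 ≤ N → p < (3 * (N : ℝ) + 2) / ((N : ℝ) - 2))
    (u : EuclideanSpace ℝ (Fin N) → ℝ) (hu : IsGroundState N ω p u)
    (ξ : EuclideanSpace ℝ (Fin N) → ℂ) (hξ : ContDiff ℝ (⊤ : ℕ∞) ξ)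
    (hint : Integrable (fun x => ‖ξ x‖ ^ 2 + ∑ i : Fin N, ‖pd i ξ x‖ ^ 2))
    (heq : ∀ x, -lap ξ x
        - 2 * (u x : ℂ) * ((lap (fun y => u y * (ξ y).re) x : ℝ) : ℂ)
        + (ω : ℂ) * ξ x
        - ((lap (fun y => (u y) ^ 2) x : ℝ) : ℂ) * ξ x
        - (((p - 1) * u x ^ (p - 1) * (ξ x).re : ℝ) : ℂ)
        - ((u x ^ (p - 1) : ℝ) : ℂ) * ξ x = 0) :
    ∃ (a : ℝ) (c : Fin N → ℝ), ∀ x,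
      ξ x = Complex.I * (a : ℂ) * (u x : ℂ) + ∑ l : Fin N, (c l : ℂ) * ((pd l u x : ℝ) : ℂ) := by
  have hre : ContDiff ℝ (⊤ : ℕ∞) (fun y => (ξ y).re) := Complex.reCLM.contDiff.comp hξ
  have him : ContDiff ℝ (⊤ : ℕ∞) (fun y => (ξ y).im) := Complex.imCLM.contDiff.comp hξ
  have lre : ∀ x, lap (fun y => (ξ y).re) x = (lap ξ x).re := lap_clm hξ Complex.reCLM
  have lim : ∀ x, lap (fun y => (ξ y).im) x = (lap ξ x).im := lap_clm hξ Complex.imCLM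
  have ib : ∀ f : EN N → ℝ, Continuous f → (∀ x, |f x| ≤ ‖ξ x‖) → Integrable (fun x => f x ^ 2) := by
    intro f hf h
    refine hint.mono' (by fun_prop) (Eventually.of_forall fun x => ?_)
    rw [Real.norm_of_nonneg (by positivity), ← sq_abs]
    have h1 : |f x|^2 ≤ ‖ξ x‖^2 := by gcongr; exact h x
    have h2 : 0 ≤ ∑ i : Fin N, ‖pd i ξ x‖ ^ 2 := Finset.sum_nonneg fun i _ => by positivity
    linarith
  obtain ⟨a, ha⟩ := minus_part hN hu him (ib _ him.continuous fun x => Complex.abs_im_le_norm _) (fun x => by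
    have h := congrArg Complex.im (heq x)
    simp at h
    rw [lim]
    linarith)
  obtain ⟨c, hc⟩ := plus_part hN hω hp hu hre (ib _ hre.continuous fun x => Complex.abs_re_le_norm _) (fun x => by
    have h := congrArg Complex.re (heq x)
    simp at h
    rw [lre]
    linarith)
  refine ⟨a, c, fun x => ?_⟩
  apply Complex.ext
  · rw [hc x]; simp
  · rw [ha x]; simp

end
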